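/- arXiv:2002.11087 — 2 statements merged into one kernel-verified Lean document; each statement's English description precedes it below -/
import Mathlib

section
/- Let q be of Cartan type B_2: q_11 = q^2, q_22 = q, q_12 q_21 = q^{-2}, with N = ord q > 2 and finite. Then in any pre-Nichols algebra of q with finite GK-dimension, the quantum Serre relations x_{112} = (ad_c x_1)^2 x_2 = 0 and x_{2221} = (ad_c x_2)^3 x_1 = 0 hold; i.e. the distinguished pre-Nichols algebra of type B_2 is eminent. -/
open scoped TensorProduct ENNReal

noncomputable section

namespace Stmt17

/-- The Gelfand–Kirillov dimension of a `k`-algebra `A`. -/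
def GKdim (k A : Type*) [Field k] [Ring A] [Algebra k A] : ℝ≥0∞ :=
  ⨆ S : Finset A,
    Filter.limsup
      (fun n : ℕ => ENNReal.ofReal (Real.logb n
        (Module.finrank k ((Submodule.span k (insert (1 : A) (S : Set A))) ^ n : Submodule k A))))
      Filter.atTop

/-- The `ℤ²`-homogeneous component of degree `d` of the free (tensor) algebra. -/
def piece (k : Type*) [Field k] (d : Fin 2 → ℤ) : Submodule k (FreeAlgebra k (Fin 2)) :=
  Submodule.span k {y | ∃ l : List (Fin 2),
    (∀ i, (l.count i : ℤ) = d i) ∧ y = (l.map (FreeAlgebra.ι k)).prod}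

/-- The bicharacter on `ℤ²` extending a braiding matrix `Q`. -/
def qb {k : Type*} [Field k] (Q : Fin 2 → Fin 2 → kˣ) (α β : Fin 2 → ℤ) : kˣ :=
  ∏ a, ∏ b, Q a b ^ (α a * β b)

/-- Degree of the generator `x_a`. -/
def ee (a : Fin 2) : Fin 2 → ℤ := Pi.single a 1

/-- Braided commutator of two homogeneous elements carried with their degrees. -/
def brk {k : Type*} [Field k] (Q : Fin 2 → Fin 2 → kˣ)
    (p r : FreeAlgebra k (Fin 2) × (Fin 2 → ℤ)) :
    FreeAlgebra k (Fin 2) × (Fin 2 → ℤ) :=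
  (p.1 * r.1 - (qb Q p.2 r.2 : k) • (r.1 * p.1), p.2 + r.2)

/-- The generator `x_a` together with its degree. -/
def gen (k : Type*) [Field k] (a : Fin 2) : FreeAlgebra k (Fin 2) × (Fin 2 → ℤ) :=
  (FreeAlgebra.ι k a, ee a)

end Stmt17

open Stmt17

/-!
The dual of a pre-Nichols algebra `B` is a space of functions on words which is closed under the
quantum shuffle product. If a quantum Serre relation fails in `B`, this space contains, besides the
letters, the indicator `δ D` of a word `D = 01` or `D = 011` and, for all but the degenerate orders
of `q`, also `δ DD`. Iterated braided commutators of these with `δ 1` lead, for infinitely many `n`,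
to functions which on the words beginning with a power of `D` followed by `1` are concentrated on
those beginning with `Dⁿ 1`; here the coefficient coming from `D` and the one coming from `DD` never
vanish simultaneously. The products of `m` of these functions give `2 ^ m` independent functions on
words of length `O(m²)`, so `B` has infinite Gelfand–Kirillov dimension. When `q ^ 4 = 1` (for
`x_{112}`) or `q ^ 3 = 1` (for `x_{2221}`), two homogeneous elements of higher degree behave like
primitive generators of affine Cartan type `A₂⁽²⁾`, and the same argument with a single `D` applies
to them.
-/

namespace QShuffle

section QInt

variable {R : Type*} [CommRing R] (P : R)

/-- The quantum integer `[n] = 1 + P + ⋯ + P ^ (n - 1)`. -/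
def qInt (n : ℕ) : R := ∑ i ∈ Finset.range n, P ^ i

/-- The quantum triangular number `[1] + P [2] + ⋯ + P ^ (n - 1) [n]`, which is the quantum
binomial coefficient of `n + 1` over `2`. -/
def qTri (n : ℕ) : R := ∑ i ∈ Finset.range n, P ^ i * qInt P (i + 1)

@[simp] lemma qInt_zero : qInt P 0 = 0 := rfl

@[simp] lemma qInt_one : qInt P 1 = 1 := by simp [qInt]

lemma qInt_succ (n : ℕ) : qInt P (n + 1) = P * qInt P n + 1 := geom_sum_succ

lemma qInt_succ' (n : ℕ) : qInt P (n + 1) = P ^ n + qInt P n := geom_sum_succ'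

lemma one_sub_mul_qInt (n : ℕ) : (1 - P) * qInt P n = 1 - P ^ n := mul_neg_geom_sum P n

@[simp] lemma qTri_zero : qTri P 0 = 0 := rfl

lemma qTri_succ (n : ℕ) : qTri P (n + 1) = qTri P n + P ^ n * qInt P (n + 1) :=
  Finset.sum_range_succ _ n

lemma one_add_mul_qTri (n : ℕ) : (1 + P) * qTri P n = qInt P n * qInt P (n + 1) := by
  induction n with
  | zero => simp
  | succ n ih =>
    rw [qTri_succ, mul_add, ih, qInt_succ' P (n + 1), qInt_succ' P n]
    ring

lemma qTri_succ' (n : ℕ) : qTri P (n + 1) = qInt P (n + 1) + P ^ 2 * qTri P n := by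
  rw [qTri_succ]
  linear_combination (1 - P) * one_add_mul_qTri P n + qInt P (n + 1) * one_sub_mul_qInt P n

end QInt

section Shuffle

variable {α R : Type*} [CommRing R] (Q : α → α → R)

/-- The scalar picked up by the word `u` when it is moved across the word `x`, for the braiding
matrix `Q`: the bicharacter extending `Q`, evaluated at the degrees of `u` and `x`. -/
def bichar (u x : List α) : R := (u.map fun c => (x.map (Q c)).prod).prod

@[simp] lemma bichar_nil_left : bichar Q [] = 1 := rfl

@[simp] lemma bichar_nil_right (u : List α) : bichar Q u [] = 1 := by simp [bichar]

lemma bichar_singleton (c d : α) : bichar Q [c] [d] = Q c d := by simp [bichar]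

lemma bichar_append_left (u v : List α) : bichar Q (u ++ v) = bichar Q u * bichar Q v :=
  funext fun x => by simp [bichar]

lemma bichar_append_right (u x y : List α) :
    bichar Q u (x ++ y) = bichar Q u x * bichar Q u y := by
  simp [bichar, List.prod_map_mul]

lemma bichar_cons_left (c : α) (u : List α) : bichar Q (c :: u) = bichar Q [c] * bichar Q u :=
  bichar_append_left Q [c] u

lemma bichar_cons_right (u : List α) (c : α) (x : List α) :
    bichar Q u (c :: x) = bichar Q u [c] * bichar Q u x :=
  bichar_append_right Q u [c] x

lemma bichar_perm_left {u v : List α} (h : u.Perm v) : bichar Q u = bichar Q v :=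
  funext fun _ => (h.map _).prod_eq

lemma bichar_perm_right (u : List α) {x y : List α} (h : x.Perm y) :
    bichar Q u x = bichar Q u y := by
  simp only [bichar, (h.map _).prod_eq]

/-- The left derivation `f ↦ f(u · )` of functions on words, dual to left multiplication
by the word `u`. -/
def residual (u : List α) : (List α → R) →ₗ[R] List α → R := LinearMap.funLeft R R (u ++ ·)

@[simp] lemma residual_apply (u : List α) (f : List α → R) (x : List α) :
    residual u f x = f (u ++ x) := rfl

@[simp] lemma residual_nil (f : List α → R) : residual [] f = f := rfl

lemma residual_append (u v : List α) (f : List α → R) :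
    residual (u ++ v) f = residual v (residual u f) :=
  funext fun x => congrArg f (List.append_assoc u v x)

lemma residual_cons (c : α) (u : List α) (f : List α → R) :
    residual (c :: u) f = residual u (residual [c] f) := rfl

lemma residual_bichar_mul (u v : List α) (f : List α → R) :
    residual u (bichar Q v * f) = bichar Q v u • (bichar Q v * residual u f) := by
  ext x
  simp [bichar_append_right, mul_assoc]

/-- The quantum shuffle product of functions on words with respect to the braiding matrix `Q`,
evaluated at a word: it is the rule by which `x ↦ f(c x)` becomes a skew derivation. -/
def shuffleAt : List α → (List α → R) →ₗ[R] (List α → R) →ₗ[R] R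
  | [] => (LinearMap.mul R R).compl₁₂ (LinearMap.proj []) (LinearMap.proj [])
  | c :: w => (shuffleAt w).comp (residual [c]) +
      (shuffleAt w).compl₁₂ (LinearMap.mulLeft R (bichar Q [c])) (residual [c])

/-- The quantum shuffle product of functions on words, for the braiding matrix `Q`. -/
def shuffle : (List α → R) →ₗ[R] (List α → R) →ₗ[R] List α → R :=
  LinearMap.mk₂ R (fun f g w => shuffleAt Q w f g)
    (fun _ _ _ => by ext; simp) (fun _ _ _ => by ext; simp)
    (fun _ _ _ => by ext; simp) (fun _ _ _ => by ext; simp)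

variable {Q}

@[simp] lemma shuffle_nil (f g : List α → R) : shuffle Q f g [] = f [] * g [] := rfl

lemma residual_shuffle (c : α) (f g : List α → R) :
    residual [c] (shuffle Q f g) =
      shuffle Q (residual [c] f) g + shuffle Q (bichar Q [c] * f) (residual [c] g) := rfl

lemma shuffle_cons (f g : List α → R) (c : α) (w : List α) :
    shuffle Q f g (c :: w) = shuffle Q (residual [c] f) g w +
      shuffle Q (bichar Q [c] * f) (residual [c] g) w := rfl

lemma residual_shuffle_of_residual_right_eq_zero {f g : List α → R} {u : List α}
    (hg : ∀ c ∈ u, residual [c] g = 0) :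
    residual u (shuffle Q f g) = shuffle Q (residual u f) g := by
  induction u generalizing f with
  | nil => rfl
  | cons c u ih =>
    rw [List.forall_mem_cons] at hg
    rw [residual_cons, residual_shuffle, hg.1, map_zero, add_zero, ih hg.2, ← residual_cons]

lemma residual_shuffle_of_residual_left_eq_zero {f g : List α → R} {u : List α}
    (hf : ∀ c ∈ u, residual [c] f = 0) :
    residual u (shuffle Q f g) = shuffle Q (bichar Q u * f) (residual u g) := by
  induction u generalizing f g with
  | nil => simp
  | cons c u ih =>
    rw [List.forall_mem_cons] at hf
    have hf' : ∀ d ∈ u, residual [d] (bichar Q [c] * f) = 0 := fun d hd => by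
      rw [residual_bichar_mul, hf.2 d hd, mul_zero, smul_zero]
    rw [residual_cons, residual_shuffle, hf.1, map_zero, LinearMap.zero_apply, zero_add, ih hf',
      ← residual_cons, ← mul_assoc, bichar_cons_left Q c u, mul_comm (bichar Q u)]

end Shuffle

section Delta

variable {α R : Type*} [DecidableEq α] [CommRing R]

/-- Left multiplication by the word `u` in the dual basis: `prepend u g` takes the value `g x`
at `u x` and vanishes at words that do not start with `u`. -/
def prepend (u : List α) : (List α → R) →ₗ[R] List α → R where
  toFun g x := if u <+: x then g (x.drop u.length) else 0
  map_add' _ _ := by ext; simp only [Pi.add_apply]; split_ifs <;> simp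
  map_smul' _ _ := by ext; simp

/-- The indicator function of the word `u`, an element of the basis dual to the words. -/
abbrev delta (u : List α) : List α → R := Pi.single u 1

@[simp] lemma prepend_nil (g : List α → R) : prepend [] g = g := by
  ext; simp [prepend]

@[simp] lemma prepend_cons_apply_nil (c : α) (u : List α) (g : List α → R) :
    prepend (c :: u) g [] = 0 := by simp [prepend]

lemma prepend_cons_apply_cons (c d : α) (u x : List α) (g : List α → R) :
    prepend (c :: u) g (d :: x) = if c = d then prepend u g x else 0 := by
  simp [prepend, List.cons_prefix_cons, ite_and]

@[simp] lemma prepend_apply_append (u x : List α) (g : List α → R) :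
    prepend u g (u ++ x) = g x := by simp [prepend]

@[simp] lemma residual_prepend (u : List α) (g : List α → R) : residual u (prepend u g) = g :=
  funext fun x => prepend_apply_append u x g

lemma residual_singleton_prepend_cons (c d : α) (u : List α) (g : List α → R) :
    residual [d] (prepend (c :: u) g) = if c = d then prepend u g else 0 := by
  ext x
  simp only [residual_apply, List.singleton_append, prepend_cons_apply_cons]
  split_ifs <;> rfl

lemma prepend_append (u v : List α) (g : List α → R) :
    prepend (u ++ v) g = prepend u (prepend v g) := by
  induction u with
  | nil => simp
  | cons c u ih =>
    funext x
    cases x with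
    | nil => simp
    | cons d x => rw [List.cons_append, prepend_cons_apply_cons, prepend_cons_apply_cons, ih]

lemma prepend_delta (u v : List α) : prepend u (delta v : List α → R) = delta (u ++ v) := by
  ext x
  simp only [prepend, LinearMap.coe_mk, AddHom.coe_mk, Pi.single_apply]
  rcases em (u <+: x) with ⟨y, rfl⟩ | h
  · simp
  · rw [if_neg h, if_neg]
    rintro rfl
    exact h (u.prefix_append v)

lemma bichar_mul_delta (Q : α → α → R) (u v : List α) :
    bichar Q u * delta v = bichar Q u v • delta v := by
  ext x
  rcases eq_or_ne x v with rfl | h <;> simp [*]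

@[simp] lemma residual_delta_nil (c : α) (u : List α) :
    residual (c :: u) (delta [] : List α → R) = 0 := by
  ext x; simp

lemma residual_delta_append (u v : List α) :
    residual u (delta (u ++ v) : List α → R) = delta v := by
  rw [← prepend_delta, residual_prepend]

variable {Q : α → α → R}

@[simp] lemma shuffle_delta_nil_left (g : List α → R) : shuffle Q (delta []) g = g := by
  funext w
  induction w generalizing g with
  | nil => simp
  | cons c w ih =>
    simp [shuffle_cons, bichar_mul_delta, ih]

@[simp] lemma shuffle_delta_nil_right (f : List α → R) : shuffle Q f (delta []) = f := by
  funext w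
  induction w generalizing f with
  | nil => simp
  | cons c w ih => simp [shuffle_cons, ih]

lemma residual_replicate_shuffle_prepend_right (c : α) (h : ℕ) {f : List α → R} {a : R}
    (hf : residual [c] f = a • delta []) (g : List α → R) :
    residual (List.replicate h c) (shuffle Q f (prepend (List.replicate h c) g)) =
      shuffle Q (bichar Q (List.replicate h c) * f) g +
        (a * qInt (Q c c) h) • prepend [c] g := by
  induction h generalizing f a with
  | zero => simp
  | succ h ih =>
    have hf' : residual [c] (bichar Q [c] * f) = (a * Q c c) • delta [] := by
      rw [residual_bichar_mul, hf, mul_smul_comm, bichar_mul_delta, bichar_nil_right, one_smul,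
        smul_smul, bichar_singleton, mul_comm]
    have hfirst : residual (List.replicate h c)
        (shuffle Q (residual [c] f) (prepend (List.replicate (h + 1) c) g)) =
          a • prepend [c] g := by
      rw [hf, map_smul, LinearMap.smul_apply, shuffle_delta_nil_left, map_smul,
        List.replicate_succ', prepend_append, residual_prepend]
    rw [List.replicate_succ, residual_cons, residual_shuffle, map_add, ← List.replicate_succ,
      hfirst, List.replicate_succ, residual_singleton_prepend_cons, if_pos rfl, ih hf',
      ← mul_assoc, mul_comm (bichar Q (List.replicate h c)), ← bichar_cons_left, qInt_succ]
    module

lemma residual_replicate_shuffle_prepend_left (c : α) (h : ℕ) {f : List α → R} {a : R}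
    (hf : residual [c] f = a • delta []) (g : List α → R) :
    residual (List.replicate h c) (shuffle Q (prepend (List.replicate h c) g) f) =
      shuffle Q g f +
        (a * qInt (Q c c) h) • (bichar Q [c] * prepend [c] g) := by
  induction h with
  | zero => simp
  | succ h ih =>
    have hlast : residual (List.replicate h c) (shuffle Q
        (bichar Q [c] * prepend (List.replicate (h + 1) c) g) (residual [c] f)) =
          (a * Q c c ^ h) • (bichar Q [c] * prepend [c] g) := by
      rw [hf, map_smul, shuffle_delta_nil_right, map_smul, residual_bichar_mul,
        List.replicate_succ', prepend_append, residual_prepend, smul_smul]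
      simp [bichar]
    rw [List.replicate_succ, residual_cons, residual_shuffle, map_add, ← List.replicate_succ,
      hlast, List.replicate_succ, residual_singleton_prepend_cons, if_pos rfl, ih, qInt_succ']
    module

end Delta

section BlockWords

variable {R : Type*} [CommRing R] (Q : Fin 2 → Fin 2 → R) (h : ℕ)

/-- The block `D = 0 1 ⋯ 1` with `h` letters `1`. -/
def block : List (Fin 2) := 0 :: List.replicate h 1

/-- The word `D ^ s 1` made of `s` blocks `D = block h` and a final letter `1`. -/
def blockWord : ℕ → List (Fin 2)
  | 0 => [1]
  | s + 1 => block h ++ blockWord s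

lemma length_blockWord (s : ℕ) : (blockWord h s).length = s * (h + 1) + 1 := by
  induction s with
  | zero => simp [blockWord]
  | succ s ih =>
    simp only [blockWord, block, List.cons_append, List.length_cons, List.length_append,
      List.length_replicate, ih]
    ring

lemma bichar_blockWord_right (u : List (Fin 2)) (s : ℕ) :
    bichar Q u (blockWord h s) = bichar Q u (block h) ^ s * bichar Q u [1] := by
  induction s with
  | zero => simp [blockWord]
  | succ s ih => rw [blockWord, bichar_append_right, ih]; ring

lemma bichar_blockWord_left (s : ℕ) (x : List (Fin 2)) :
    bichar Q (blockWord h s) x = bichar Q (block h) x ^ s * bichar Q [1] x := by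
  induction s with
  | zero => simp [blockWord]
  | succ s ih => rw [blockWord, bichar_append_left, Pi.mul_apply, ih]; ring

lemma bichar_block : bichar Q (block h) = bichar Q (List.replicate h 1) * bichar Q [0] := by
  rw [block, bichar_cons_left, mul_comm]

variable {Q h}

lemma residual_block (f : List (Fin 2) → R) :
    residual (block h) f = residual (List.replicate h 1) (residual [0] f) := rfl

lemma residual_one_prepend_block (g : List (Fin 2) → R) :
    residual [1] (prepend (block h) g) = 0 := by
  rw [block, residual_singleton_prepend_cons, if_neg zero_ne_one]

lemma residual_zero_prepend_block (g : List (Fin 2) → R) :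
    residual [0] (prepend (block h) g) = prepend (List.replicate h 1) g := by
  rw [block, residual_singleton_prepend_cons, if_pos rfl]

lemma residual_one_delta_block_append (u : List (Fin 2)) :
    residual [1] (delta (block h ++ u) : List (Fin 2) → R) = 0 := by
  rw [← prepend_delta, residual_one_prepend_block]

lemma residual_blockWord_succ (s : ℕ) (f : List (Fin 2) → R) :
    residual (blockWord h (s + 1)) f = residual (blockWord h s) (residual (block h) f) :=
  residual_append _ _ f

lemma residual_blockWord_zero_delta_one_cons (u : List (Fin 2)) :
    residual (blockWord h 0) (delta (1 :: u) : List (Fin 2) → R) = delta u :=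
  residual_delta_append [1] u

lemma residual_blockWord_succ_delta_one_cons (s : ℕ) (u : List (Fin 2)) :
    residual (blockWord h (s + 1)) (delta (1 :: u) : List (Fin 2) → R) = 0 := by
  rw [← List.singleton_append, ← prepend_delta, blockWord, block, List.cons_append, residual_cons,
    residual_singleton_prepend_cons, if_neg one_ne_zero, map_zero]

lemma residual_block_shuffle_prepend_right {f : List (Fin 2) → R} {a : R}
    (hf : residual [1] f = a • delta []) (g : List (Fin 2) → R) :
    residual (block h) (shuffle Q f (prepend (block h) g)) =
      shuffle Q (residual (block h) f) (prepend (block h) g) +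
        shuffle Q (bichar Q (block h) * f) g + (a * (Q 0 1 * qInt (Q 1 1) h)) • prepend [1] g := by
  have hf' : residual [1] (bichar Q [0] * f) = (a * Q 0 1) • delta [] := by
    rw [residual_bichar_mul, hf, mul_smul_comm, bichar_mul_delta, bichar_nil_right, one_smul,
      smul_smul, bichar_singleton, mul_comm]
  have hg : ∀ c ∈ List.replicate h (1 : Fin 2), residual [c] (prepend (block h) g) = 0 :=
    fun c hc => List.eq_of_mem_replicate hc ▸ residual_one_prepend_block g
  rw [residual_block, residual_shuffle, map_add, residual_shuffle_of_residual_right_eq_zero hg,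
    residual_zero_prepend_block, residual_replicate_shuffle_prepend_right 1 h hf', ← mul_assoc,
    ← bichar_block, ← residual_block, mul_assoc, add_assoc]

lemma residual_block_shuffle_prepend_left {f : List (Fin 2) → R} {a : R}
    (hf : residual [1] f = a • delta []) (g : List (Fin 2) → R) :
    residual (block h) (shuffle Q (prepend (block h) g) f) =
      shuffle Q g f + shuffle Q (bichar Q (block h) * prepend (block h) g) (residual (block h) f) +
        (a * qInt (Q 1 1) h) • (bichar Q [1] * prepend [1] g) := by
  have hg : ∀ c ∈ List.replicate h (1 : Fin 2),
      residual [c] (bichar Q [0] * prepend (block h) g) = 0 := fun c hc => by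
    rw [List.eq_of_mem_replicate hc, residual_bichar_mul, residual_one_prepend_block, mul_zero,
      smul_zero]
  rw [residual_block, residual_shuffle, map_add, residual_zero_prepend_block,
    residual_replicate_shuffle_prepend_left 1 h hf, residual_shuffle_of_residual_left_eq_zero hg,
    ← mul_assoc, ← bichar_block, ← residual_block, add_right_comm]

lemma residual_block_shuffle {f g : List (Fin 2) → R} (hf : residual [1] f = 0)
    (hg : residual [1] g = 0) :
    residual (block h) (shuffle Q f g) =
      shuffle Q (residual (block h) f) g + shuffle Q (bichar Q (block h) * f)
        (residual (block h) g) := by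
  have hg' : ∀ c ∈ List.replicate h (1 : Fin 2), residual [c] g = 0 :=
    fun c hc => List.eq_of_mem_replicate hc ▸ hg
  have hf' : ∀ c ∈ List.replicate h (1 : Fin 2), residual [c] (bichar Q [0] * f) = 0 :=
    fun c hc => by
      rw [List.eq_of_mem_replicate hc, residual_bichar_mul, hf, mul_zero, smul_zero]
  rw [residual_block, residual_shuffle, map_add, residual_shuffle_of_residual_right_eq_zero hg',
    residual_shuffle_of_residual_left_eq_zero hf', ← mul_assoc, ← bichar_block, ← residual_block,
    ← residual_block]

lemma residual_one_shuffle_right {f g : List (Fin 2) → R} {a : R}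
    (hf : residual [1] f = a • delta []) (hg : residual [1] g = 0) :
    residual [1] (shuffle Q f g) = a • g := by
  simp [residual_shuffle, hf, hg]

lemma residual_one_shuffle_left {f g : List (Fin 2) → R} {a : R}
    (hf : residual [1] f = a • delta []) (hg : residual [1] g = 0) :
    residual [1] (shuffle Q g f) = a • (bichar Q [1] * g) := by
  simp [residual_shuffle, hf, hg]

variable (h) in
/-- The functions whose values on the words starting with `D ^ s 1` are concentrated on `D ^ s 1`
itself, with value `a s`. -/
def IsTerminal (a : ℕ → R) (f : List (Fin 2) → R) : Prop :=
  ∀ s, residual (blockWord h s) f = a s • delta []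

namespace IsTerminal

variable {a : ℕ → R} {f : List (Fin 2) → R}

lemma residual_one (hf : IsTerminal h a f) : residual [1] f = a 0 • delta [] := hf 0

lemma residual_block (hf : IsTerminal h a f) :
    IsTerminal h (fun s => a (s + 1)) (residual (block h) f) := fun s => by
  rw [← residual_append]; exact hf (s + 1)

lemma bichar_mul (hf : IsTerminal h a f) (u : List (Fin 2)) :
    IsTerminal h (fun s => bichar Q u (blockWord h s) * a s) (bichar Q u * f) := fun s => by
  rw [residual_bichar_mul, hf s, mul_smul_comm, bichar_mul_delta, bichar_nil_right, one_smul,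
    smul_smul]

lemma residual_bichar_block_mul (hf : IsTerminal h a f) (s : ℕ) :
    residual (blockWord h s) (bichar Q (block h) * f) =
      (bichar Q (block h) (block h) ^ s * bichar Q (block h) [1] * a s) • delta [] := by
  rw [hf.bichar_mul, ← bichar_blockWord_right]

end IsTerminal

section Coefficients

variable (Q : Fin 2 → Fin 2 → R) (h s : ℕ)

/-- The scalar by which right multiplication by `δ_D` acts on terminal functions. -/
def rightCoeff : R :=
  bichar Q (block h) [1] * qInt (bichar Q (block h) (block h)) (s + 1) + Q 0 1 * qInt (Q 1 1) h

/-- The scalar by which left multiplication by `δ_D` acts on terminal functions. -/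
def leftCoeff : R :=
  qInt (bichar Q (block h) (block h)) (s + 1) +
    bichar Q (block h) (block h) ^ s * (Q 1 1 * qInt (Q 1 1) h)

/-- The scalar by which right multiplication by `δ_DD` acts on terminal functions. -/
def rightCoeff₂ : R :=
  bichar Q (block h) [1] ^ 2 * qTri (bichar Q (block h) (block h)) (s + 1) +
    bichar Q (block h) [1] * (Q 0 1 * qInt (Q 1 1) h) * qInt (bichar Q (block h) (block h)) (s + 1)

/-- The scalar by which left multiplication by `δ_DD` acts on terminal functions. -/
def leftCoeff₂ : R :=
  qTri (bichar Q (block h) (block h)) (s + 1) +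
    bichar Q (block h) (block h) ^ s * (Q 1 1 * qInt (Q 1 1) h) *
      qInt (bichar Q (block h) (block h)) (s + 1)

lemma rightCoeff_succ :
    rightCoeff Q h (s + 1) =
      rightCoeff Q h s + bichar Q (block h) (block h) ^ (s + 1) * bichar Q (block h) [1] := by
  rw [rightCoeff, rightCoeff, qInt_succ' _ (s + 1)]; ring

lemma leftCoeff_succ :
    leftCoeff Q h (s + 1) = 1 + bichar Q (block h) (block h) * leftCoeff Q h s := by
  rw [leftCoeff, leftCoeff, qInt_succ _ (s + 1)]; ring

lemma rightCoeff₂_succ :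
    rightCoeff₂ Q h (s + 1) =
      rightCoeff₂ Q h s +
        bichar Q (block h) (block h) ^ (s + 1) * bichar Q (block h) [1] *
          rightCoeff Q h (s + 1) := by
  rw [rightCoeff₂, rightCoeff₂, rightCoeff, qTri_succ _ (s + 1), qInt_succ' _ (s + 1)]; ring

lemma leftCoeff₂_succ :
    leftCoeff₂ Q h (s + 1) =
      leftCoeff Q h (s + 1) + bichar Q (block h) (block h) ^ 2 * leftCoeff₂ Q h s := by
  rw [leftCoeff₂, leftCoeff₂, leftCoeff, qTri_succ' _ (s + 1), qInt_succ _ (s + 1)]; ring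

end Coefficients

namespace IsTerminal

variable {a : ℕ → R} {f : List (Fin 2) → R}

lemma residual_block_shuffle_delta (hf : IsTerminal h a f) (u : List (Fin 2)) :
    residual (block h) (shuffle Q f (delta (block h ++ u))) =
      shuffle Q (residual (block h) f) (delta (block h ++ u)) +
        shuffle Q (bichar Q (block h) * f) (delta u) +
        (a 0 * (Q 0 1 * qInt (Q 1 1) h)) • delta (1 :: u) := by
  simpa only [prepend_delta, List.singleton_append] using
    residual_block_shuffle_prepend_right (Q := Q) (h := h) hf.residual_one (delta u)

lemma residual_block_shuffle_delta_block (hf : IsTerminal h a f) :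
    residual (block h) (shuffle Q f (delta (block h))) =
      shuffle Q (residual (block h) f) (delta (block h)) + bichar Q (block h) * f +
        (a 0 * (Q 0 1 * qInt (Q 1 1) h)) • delta [1] := by
  simpa using hf.residual_block_shuffle_delta (Q := Q) []

lemma residual_block_delta_shuffle (hf : IsTerminal h a f) (u : List (Fin 2)) :
    residual (block h) (shuffle Q (delta (block h ++ u)) f) =
      shuffle Q (delta u) f +
        bichar Q (block h) (block h ++ u) •
          shuffle Q (delta (block h ++ u)) (residual (block h) f) +
        (a 0 * (bichar Q [1] (1 :: u) * qInt (Q 1 1) h)) • delta (1 :: u) := by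
  have := residual_block_shuffle_prepend_left (Q := Q) (h := h) hf.residual_one (delta u)
  simp only [prepend_delta, List.singleton_append, bichar_mul_delta, map_smul,
    LinearMap.smul_apply] at this
  rw [this]
  module

lemma residual_block_delta_block_shuffle (hf : IsTerminal h a f) :
    residual (block h) (shuffle Q (delta (block h)) f) =
      f + bichar Q (block h) (block h) • shuffle Q (delta (block h)) (residual (block h) f) +
        (a 0 * (Q 1 1 * qInt (Q 1 1) h)) • delta [1] := by
  simpa [bichar_singleton] using hf.residual_block_delta_shuffle (Q := Q) []

lemma residual_zero_shuffle_delta (hf : IsTerminal h a f) (u : List (Fin 2)) :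
    residual (blockWord h 0) (shuffle Q f (delta (block h ++ u))) =
      a 0 • delta (block h ++ u) :=
  residual_one_shuffle_right hf.residual_one (residual_one_delta_block_append u)

lemma residual_zero_delta_shuffle (hf : IsTerminal h a f) (u : List (Fin 2)) :
    residual (blockWord h 0) (shuffle Q (delta (block h ++ u)) f) =
      (bichar Q (blockWord h 0) (block h ++ u) * a 0) • delta (block h ++ u) := by
  rw [blockWord, residual_one_shuffle_left hf.residual_one (residual_one_delta_block_append u),
    bichar_mul_delta, smul_smul, mul_comm]

lemma residual_zero_shuffle_delta_block (hf : IsTerminal h a f) :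
    residual (blockWord h 0) (shuffle Q f (delta (block h))) = a 0 • delta (block h) := by
  simpa using hf.residual_zero_shuffle_delta (Q := Q) []

lemma residual_zero_delta_block_shuffle (hf : IsTerminal h a f) :
    residual (blockWord h 0) (shuffle Q (delta (block h)) f) =
      (bichar Q (blockWord h 0) (block h) * a 0) • delta (block h) := by
  simpa using hf.residual_zero_delta_shuffle (Q := Q) []

lemma residual_succ_shuffle_delta_block (hf : IsTerminal h a f) (s : ℕ) :
    residual (blockWord h (s + 1)) (shuffle Q f (delta (block h))) =
      a (s + 1) • delta (block h) + (rightCoeff Q h s * a s) • delta [] := by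
  induction s generalizing f a with
  | zero =>
    rw [residual_blockWord_succ, hf.residual_block_shuffle_delta_block, map_add, map_add,
      map_smul, hf.residual_bichar_block_mul, hf.residual_block.residual_zero_shuffle_delta_block,
      residual_blockWord_zero_delta_one_cons, rightCoeff, qInt_one]
    module
  | succ s ih =>
    rw [residual_blockWord_succ, hf.residual_block_shuffle_delta_block, map_add, map_add,
      map_smul, hf.residual_bichar_block_mul, ih hf.residual_block,
      residual_blockWord_succ_delta_one_cons, rightCoeff_succ]
    module

lemma residual_succ_delta_block_shuffle (hf : IsTerminal h a f) (s : ℕ) :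
    residual (blockWord h (s + 1)) (shuffle Q (delta (block h)) f) =
      (bichar Q (blockWord h (s + 1)) (block h) * a (s + 1)) • delta (block h) +
        (leftCoeff Q h s * a s) • delta [] := by
  rw [bichar_blockWord_left]
  induction s generalizing f a with
  | zero =>
    rw [residual_blockWord_succ, hf.residual_block_delta_block_shuffle, map_add, map_add,
      map_smul, map_smul, hf 0, hf.residual_block.residual_zero_delta_block_shuffle, leftCoeff,
      residual_blockWord_zero_delta_one_cons, bichar_blockWord_left, qInt_one]
    module
  | succ s ih =>
    rw [residual_blockWord_succ, hf.residual_block_delta_block_shuffle, map_add, map_add,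
      map_smul, map_smul, hf (s + 1), ih hf.residual_block,
      residual_blockWord_succ_delta_one_cons, leftCoeff_succ]
    module

lemma residual_one_shuffle_delta_block_block (hf : IsTerminal h a f) :
    residual (blockWord h 1) (shuffle Q f (delta (block h ++ block h))) =
      a 1 • delta (block h ++ block h) + (rightCoeff Q h 0 * a 0) • delta (block h) := by
  rw [residual_blockWord_succ, hf.residual_block_shuffle_delta, map_add, map_add, map_smul,
    hf.residual_block.residual_zero_shuffle_delta,
    (hf.bichar_mul (block h)).residual_zero_shuffle_delta_block,
    residual_blockWord_zero_delta_one_cons, rightCoeff, qInt_one,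
    bichar_blockWord_right, pow_zero, one_mul]
  module

lemma residual_one_delta_block_block_shuffle (hf : IsTerminal h a f) :
    residual (blockWord h 1) (shuffle Q (delta (block h ++ block h)) f) =
      (bichar Q (blockWord h 1) (block h) ^ 2 * a 1) • delta (block h ++ block h) +
        (bichar Q (blockWord h 0) (block h) * leftCoeff Q h 0 * a 0) • delta (block h) := by
  rw [residual_blockWord_succ, hf.residual_block_delta_shuffle, map_add, map_add, map_smul,
    map_smul, hf.residual_block.residual_zero_delta_shuffle,
    hf.residual_zero_delta_block_shuffle,
    residual_blockWord_zero_delta_one_cons, leftCoeff, qInt_one]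
  simp only [bichar_append_right, bichar_blockWord_left, bichar_cons_right Q [1] 1 (block h),
    bichar_singleton]
  module

lemma residual_add_two_shuffle_delta_block_block (hf : IsTerminal h a f) (s : ℕ) :
    residual (blockWord h (s + 2)) (shuffle Q f (delta (block h ++ block h))) =
      a (s + 2) • delta (block h ++ block h) +
        (rightCoeff Q h (s + 1) * a (s + 1)) • delta (block h) +
        (rightCoeff₂ Q h s * a s) • delta [] := by
  induction s generalizing f a with
  | zero =>
    rw [residual_blockWord_succ, hf.residual_block_shuffle_delta, map_add, map_add, map_smul,
      hf.residual_block.residual_one_shuffle_delta_block_block,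
      (hf.bichar_mul (block h)).residual_succ_shuffle_delta_block,
      residual_blockWord_succ_delta_one_cons, rightCoeff_succ, rightCoeff₂, rightCoeff,
      bichar_blockWord_right, bichar_blockWord_right, qInt_one, qTri_succ, qTri_zero, qInt_one]
    module
  | succ s ih =>
    rw [residual_blockWord_succ, hf.residual_block_shuffle_delta, map_add, map_add, map_smul,
      ih hf.residual_block, (hf.bichar_mul (block h)).residual_succ_shuffle_delta_block,
      residual_blockWord_succ_delta_one_cons, rightCoeff_succ Q h (s + 1), rightCoeff₂_succ,
      bichar_blockWord_right, bichar_blockWord_right]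
    module

lemma residual_add_two_delta_block_block_shuffle (hf : IsTerminal h a f) (s : ℕ) :
    residual (blockWord h (s + 2)) (shuffle Q (delta (block h ++ block h)) f) =
      (bichar Q (blockWord h (s + 2)) (block h) ^ 2 * a (s + 2)) • delta (block h ++ block h) +
        (bichar Q (blockWord h (s + 1)) (block h) * leftCoeff Q h (s + 1) * a (s + 1)) •
          delta (block h) +
        (leftCoeff₂ Q h s * a s) • delta [] := by
  have hP : bichar Q (block h) (block h ++ block h) = bichar Q (block h) (block h) ^ 2 := by
    rw [bichar_append_right, sq]
  induction s generalizing f a with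
  | zero =>
    rw [residual_blockWord_succ, hf.residual_block_delta_shuffle, map_add, map_add, map_smul,
      map_smul, hf.residual_block.residual_one_delta_block_block_shuffle,
      hf.residual_succ_delta_block_shuffle, residual_blockWord_succ_delta_one_cons, hP,
      leftCoeff_succ, leftCoeff₂, leftCoeff, qInt_one, qTri_succ, qTri_zero, qInt_one]
    simp only [bichar_blockWord_left]
    module
  | succ s ih =>
    rw [residual_blockWord_succ, hf.residual_block_delta_shuffle, map_add, map_add, map_smul,
      map_smul, ih hf.residual_block, hf.residual_succ_delta_block_shuffle,
      residual_blockWord_succ_delta_one_cons, hP, leftCoeff₂_succ, leftCoeff_succ Q h (s + 1)]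
    simp only [bichar_blockWord_left]
    module

end IsTerminal

section Commutators

variable (Q) in
/-- The braided commutator of `δ_D` with a function of the degree of `D ^ n 1`. -/
def braidedComm (h n : ℕ) (f : List (Fin 2) → R) : List (Fin 2) → R :=
  shuffle Q (delta (block h)) f -
    bichar Q (blockWord h n) (block h) • shuffle Q f (delta (block h))

variable (Q) in
/-- The second order braided commutator of `δ_DD` with a function of the degree of `D ^ n 1`. -/
def braidedComm₂ (h n : ℕ) (f : List (Fin 2) → R) : List (Fin 2) → R :=
  shuffle Q (delta (block h ++ block h)) f -
    bichar Q (blockWord h n) (block h) ^ 2 • shuffle Q f (delta (block h ++ block h)) -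
    bichar Q (blockWord h n) (block h) • shuffle Q (braidedComm Q h n f) (delta (block h))

variable (Q) in
/-- The scalar by which the braided commutator with `δ_D` acts on functions concentrated
on `D ^ n 1`. -/
def commCoeff (h n : ℕ) : R :=
  leftCoeff Q h n - bichar Q (blockWord h n) (block h) * rightCoeff Q h n

variable (Q) in
/-- The scalar by which the second order braided commutator with `δ_DD` acts on functions
concentrated on `D ^ n 1`. -/
def commCoeff₂ (h n : ℕ) : R :=
  leftCoeff₂ Q h n - bichar Q (blockWord h n) (block h) ^ 2 * rightCoeff₂ Q h n -
    bichar Q (blockWord h n) (block h) * (commCoeff Q h n * rightCoeff Q h (n + 1))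

variable {n : ℕ} {a : R} {f : List (Fin 2) → R}

lemma isTerminal_delta_one : IsTerminal h (Pi.single 0 1) (delta [1] : List (Fin 2) → R)
  | 0 => by simp [residual_blockWord_zero_delta_one_cons]
  | s + 1 => by simp [residual_blockWord_succ_delta_one_cons]

lemma IsTerminal.braidedComm (hf : IsTerminal h (Pi.single n a) f) :
    IsTerminal h (Pi.single (n + 1) (commCoeff Q h n * a)) (braidedComm Q h n f) := fun s => by
  have hδ (r : ℕ) : bichar Q (blockWord h r) (block h) * (Pi.single n a : ℕ → R) r =
      bichar Q (blockWord h n) (block h) * (Pi.single n a : ℕ → R) r := by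
    rcases eq_or_ne r n with rfl | hr <;> simp [*]
  rw [QShuffle.braidedComm, map_sub, map_smul]
  cases s with
  | zero =>
    rw [hf.residual_zero_delta_block_shuffle, hf.residual_zero_shuffle_delta_block, hδ]
    simp [mul_smul]
  | succ s =>
    rw [hf.residual_succ_delta_block_shuffle, hf.residual_succ_shuffle_delta_block, hδ]
    rcases eq_or_ne s n with rfl | hs
    · simp only [commCoeff, Pi.single_eq_same]
      module
    · simp only [Pi.single_eq_of_ne hs, Pi.single_eq_of_ne (Nat.succ_ne_succ_iff.2 hs)]
      module

lemma IsTerminal.braidedComm₂ (hf : IsTerminal h (Pi.single n a) f) :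
    IsTerminal h (Pi.single (n + 2) (commCoeff₂ Q h n * a)) (braidedComm₂ Q h n f) := fun s => by
  have hT := hf.braidedComm (Q := Q)
  have hδ (r : ℕ) : bichar Q (blockWord h r) (block h) ^ 2 * (Pi.single n a : ℕ → R) r =
      bichar Q (blockWord h n) (block h) ^ 2 * (Pi.single n a : ℕ → R) r := by
    rcases eq_or_ne r n with rfl | hr <;> simp [*]
  rw [QShuffle.braidedComm₂, map_sub, map_sub, map_smul, map_smul]
  match s with
  | 0 =>
    rw [hf.residual_zero_delta_shuffle, bichar_append_right, ← sq, hδ,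
      hf.residual_zero_shuffle_delta, hT.residual_zero_shuffle_delta_block]
    simp [mul_smul]
  | 1 =>
    rw [hf.residual_one_delta_block_block_shuffle, hδ, hf.residual_one_shuffle_delta_block_block,
      hT.residual_succ_shuffle_delta_block 0]
    rcases eq_or_ne n 0 with rfl | hn
    · simp only [ne_eq, one_ne_zero, not_false_eq_true, Pi.single_eq_of_ne, mul_zero, zero_smul,
        Pi.single_eq_same, zero_add, commCoeff, zero_ne_one, OfNat.one_ne_ofNat]
      module
    · simp only [ne_eq, hn, not_false_eq_true, Pi.single_eq_of_ne', mul_zero, zero_smul,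
        zero_add, Nat.right_eq_add, Pi.single_eq_of_ne, Nat.add_eq_zero_iff, one_ne_zero, and_self]
      module
  | s + 2 =>
    rw [hf.residual_add_two_delta_block_block_shuffle, hδ,
      hf.residual_add_two_shuffle_delta_block_block, hT.residual_succ_shuffle_delta_block (s + 1)]
    rcases eq_or_ne s n with rfl | hs
    · simp only [Pi.single_eq_same, commCoeff, commCoeff₂, ne_eq, Nat.succ_ne_self,
        not_false_eq_true, Pi.single_eq_of_ne]
      module
    rcases eq_or_ne (s + 1) n with rfl | hs'
    · simp only [ne_eq, Nat.add_left_cancel_iff, OfNat.ofNat_ne_one, not_false_eq_true,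
        Pi.single_eq_of_ne, mul_zero, zero_smul, Pi.single_eq_same, Nat.left_eq_add, one_ne_zero,
        commCoeff, Nat.add_right_cancel_iff]
      module
    · simp only [ne_eq, hs', not_false_eq_true, Pi.single_eq_of_ne, mul_zero, zero_smul, hs,
        Nat.add_right_cancel_iff]
      module

end Commutators

end BlockWords

section WordEval

section SumElim

variable {K M M₁ M₂ ι κ : Type*} [Ring K] [AddCommGroup M] [AddCommGroup M₁] [AddCommGroup M₂]
  [Module K M] [Module K M₁] [Module K M₂]

lemma linearIndependent_sumElim_of_map {v : ι → M} {w : κ → M} (φ : M →ₗ[K] M₁)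
    (ψ : M →ₗ[K] M₂) (hv : LinearIndependent K (φ ∘ v)) (hψ : ∀ i, ψ (v i) = 0)
    (hw : LinearIndependent K (ψ ∘ w)) : LinearIndependent K (Sum.elim v w) := by
  have hv_le : Submodule.span K (Set.range v) ≤ LinearMap.ker ψ :=
    Submodule.span_le.2 (Set.range_subset_iff.2 hψ)
  exact (LinearIndependent.of_comp φ hv).sum_type (LinearIndependent.of_comp ψ hw)
    ((Submodule.range_ker_disjoint hw).symm.mono_left hv_le)

end SumElim

/-- A space of functions on words that contains the unit of the quantum shuffle product and is
closed under it. -/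
structure ShuffleClosed {α R : Type*} [DecidableEq α] [CommRing R] (Q : α → α → R)
    (A : Submodule R (List α → R)) : Prop where
  delta_nil_mem : delta [] ∈ A
  shuffle_mem : ∀ {f g}, f ∈ A → g ∈ A → shuffle Q f g ∈ A

section CommRing

variable {R : Type*} [CommRing R] {Q : Fin 2 → Fin 2 → R} {A : Submodule R (List (Fin 2) → R)}
  {h : ℕ}

lemma ShuffleClosed.braidedComm_mem (hA : ShuffleClosed Q A) (hD : delta (block h) ∈ A) (n : ℕ)
    {f : List (Fin 2) → R} (hf : f ∈ A) : braidedComm Q h n f ∈ A :=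
  A.sub_mem (hA.shuffle_mem hD hf) (A.smul_mem _ (hA.shuffle_mem hf hD))

lemma ShuffleClosed.braidedComm₂_mem (hA : ShuffleClosed Q A) (hD : delta (block h) ∈ A)
    (hDD : delta (block h ++ block h) ∈ A) (n : ℕ) {f : List (Fin 2) → R} (hf : f ∈ A) :
    braidedComm₂ Q h n f ∈ A :=
  A.sub_mem (A.sub_mem (hA.shuffle_mem hDD hf) (A.smul_mem _ (hA.shuffle_mem hf hDD)))
    (A.smul_mem _ (hA.shuffle_mem (hA.braidedComm_mem hD n hf) hD))

lemma IsTerminal.residual_shuffle {a : ℕ → R} {e g : List (Fin 2) → R} (he : IsTerminal h a e)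
    {t : ℕ} (ha : ∀ s < t, a s = 0) (hg : ∀ s ≤ t, residual (blockWord h s) g = 0) :
    residual (blockWord h t) (shuffle Q e g) = a t • g := by
  induction t generalizing a e g with
  | zero => exact residual_one_shuffle_right he.residual_one (hg 0 le_rfl)
  | succ t ih =>
    have he₁ : residual [1] e = 0 := by rw [he.residual_one, ha 0 t.succ_pos, zero_smul]
    rw [residual_blockWord_succ, residual_block_shuffle he₁ (hg 0 (Nat.zero_le _)), map_add,
      ih he.residual_block (fun s hs => ha _ (by lia)) (fun s hs => hg s (by lia)),
      ih (he.bichar_mul (block h)) (fun s hs => by rw [ha s (by lia), mul_zero])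
        (fun s hs => (residual_blockWord_succ s g).symm.trans (hg (s + 1) (by lia))),
      ha t t.lt_succ_self, mul_zero, zero_smul, add_zero]

variable (A h) in
/-- The functions in `A` that vanish on all words starting with `D ^ r 1` for some `r < n`. -/
def level (n : ℕ) : Submodule R (List (Fin 2) → R) where
  carrier := {g | g ∈ A ∧ ∀ r < n, residual (blockWord h r) g = 0}
  zero_mem' := ⟨A.zero_mem, fun _ _ => map_zero _⟩
  add_mem' hf hg := ⟨A.add_mem hf.1 hg.1, fun r hr => by
    rw [map_add, hf.2 r hr, hg.2 r hr, add_zero]⟩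
  smul_mem' c f hf := ⟨A.smul_mem c hf.1, fun r hr => by rw [map_smul, hf.2 r hr, smul_zero]⟩

lemma level_zero : level A h 0 = A := by
  ext; simp [level]

lemma level_antitone : Antitone (level A h) := fun _ _ hmn _ hg =>
  ⟨hg.1, fun r hr => hg.2 r (hr.trans_le hmn)⟩

lemma ShuffleClosed.delta_nil_mem_level (hA : ShuffleClosed Q A) (n : ℕ) :
    delta [] ∈ level A h n :=
  ⟨hA.delta_nil_mem, fun r _ => by cases r <;> exact residual_delta_nil _ _⟩

lemma ShuffleClosed.shuffle_mem_level (hA : ShuffleClosed Q A) {a : R} {t n : ℕ} (hnt : n ≤ t)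
    {e g : List (Fin 2) → R} (he : IsTerminal h (Pi.single t a) e) (heA : e ∈ A)
    (hg : g ∈ level A h (t + 1)) : shuffle Q e g ∈ level A h n := by
  have hzero (s : ℕ) (hs : s < t) : (Pi.single t a : ℕ → R) s = 0 := by
    rw [Pi.single_eq_of_ne hs.ne]
  refine ⟨hA.shuffle_mem heA hg.1, fun r hr => ?_⟩
  rw [he.residual_shuffle (fun s hs => hzero s (by lia)) (fun s hs => hg.2 s (by lia)),
    hzero r (by lia), zero_smul]

/-- Evaluation at the word `w`, as a functional on a space of functions on words. -/
def wordEval {α : Type*} (N : Submodule R (List α → R)) (w : List α) : Module.Dual R N :=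
  LinearMap.proj w ∘ₗ N.subtype

lemma wordEval_apply {α : Type*} (N : Submodule R (List α → R)) (w : List α) (f : N) :
    wordEval N w f = f.1 w := rfl

end CommRing

section Field

variable {k : Type*} [Field k] {Q : Fin 2 → Fin 2 → k} {A : Submodule k (List (Fin 2) → k)}
  {h : ℕ}

lemma ShuffleClosed.exists_isTerminal (hA : ShuffleClosed Q A) (h1 : delta [1] ∈ A)
    (hD : delta (block h) ∈ A)
    (hc : ∀ n, commCoeff Q h n ≠ 0 ∨ delta (block h ++ block h) ∈ A ∧ commCoeff₂ Q h n ≠ 0)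
    (n : ℕ) :
    ∃ t, n ≤ t ∧ t ≤ n + 1 ∧ ∃ e ∈ A, ∃ a ≠ 0, IsTerminal h (Pi.single t a) e := by
  induction n with
  | zero => exact ⟨0, le_rfl, zero_le_one, _, h1, 1, one_ne_zero, isTerminal_delta_one⟩
  | succ n ih =>
    obtain ⟨t, hnt, htn, e, heA, a, ha, he⟩ := ih
    rcases hnt.eq_or_lt with rfl | hlt
    · rcases hc n with hc | ⟨hDD, hc⟩
      · exact ⟨n + 1, by lia, by lia, _, hA.braidedComm_mem hD n heA, _, mul_ne_zero hc ha,
          he.braidedComm⟩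
      · exact ⟨n + 2, by lia, by lia, _, hA.braidedComm₂_mem hD hDD n heA, _,
          mul_ne_zero hc ha, he.braidedComm₂⟩
    · exact ⟨t, hlt, by lia, e, heA, a, ha, he⟩

lemma ShuffleClosed.linearIndependent_sumElim (hA : ShuffleClosed Q A) {a : k} (ha : a ≠ 0)
    {t n : ℕ} (hnt : n ≤ t) {e : List (Fin 2) → k} (heA : e ∈ A)
    (he : IsTerminal h (Pi.single t a) e) {ι : Type*} {W : ι → List (Fin 2)}
    (hW : LinearIndependent k fun i => wordEval (level A h (t + 1)) (W i)) :
    LinearIndependent k (Sum.elim (fun i => wordEval (level A h n) (blockWord h t ++ W i))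
      fun i => wordEval (level A h n) (W i)) := by
  let mulE : level A h (t + 1) →ₗ[k] level A h n :=
    (shuffle Q e).restrict fun _ => hA.shuffle_mem_level hnt he heA
  let incl : level A h (t + 1) →ₗ[k] level A h n :=
    Submodule.inclusion (level_antitone (hnt.trans t.le_succ))
  have hmulE (x : List (Fin 2)) : mulE.dualMap (wordEval _ (blockWord h t ++ x)) =
      a • wordEval (level A h (t + 1)) x := LinearMap.ext fun g => by
    have key := he.residual_shuffle (Q := Q) (t := t) (fun s hs => by rw [Pi.single_eq_of_ne hs.ne])
      fun s hs => g.2.2 s (Nat.lt_succ_of_le hs)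
    rw [Pi.single_eq_same] at key
    exact congrFun key x
  refine linearIndependent_sumElim_of_map mulE.dualMap incl.dualMap ?_ (fun i => ?_) hW
  · rw [show mulE.dualMap ∘ _ = a • fun i => wordEval (level A h (t + 1)) (W i) from
      funext fun i => hmulE (W i)]
    exact hW.units_smul fun _ => Units.mk0 a ha
  · exact LinearMap.ext fun g => congrFun (g.2.2 t t.lt_succ_self) (W i)

theorem ShuffleClosed.exists_linearIndependent_wordEval (hA : ShuffleClosed Q A)
    (h1 : delta [1] ∈ A) (hD : delta (block h) ∈ A)
    (hc : ∀ n, commCoeff Q h n ≠ 0 ∨ delta (block h ++ block h) ∈ A ∧ commCoeff₂ Q h n ≠ 0)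
    (m n : ℕ) :
    ∃ (ι : Type) (_ : Fintype ι) (W : ι → List (Fin 2)), Fintype.card ι = 2 ^ m ∧
      (∀ i, (W i).length ≤ m * ((n + 2 * m) * (h + 1))) ∧
      LinearIndependent k fun i => wordEval (level A h n) (W i) := by
  induction m generalizing n with
  | zero =>
    refine ⟨Unit, inferInstance, fun _ => [], rfl, fun _ => Nat.zero_le _,
      LinearIndependent.of_subsingleton () fun hzero => ?_⟩
    simpa [wordEval_apply] using
      LinearMap.congr_fun hzero ⟨delta [], hA.delta_nil_mem_level n⟩
  | succ m ih =>
    obtain ⟨t, hnt, htn, e, heA, a, ha, he⟩ := hA.exists_isTerminal h1 hD hc n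
    obtain ⟨ι, _, W, hcard, hlen, hW⟩ := ih (t + 1)
    have hlen_mul : m * ((t + 1 + 2 * m) * (h + 1)) ≤ m * ((n + 2 * (m + 1)) * (h + 1)) :=
      Nat.mul_le_mul_left _ (Nat.mul_le_mul_right _ (by lia))
    have hlen_block : (blockWord h t).length ≤ (n + 2 * (m + 1)) * (h + 1) := by
      rw [length_blockWord]
      calc t * (h + 1) + 1 ≤ (n + 1) * (h + 1) + 1 * (h + 1) := by gcongr; lia
        _ ≤ (n + 2 * (m + 1)) * (h + 1) := by
          rw [← add_mul]; exact Nat.mul_le_mul_right _ (by lia)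
    have hW' := hA.linearIndependent_sumElim ha hnt heA he hW
    refine ⟨ι ⊕ ι, inferInstance, Sum.elim (fun i => blockWord h t ++ W i) W, ?_, ?_, ?_⟩
    · rw [Fintype.card_sum, hcard, pow_succ, mul_two]
    · rintro (i | i)
      · rw [Sum.elim_inl, List.length_append, Nat.succ_mul, add_comm]
        exact add_le_add ((hlen i).trans hlen_mul) hlen_block
      · rw [Sum.elim_inr, Nat.succ_mul]
        exact ((hlen i).trans hlen_mul).trans (Nat.le_add_right _ _)
    · convert hW' using 1
      ext (i | i) <;> rfl

end Field

end WordEval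

section CartanB₂

variable {k : Type*} [Field k] {Q : Fin 2 → Fin 2 → k} {q : k}

lemma one_add_ne_zero_of_sq_ne_one (hq : q ^ 2 ≠ 1) : 1 + q ≠ 0 :=
  fun h => hq (by linear_combination (q - 1) * h)

lemma commCoeff_one_ne_zero_of_affine (h₀ : Q 0 0 * (Q 0 1 * Q 1 0) * Q 1 1 = 1)
    (h₁ : Q 0 1 * Q 1 0 * Q 1 1 ^ 2 = 1) (hQ : Q 1 1 ^ 2 ≠ 1) (n : ℕ) : commCoeff Q 1 n ≠ 0 := by
  have hP : bichar Q (block 1) (block 1) = 1 := by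
    simp only [bichar, block, List.replicate_one, List.map_cons, List.map_nil, List.prod_cons,
      List.prod_nil, mul_one]
    linear_combination h₀
  have hG : bichar Q [1] (block 1) = Q 1 0 * Q 1 1 := by simp [bichar, block]
  have hF : bichar Q (block 1) [1] = Q 0 1 * Q 1 1 := by simp [bichar, block]
  refine fun hc => hQ ?_
  rw [commCoeff, leftCoeff, rightCoeff, bichar_blockWord_left, hP, hG, hF, one_pow,
    qInt_one] at hc
  linear_combination Q 1 1 * hc + (Q 1 1 * qInt 1 (n + 1) + 1) * h₁

/-- The braiding matrix `Q` is of Cartan type `B₂` with parameter `q`. -/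
structure IsCartanB₂ (Q : Fin 2 → Fin 2 → k) (q : k) : Prop where
  zero_zero : Q 0 0 = q ^ 2
  one_one : Q 1 1 = q
  zero_one_mul_one_zero : Q 0 1 * Q 1 0 * q ^ 2 = 1

namespace IsCartanB₂

lemma ne_zero (hQ : IsCartanB₂ Q q) : q ≠ 0 := by
  rintro rfl
  simpa using hQ.zero_one_mul_one_zero

lemma bichar_one_block (hQ : IsCartanB₂ Q q) (h : ℕ) :
    bichar Q [1] (block h) = Q 1 0 * q ^ h := by
  simp [bichar, block, hQ.one_one]

lemma bichar_block_one_right (hQ : IsCartanB₂ Q q) (h : ℕ) :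
    bichar Q (block h) [1] = Q 0 1 * q ^ h := by
  simp [bichar, block, hQ.one_one]

lemma bichar_block_one (hQ : IsCartanB₂ Q q) : bichar Q (block 1) (block 1) = q := by
  simp only [bichar, block, List.replicate_one, List.map_cons, List.map_nil, List.prod_cons,
    List.prod_nil, mul_one, hQ.zero_zero, hQ.one_one]
  linear_combination q * hQ.zero_one_mul_one_zero

lemma bichar_block_two (hQ : IsCartanB₂ Q q) : bichar Q (block 2) (block 2) = q ^ 2 := by
  simp only [bichar, block, List.replicate_succ, List.replicate_zero, List.map_cons, List.map_nil,
    List.prod_cons, List.prod_nil, mul_one, hQ.zero_zero, hQ.one_one]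
  linear_combination (q ^ 2 + q ^ 4 * (Q 0 1 * Q 1 0)) * hQ.zero_one_mul_one_zero

lemma q_mul_commCoeff_one (hQ : IsCartanB₂ Q q) (n : ℕ) :
    q * commCoeff Q 1 n = q * qInt q (n + 1) * (1 - q ^ n) + q ^ n * (q ^ 2 - 1) := by
  rw [commCoeff, leftCoeff, rightCoeff, bichar_blockWord_left, hQ.bichar_block_one,
    hQ.bichar_one_block, hQ.bichar_block_one_right, hQ.one_one, qInt_one]
  linear_combination
    (-q ^ n * (q * qInt q (n + 1) + 1)) * hQ.zero_one_mul_one_zero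

lemma q_mul_commCoeff₂_one (hQ : IsCartanB₂ Q q) {n : ℕ} (hc : commCoeff Q 1 n = 0) :
    q * commCoeff₂ Q 1 n = q * qTri q (n + 1) * (1 - (q ^ n) ^ 2) +
      q ^ n * qInt q (n + 1) * (q ^ 2 - q ^ n) := by
  rw [commCoeff₂, hc, leftCoeff₂, rightCoeff₂, bichar_blockWord_left, hQ.bichar_block_one,
    hQ.bichar_one_block, hQ.bichar_block_one_right, hQ.one_one, qInt_one]
  linear_combination
    (-(q ^ n) ^ 2 * (Q 0 1 * Q 1 0 * q ^ 2 + 1) * (q * qTri q (n + 1) + qInt q (n + 1))) *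
      hQ.zero_one_mul_one_zero

lemma commCoeff₂_one_ne_zero (hQ : IsCartanB₂ Q q) (hq2 : q ^ 2 ≠ 1) (hq4 : q ^ 4 ≠ 1) {n : ℕ}
    (hc : commCoeff Q 1 n = 0) : commCoeff₂ Q 1 n ≠ 0 := fun hc₂ => by
  have hq := hQ.ne_zero
  have h1 : 1 - q ≠ 0 := fun h => hq2 (by linear_combination (-1 - q) * h)
  have h2 : 1 + q ≠ 0 := one_add_ne_zero_of_sq_ne_one hq2
  have eq₁ := hQ.q_mul_commCoeff_one n
  have eq₂ := hQ.q_mul_commCoeff₂_one hc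
  have hg := one_sub_mul_qInt q (n + 1)
  have hg' := one_sub_mul_qInt q (n + 2)
  have hb := one_add_mul_qTri q (n + 1)
  rw [hc, mul_zero] at eq₁
  rw [hc₂, mul_zero] at eq₂
  rw [pow_succ] at hg
  rw [pow_add] at hg'
  generalize qInt q (n + 1) = g, qInt q (n + 2) = g', qTri q (n + 1) = b, q ^ n = x at *
  have hx : (q - x) * (1 - q ^ 2 * x) = 0 := by
    linear_combination -(1 - q) * eq₁ - q * (1 - x) * hg
  rcases mul_eq_zero.1 hx with hx | hx
  · obtain rfl : q = x := sub_eq_zero.1 hx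
    have : q * (1 - q ^ 4) = 0 := by
      linear_combination -eq₂ - q * (1 - q) * hb - q * g * hg' - q * (1 + q ^ 2) * hg
    exact hq4 (sub_eq_zero.1 ((mul_eq_zero.1 this).resolve_left hq)).symm
  · have hb0 : b = 0 := by
      have : (1 - q) * ((1 + q) * b) = 0 := by linear_combination (1 - q) * hb + g * hg' + g * hx
      simpa [h1, h2] using this
    have hx0 : x ≠ 0 := by rintro rfl; simp at hx
    have hxq : 1 - x * q ≠ 0 := fun h => h1 (by linear_combination -q * h + hx)
    have hq2x : q ^ 2 - x ≠ 0 := fun h => hq4 (by linear_combination q ^ 2 * h - hx)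
    have : x * (1 - x * q) * (q ^ 2 - x) = 0 := by
      linear_combination -(1 - q) * eq₂ - q * (1 - q) * (1 - x ^ 2) * hb0 - x * (q ^ 2 - x) * hg
    simp [hx0, hxq, hq2x] at this

lemma commCoeff_two (hQ : IsCartanB₂ Q q) (n : ℕ) :
    commCoeff Q 2 n = qInt (q ^ 2) (n + 1) * (1 - q ^ 2 * (q ^ 2) ^ n) +
      (q ^ 2) ^ n * (q ^ 2 - 1) := by
  rw [commCoeff, leftCoeff, rightCoeff, bichar_blockWord_left, hQ.bichar_block_two,
    hQ.bichar_one_block, hQ.bichar_block_one_right, hQ.one_one, qInt_succ q, qInt_one]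
  linear_combination
    (-(q ^ 2) ^ n * (q ^ 2 * qInt (q ^ 2) (n + 1) + q + 1)) * hQ.zero_one_mul_one_zero

lemma commCoeff₂_two (hQ : IsCartanB₂ Q q) {n : ℕ} (hc : commCoeff Q 2 n = 0) :
    commCoeff₂ Q 2 n = qTri (q ^ 2) (n + 1) * (1 - (q ^ 2 * (q ^ 2) ^ n) ^ 2) +
      (q ^ 2) ^ n * qInt (q ^ 2) (n + 1) * ((1 + q) * (q - q ^ 2 * (q ^ 2) ^ n)) := by
  rw [commCoeff₂, hc, leftCoeff₂, rightCoeff₂, bichar_blockWord_left, hQ.bichar_block_two,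
    hQ.bichar_one_block, hQ.bichar_block_one_right, hQ.one_one, qInt_succ q 1, qInt_one]
  linear_combination
    (-((q ^ 2) ^ n) ^ 2 * q ^ 2 * (Q 0 1 * Q 1 0 * q ^ 2 + 1) *
      (q ^ 2 * qTri (q ^ 2) (n + 1) + (1 + q) * qInt (q ^ 2) (n + 1))) *
      hQ.zero_one_mul_one_zero

lemma commCoeff₂_two_ne_zero (hQ : IsCartanB₂ Q q) (hq2 : q ^ 2 ≠ 1) (hq3 : q ^ 3 ≠ 1) {n : ℕ}
    (hc : commCoeff Q 2 n = 0) : commCoeff₂ Q 2 n ≠ 0 := fun hc₂ => by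
  have h1 : 1 - q ^ 2 ≠ 0 := fun h => hq2 (sub_eq_zero.1 h).symm
  have h2 : 1 + q ≠ 0 := one_add_ne_zero_of_sq_ne_one hq2
  have eq₁ := hQ.commCoeff_two n
  have eq₂ := hQ.commCoeff₂_two hc
  have hg := one_sub_mul_qInt (q ^ 2) (n + 1)
  have hg' := one_sub_mul_qInt (q ^ 2) (n + 2)
  have hb := one_add_mul_qTri (q ^ 2) (n + 1)
  rw [hc] at eq₁
  rw [hc₂] at eq₂
  rw [pow_succ (q ^ 2) n] at hg
  rw [pow_add (q ^ 2) n] at hg'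
  generalize qInt (q ^ 2) (n + 1) = g, qInt (q ^ 2) (n + 2) = g', qTri (q ^ 2) (n + 1) = b,
    (q ^ 2) ^ n = x at *
  have hx : (1 - x) * (1 - q ^ 4 * x) = 0 := by
    linear_combination -(1 - q ^ 2) * eq₁ - (1 - q ^ 2 * x) * hg
  rcases mul_eq_zero.1 hx with hx | hx
  · obtain rfl : 1 = x := sub_eq_zero.1 hx
    have hg1 : g = 1 := mul_left_cancel₀ h1 (by linear_combination hg)
    have : (1 + q) * (1 - q ^ 3) = 0 := by
      subst hg1
      linear_combination -eq₂ - (1 - q ^ 2) * hb - hg'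
    exact hq3 (sub_eq_zero.1 ((mul_eq_zero.1 this).resolve_left h2)).symm
  · have hx0 : x ≠ 0 := by rintro rfl; simp at hx
    have hq2x : 1 - x * q ^ 2 ≠ 0 := fun h => h1 (by linear_combination -q ^ 2 * h + hx)
    have hqx : q - q ^ 2 * x ≠ 0 := fun h => hq3 (by linear_combination q ^ 2 * h - hx)
    have hb0 : (1 - q ^ 2) * ((1 + q ^ 2) * b) = 0 := by
      linear_combination (1 - q ^ 2) * hb + g * hg' + g * hx
    have : x * (1 - x * q ^ 2) * ((1 + q) * (q - q ^ 2 * x)) = 0 := by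
      linear_combination -(1 - q ^ 2) * eq₂ - x * ((1 + q) * (q - q ^ 2 * x)) * hg -
        (1 - q ^ 2) * b * (1 + x) * hx + x * (1 - q ^ 2) * hb0
    simp [hx0, hq2x, h2, hqx] at this

end IsCartanB₂

end CartanB₂

section GelfandKirillov

open Filter Asymptotics

variable {k A : Type*} [Field k] [Ring A] [Algebra k A] (S : Finset A)

lemma isLittleO_log_mul_sq {c : ℕ} (hc : c ≠ 0) :
    (fun n : ℕ => Real.log ((c * n ^ 2 : ℕ) : ℝ)) =o[atTop] fun n : ℕ => (n : ℝ) := by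
  have hcast : Tendsto (fun n : ℕ => (n : ℝ)) atTop atTop := tendsto_natCast_atTop_atTop
  have hlog := (Real.isLittleO_log_id_atTop.comp_tendsto hcast).const_mul_left 2
  have hconst : (fun _ : ℕ => Real.log c) =o[atTop] fun n : ℕ => (n : ℝ) :=
    isLittleO_const_left.2 <| Or.inr <| tendsto_norm_atTop_atTop.comp hcast
  refine (hconst.add hlog).congr' ?_ EventuallyEq.rfl
  filter_upwards [eventually_ne_atTop 0] with n hn
  push_cast
  rw [Real.log_mul (by exact_mod_cast hc) (by positivity), Real.log_pow]
  rfl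

lemma GKdim_eq_top_of_two_pow_le_finrank {u : ℕ → ℕ} (hu : Tendsto u atTop atTop)
    (hlog : (fun n => Real.log (u n)) =o[atTop] fun n : ℕ => (n : ℝ))
    (hrank : ∀ n, 2 ^ n ≤
      Module.finrank k (Submodule.span k (insert (1 : A) (S : Set A)) ^ u n : Submodule k A)) :
    GKdim k A = ⊤ := by
  rw [eq_top_iff, ← ENNReal.iSup_natCast, iSup_le_iff]
  intro C
  refine le_trans ?_ (le_iSup _ S)
  refine le_limsup_of_frequently_le (hu.frequently (Eventually.frequently ?_))
  have hε : 0 < Real.log 2 / (C + 1) := div_pos (Real.log_pos one_lt_two) (by positivity)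
  filter_upwards [hlog.bound hε, hu.eventually_gt_atTop 1] with n hn hun
  have hun' : 0 < Real.log (u n) := Real.log_pos (by exact_mod_cast hun)
  rw [← ENNReal.ofReal_natCast]
  refine ENNReal.ofReal_le_ofReal ((le_div_iff₀ hun').2 ?_)
  calc (C : ℝ) * Real.log (u n) ≤ (C + 1) * (Real.log 2 / (C + 1) * n) := by
        rw [Real.norm_of_nonneg hun'.le, Real.norm_natCast] at hn
        gcongr
        linarith
    _ = Real.log ((2 ^ n : ℕ) : ℝ) := by push_cast; rw [Real.log_pow]; field_simp
    _ ≤ Real.log (Module.finrank k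
        (Submodule.span k (insert (1 : A) (S : Set A)) ^ u n : Submodule k A)) :=
      Real.log_le_log (by positivity) (by exact_mod_cast hrank n)

lemma GKdim_eq_top_of_linearIndependent {c : ℕ} (hc : c ≠ 0)
    (H : ∀ n : ℕ, ∃ (ι : Type) (_ : Fintype ι) (v : ι → A), Fintype.card ι = 2 ^ n ∧
      LinearIndependent k v ∧
      ∀ i, v i ∈ Submodule.span k (insert (1 : A) (S : Set A)) ^ (c * n ^ 2)) :
    GKdim k A = ⊤ := by
  have hu : Tendsto (fun n : ℕ => c * n ^ 2) atTop atTop :=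
    (tendsto_pow_atTop two_ne_zero).const_mul_atTop' (Nat.pos_of_ne_zero hc)
  refine GKdim_eq_top_of_two_pow_le_finrank S hu (isLittleO_log_mul_sq hc) fun n => ?_
  obtain ⟨ι, _, v, hcard, hli, hv⟩ := H n
  have : Module.Finite k
      (Submodule.span k (insert (1 : A) (S : Set A)) ^ (c * n ^ 2) : Submodule k A) :=
    Module.Finite.iff_fg.2 ((Submodule.fg_span (S.finite_toSet.insert 1)).pow _)
  rw [← hcard]
  exact (LinearIndependent.of_comp (Submodule.subtype _)
    (v := fun i => ⟨v i, hv i⟩) hli).fintype_card_le_finrank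

end GelfandKirillov

section FreeAlgebra

variable {k α : Type*} [Field k]

/-- The noncommutative monomial of a word. -/
def monomial (w : List α) : FreeAlgebra k α := (w.map (FreeAlgebra.ι k)).prod

@[simp] lemma monomial_nil : (monomial [] : FreeAlgebra k α) = 1 := rfl

lemma monomial_cons (c : α) (w : List α) :
    (monomial (c :: w) : FreeAlgebra k α) = FreeAlgebra.ι k c * monomial w := by simp [monomial]

lemma monomial_append (u w : List α) :
    (monomial (u ++ w) : FreeAlgebra k α) = monomial u * monomial w := by simp [monomial]

/-- The basis of the free algebra formed by the monomials. -/
def monomialBasis : Module.Basis (List α) k (FreeAlgebra k α) :=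
  (FreeAlgebra.basisFreeMonoid k α).reindex FreeMonoid.toList

lemma monomialBasis_apply (w : List α) :
    (monomialBasis w : FreeAlgebra k α) = monomial w := by
  simp [monomialBasis, monomial, FreeAlgebra.basisFreeMonoid,
    FreeAlgebra.equivMonoidAlgebraFreeMonoid, FreeMonoid.lift_apply]

lemma hom_ext_monomial {M : Type*} [AddCommGroup M] [Module k M]
    {Λ Λ' : FreeAlgebra k α →ₗ[k] M} (h : ∀ w, Λ (monomial w) = Λ' (monomial w)) : Λ = Λ' :=
  monomialBasis.ext fun w => by rw [monomialBasis_apply]; exact h w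

/-- The linear functional on the free algebra with prescribed values on the monomials; it
identifies functions on words with the full dual. -/
def functional : (List α → k) ≃ₗ[k] Module.Dual k (FreeAlgebra k α) := monomialBasis.constr k

@[simp] lemma functional_monomial (f : List α → k) (w : List α) :
    functional f (monomial w) = f w := by
  rw [← monomialBasis_apply]
  exact monomialBasis.constr_basis k f w

@[simp] lemma functional_one (f : List α → k) : functional f 1 = f [] := functional_monomial f []

end FreeAlgebra

section Degree

/-- The `ℤ²`-degree of a word. -/
def degree (w : List (Fin 2)) : Fin 2 → ℤ := fun i => w.count i

lemma degree_eq_degree_iff {u w : List (Fin 2)} : degree w = degree u ↔ w.Perm u := by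
  simp [degree, funext_iff, List.perm_iff_count]

lemma degree_nil : degree [] = 0 := rfl

lemma degree_singleton (c : Fin 2) : degree [c] = ee c := by
  ext i
  fin_cases c <;> fin_cases i <;> rfl

variable {k : Type*} [Field k]

lemma monomial_mem_piece (w : List (Fin 2)) :
    (monomial w : FreeAlgebra k (Fin 2)) ∈ piece k (degree w) :=
  Submodule.subset_span ⟨w, fun _ => rfl, rfl⟩

lemma ι_mem_piece (c : Fin 2) : FreeAlgebra.ι k c ∈ piece k (ee c) := by
  simpa [monomial_cons, degree_singleton] using monomial_mem_piece (k := k) [c]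

lemma eqOn_piece {M : Type*} [AddCommGroup M] [Module k M] {Λ Λ' : FreeAlgebra k (Fin 2) →ₗ[k] M}
    {d : Fin 2 → ℤ} (h : ∀ w, degree w = d → Λ (monomial w) = Λ' (monomial w)) :
    Set.EqOn Λ Λ' (piece k d) :=
  LinearMap.eqOn_span fun _ ⟨w, hw, hy⟩ => hy ▸ h w (funext hw)

lemma qb_ee_degree (Q : Fin 2 → Fin 2 → kˣ) (c : Fin 2) (w : List (Fin 2)) :
    (qb Q (ee c) (degree w) : k) = bichar (fun a b => (Q a b : k)) [c] w := by
  induction w with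
  | nil => simp [qb, degree]
  | cons d w ih =>
    rw [bichar_cons_right, ← ih, bichar_singleton]
    fin_cases c <;> fin_cases d <;> simp [qb, degree, ee, zpow_add] <;> ring

end Degree

section Coproduct

variable {k : Type*} [Field k]

/-- The functional `f ⊗ g` on the tensor square of the free algebra. -/
def tensorFunctional {α : Type*} (f g : List α → k) :
    Module.Dual k (FreeAlgebra k α ⊗[k] FreeAlgebra k α) :=
  TensorProduct.dualDistrib k _ _ (functional f ⊗ₜ functional g)

@[simp] lemma tensorFunctional_tmul {α : Type*} (f g : List α → k) (x y : FreeAlgebra k α) :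
    tensorFunctional f g (x ⊗ₜ y) = functional f x * functional g y :=
  TensorProduct.dualDistrib_apply _ _ x y

variable {Q : Fin 2 → Fin 2 → kˣ}
    {m2 : (FreeAlgebra k (Fin 2) ⊗[k] FreeAlgebra k (Fin 2))
      →ₗ[k] (FreeAlgebra k (Fin 2) ⊗[k] FreeAlgebra k (Fin 2))
      →ₗ[k] (FreeAlgebra k (Fin 2) ⊗[k] FreeAlgebra k (Fin 2))}
    (hm2 : ∀ (a b c d : FreeAlgebra k (Fin 2)) (β γ : Fin 2 → ℤ),
      b ∈ piece k β → c ∈ piece k γ →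
      m2 (a ⊗ₜ b) (c ⊗ₜ d) = (qb Q β γ : k) • ((a * c) ⊗ₜ[k] (b * d)))
    {Δ : FreeAlgebra k (Fin 2) →ₗ[k] FreeAlgebra k (Fin 2) ⊗[k] FreeAlgebra k (Fin 2)}
    (hΔmul : ∀ x y, Δ (x * y) = m2 (Δ x) (Δ y))
    (hΔone : Δ 1 = 1 ⊗ₜ 1)
    (hΔgen : ∀ a : Fin 2, Δ (FreeAlgebra.ι k a)
      = FreeAlgebra.ι k a ⊗ₜ 1 + 1 ⊗ₜ FreeAlgebra.ι k a)

include hm2 in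
lemma tensorFunctional_ι_tmul_one (f g : List (Fin 2) → k) (c : Fin 2)
    (t : FreeAlgebra k (Fin 2) ⊗[k] FreeAlgebra k (Fin 2)) :
    tensorFunctional f g (m2 (FreeAlgebra.ι k c ⊗ₜ 1) t) =
      tensorFunctional (residual [c] f) g t := by
  suffices h : tensorFunctional f g ∘ₗ m2 (FreeAlgebra.ι k c ⊗ₜ 1) =
    tensorFunctional (residual [c] f) g from LinearMap.congr_fun h t
  refine TensorProduct.ext (hom_ext_monomial fun u => hom_ext_monomial fun v => ?_)
  have hmul := hm2 (FreeAlgebra.ι k c) 1 (monomial u) (monomial v) 0 (degree u)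
    (degree_nil ▸ monomial_mem_piece []) (monomial_mem_piece u)
  simp [hmul, qb, ← monomial_cons]

include hm2 in
lemma tensorFunctional_one_tmul_ι (f g : List (Fin 2) → k) (c : Fin 2)
    (t : FreeAlgebra k (Fin 2) ⊗[k] FreeAlgebra k (Fin 2)) :
    tensorFunctional f g (m2 (1 ⊗ₜ FreeAlgebra.ι k c) t) =
      tensorFunctional (bichar (fun a b => (Q a b : k)) [c] * f) (residual [c] g) t := by
  suffices h : tensorFunctional f g ∘ₗ m2 (1 ⊗ₜ FreeAlgebra.ι k c) =
      tensorFunctional (bichar (fun a b => (Q a b : k)) [c] * f) (residual [c] g) from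
    LinearMap.congr_fun h t
  refine TensorProduct.ext (hom_ext_monomial fun u => hom_ext_monomial fun v => ?_)
  have hmul := hm2 1 (FreeAlgebra.ι k c) (monomial u) (monomial v) (ee c) (degree u)
    (ι_mem_piece c) (monomial_mem_piece u)
  simp [hmul, qb_ee_degree, ← monomial_cons, mul_assoc]

include hm2 hΔmul hΔone hΔgen in
lemma tensorFunctional_comul_monomial (f g : List (Fin 2) → k) (w : List (Fin 2)) :
    tensorFunctional f g (Δ (monomial w)) =
      shuffle (fun a b => (Q a b : k)) f g w := by
  induction w generalizing f g with
  | nil => simp [hΔone]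
  | cons c w ih =>
    rw [monomial_cons, hΔmul, hΔgen, map_add, LinearMap.add_apply, map_add,
      tensorFunctional_ι_tmul_one hm2, tensorFunctional_one_tmul_ι hm2, ih, ih, shuffle_cons]

end Coproduct

section Dual

variable {k α B : Type*} [Field k] [Ring B] [Algebra k B]

/-- The functions on words that factor through the quotient map `π`: the dual of its image, inside
the dual of the free algebra. -/
def dualFunctions (π : FreeAlgebra k α →ₐ[k] B) : Submodule k (List α → k) :=
  (LinearMap.ker π.toLinearMap).dualAnnihilator.comap functional.toLinearMap

lemma mem_dualFunctions {π : FreeAlgebra k α →ₐ[k] B} {f : List α → k} :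
    f ∈ dualFunctions π ↔ ∀ x, π x = 0 → functional f x = 0 := by
  simp [dualFunctions, Submodule.mem_dualAnnihilator]

lemma exists_functional_eq_comp {π : FreeAlgebra k α →ₐ[k] B} {f : List α → k}
    (hf : f ∈ dualFunctions π) :
    ∃ ψ : Module.Dual k B, functional f = ψ ∘ₗ π.toLinearMap := by
  have hmem : functional f ∈ LinearMap.range π.toLinearMap.dualMap := by
    rw [LinearMap.range_dualMap_eq_dualAnnihilator_ker]
    exact hf
  obtain ⟨ψ, hψ⟩ := hmem
  exact ⟨ψ, hψ.symm⟩

variable {π : FreeAlgebra k (Fin 2) →ₐ[k] B}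

lemma functional_indicator_of_mem_piece {d e : Fin 2 → ℤ} (f : List (Fin 2) → k)
    {y : FreeAlgebra k (Fin 2)} (hy : y ∈ piece k d) :
    functional ({w | degree w = e}.indicator f) y = if d = e then functional f y else 0 := by
  split_ifs with h
  · exact eqOn_piece (fun w hw => by simp [hw, h]) hy
  · exact eqOn_piece (Λ' := 0) (fun w hw => by simp [hw, h]) hy

lemma indicator_mem_dualFunctions
    (hhom : ∀ x, π x = 0 → x ∈ Submodule.span k {y | π y = 0 ∧ ∃ d, y ∈ piece k d})
    {f : List (Fin 2) → k} (hf : f ∈ dualFunctions π) (e : Fin 2 → ℤ) :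
    {w | degree w = e}.indicator f ∈ dualFunctions π := by
  refine mem_dualFunctions.2 fun x hx => LinearMap.mem_ker.1 (Submodule.span_le.2 ?_ (hhom x hx))
  rintro y ⟨hy, d, hyd⟩
  rw [SetLike.mem_coe, LinearMap.mem_ker, functional_indicator_of_mem_piece f hyd,
    mem_dualFunctions.1 hf y hy, ite_self]

lemma exists_homogeneous_functional_ne_zero
    (hhom : ∀ x, π x = 0 → x ∈ Submodule.span k {y | π y = 0 ∧ ∃ d, y ∈ piece k d})
    {u : List (Fin 2)} {z : FreeAlgebra k (Fin 2)} (hz : z ∈ piece k (degree u)) (hπz : π z ≠ 0) :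
    ∃ f ∈ dualFunctions π, (∀ w, ¬ w.Perm u → f w = 0) ∧ functional f z ≠ 0 := by
  obtain ⟨ψ, hψ⟩ := not_forall.1 (mt (Module.forall_dual_apply_eq_zero_iff k (π z)).1 hπz)
  obtain ⟨f, hf⟩ := functional.surjective (ψ ∘ₗ π.toLinearMap)
  have hfπ : f ∈ dualFunctions π := mem_dualFunctions.2 fun x hx => by simp [hf, hx]
  refine ⟨_, indicator_mem_dualFunctions hhom hfπ (degree u), fun w hw => ?_, ?_⟩
  · exact Set.indicator_of_notMem (s := {w | degree w = degree u}) (mt degree_eq_degree_iff.1 hw) f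
  · rw [functional_indicator_of_mem_piece f hz, if_pos rfl, hf]
    exact hψ

lemma delta_mem_dualFunctions
    (hhom : ∀ x, π x = 0 → x ∈ Submodule.span k {y | π y = 0 ∧ ∃ d, y ∈ piece k d})
    {u : List (Fin 2)} (hu : ∀ w, w.Perm u → w = u) (hπu : π (monomial u) ≠ 0) :
    delta u ∈ dualFunctions π := by
  obtain ⟨f, hf, hfu, hne⟩ := exists_homogeneous_functional_ne_zero hhom (monomial_mem_piece u) hπu
  rw [functional_monomial] at hne
  have hfδ : f = f u • delta u := by
    ext w
    rcases eq_or_ne w u with rfl | h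
    · simp
    · simp [h, hfu w (mt (hu w) h)]
  exact (Submodule.smul_mem_iff _ hne).1 (hfδ ▸ hf)

section Connected

variable
    (hhom : ∀ x, π x = 0 → x ∈ Submodule.span k {y | π y = 0 ∧ ∃ d, y ∈ piece k d})
    (htriv : ∀ (a : k) (v : Fin 2 → k),
      π (algebraMap k (FreeAlgebra k (Fin 2)) a + ∑ s, v s • FreeAlgebra.ι k s) = 0 →
      a = 0 ∧ v = 0)

include hhom htriv

lemma delta_nil_mem_dualFunctions : delta [] ∈ dualFunctions π :=
  delta_mem_dualFunctions hhom (fun _ => List.perm_nil.1) fun h =>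
    one_ne_zero (htriv 1 0 (by simpa using h)).1

lemma delta_singleton_mem_dualFunctions (a : Fin 2) : delta [a] ∈ dualFunctions π := by
  refine delta_mem_dualFunctions hhom (fun _ => List.perm_singleton.1) fun h => ?_
  have hsum : ∑ s, (Pi.single a 1 : Fin 2 → k) s • FreeAlgebra.ι k s = monomial [a] := by
    simp [monomial, Pi.single_apply]
  simpa using (htriv 0 (Pi.single a 1) (by rw [map_zero, zero_add, hsum, h])).2

variable {Q : Fin 2 → Fin 2 → kˣ}
    {m2 : (FreeAlgebra k (Fin 2) ⊗[k] FreeAlgebra k (Fin 2))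
      →ₗ[k] (FreeAlgebra k (Fin 2) ⊗[k] FreeAlgebra k (Fin 2))
      →ₗ[k] (FreeAlgebra k (Fin 2) ⊗[k] FreeAlgebra k (Fin 2))}
    (hm2 : ∀ (a b c d : FreeAlgebra k (Fin 2)) (β γ : Fin 2 → ℤ),
      b ∈ piece k β → c ∈ piece k γ →
      m2 (a ⊗ₜ b) (c ⊗ₜ d) = (qb Q β γ : k) • ((a * c) ⊗ₜ[k] (b * d)))
    {Δ : FreeAlgebra k (Fin 2) →ₗ[k] FreeAlgebra k (Fin 2) ⊗[k] FreeAlgebra k (Fin 2)}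
    (hΔmul : ∀ x y, Δ (x * y) = m2 (Δ x) (Δ y))
    (hΔone : Δ 1 = 1 ⊗ₜ 1)
    (hΔgen : ∀ a : Fin 2, Δ (FreeAlgebra.ι k a)
      = FreeAlgebra.ι k a ⊗ₜ 1 + 1 ⊗ₜ FreeAlgebra.ι k a)
    (hhopf : ∀ x, π x = 0 →
      TensorProduct.map π.toLinearMap π.toLinearMap (Δ x) = 0)

include hm2 hΔmul hΔone hΔgen hhopf

lemma shuffleClosed_dualFunctions :
    ShuffleClosed (fun a b => (Q a b : k)) (dualFunctions π) where
  delta_nil_mem := delta_nil_mem_dualFunctions hhom htriv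
  shuffle_mem {f g} hf hg := by
    obtain ⟨ψ, hψ⟩ := exists_functional_eq_comp hf
    obtain ⟨φ, hφ⟩ := exists_functional_eq_comp hg
    have hfactor : functional (shuffle (fun a b => (Q a b : k)) f g) =
        TensorProduct.dualDistrib k _ _ (ψ ⊗ₜ φ) ∘ₗ
          TensorProduct.map π.toLinearMap π.toLinearMap ∘ₗ Δ := by
      have htensor : tensorFunctional f g = TensorProduct.dualDistrib k _ _ (ψ ⊗ₜ φ) ∘ₗ
          TensorProduct.map π.toLinearMap π.toLinearMap :=
        TensorProduct.ext' fun x y => by simp [hψ, hφ]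
      refine hom_ext_monomial fun w => ?_
      rw [functional_monomial, ← tensorFunctional_comul_monomial hm2 hΔmul hΔone hΔgen, htensor]
      rfl
    refine mem_dualFunctions.2 fun x hx => ?_
    rw [hfactor, LinearMap.comp_apply, LinearMap.comp_apply, hhopf x hx, map_zero]

end Connected

end Dual

section Contract

variable {k α β : Type*} [Field k]

/-- The function `x ↦ f(z x)` for an element `z` of the free algebra; `residual u` is the
contraction with the monomial `u`. -/
def contract (z : FreeAlgebra k α) : (List α → k) →ₗ[k] List α → k where
  toFun f x := functional f (z * monomial x)
  map_add' f g := by ext; simp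
  map_smul' a f := by ext; simp

lemma contract_monomial (u : List α) (f : List α → k) : contract (monomial u) f = residual u f := by
  ext x
  simp [contract, ← monomial_append]

lemma contract_ι (c : α) (f : List α → k) : contract (FreeAlgebra.ι k c) f = residual [c] f := by
  ext x
  simp [contract, ← monomial_cons]

lemma functional_contract (z y : FreeAlgebra k α) (f : List α → k) :
    functional (contract z f) y = functional f (z * y) := by
  suffices h : functional (contract z f) = functional f ∘ₗ LinearMap.mulLeft k z from
    LinearMap.congr_fun h y
  exact hom_ext_monomial fun w => by simp [contract]

/-- Evaluation of functions at the words in the elements `p c` of the free algebra. -/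
def pullback (p : β → FreeAlgebra k α) : (List α → k) →ₗ[k] List β → k where
  toFun f w := functional f (w.map p).prod
  map_add' f g := by ext; simp
  map_smul' a f := by ext; simp

lemma pullback_apply (p : β → FreeAlgebra k α) (f : List α → k) (w : List β) :
    pullback p f w = functional f (w.map p).prod := rfl

@[simp] lemma pullback_nil (p : β → FreeAlgebra k α) (f : List α → k) :
    pullback p f [] = f [] := by simp [pullback_apply]

lemma pullback_ι (f : List α → k) : pullback (FreeAlgebra.ι k) f = f :=
  funext fun w => functional_monomial f w

lemma residual_pullback (p : β → FreeAlgebra k α) (f : List α → k) (c : β) :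
    residual [c] (pullback p f) = pullback p (contract (p c) f) := by
  ext w
  simp [pullback_apply, functional_contract]

lemma linearIndependent_of_wordEval {B ι : Type*} [Ring B] [Algebra k B]
    {π : FreeAlgebra k α →ₐ[k] B} (p : β → FreeAlgebra k α) {N : Submodule k (List β → k)}
    (hN : N ≤ (dualFunctions π).map (pullback p)) {W : ι → List β}
    (hW : LinearIndependent k fun i => wordEval N (W i)) :
    LinearIndependent k fun i => π ((W i).map p).prod := by
  rw [linearIndependent_iff'] at hW ⊢
  refine fun s a ha => hW s a (LinearMap.ext fun ⟨f, hf⟩ => ?_)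
  obtain ⟨F, hF, rfl⟩ := hN hf
  have hFa := mem_dualFunctions.1 hF (∑ i ∈ s, a i • ((W i).map p).prod) (by simpa using ha)
  simpa [LinearMap.sum_apply, wordEval_apply, pullback_apply] using hFa

end Contract

lemma prod_map_mem_pow {k B β : Type*} [CommSemiring k] [Semiring B] [Algebra k B]
    {V : Submodule k B} {b : β → B} (hb : ∀ c, b c ∈ V) (w : List β) :
    (w.map b).prod ∈ V ^ w.length := by
  induction w with
  | nil => exact Submodule.one_le.1 le_rfl
  | cons c w ih =>
    rw [List.map_cons, List.prod_cons, List.length_cons, pow_succ']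
    exact Submodule.mul_mem_mul (hb c) ih

section Blocks

variable {k B : Type*} [Field k] [Ring B] [Algebra k B]

lemma contract_bichar_mul (Q : Fin 2 → Fin 2 → k) {u : List (Fin 2)} (v : List (Fin 2))
    {z : FreeAlgebra k (Fin 2)} (hz : z ∈ piece k (degree u)) (f : List (Fin 2) → k) :
    contract z (bichar Q v * f) = bichar Q v u • (bichar Q v * contract z f) := by
  ext x
  have heq : Set.EqOn (functional (bichar Q v * f) ∘ₗ LinearMap.mulRight k (monomial x))
      (bichar Q v (u ++ x) • functional f ∘ₗ LinearMap.mulRight k (monomial x) : _ →ₗ[k] k)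
      (piece k (degree u)) := eqOn_piece fun w hw => by
    have hperm := (degree_eq_degree_iff.1 hw).append_right x
    simp [← monomial_append, bichar_perm_right Q v hperm]
  simpa [contract, bichar_append_right, mul_assoc] using heq hz

/-- Elements `p c` of the free algebra, homogeneous of the degree of the word `d c`, that behave
like primitive generators with respect to the functions in `C`: contraction with `p c` is a skew
derivation. They span a braided vector space with matrix `bichar Q (d c) (d e)`. -/
structure IsBlocks (Q : Fin 2 → Fin 2 → k) (d : Fin 2 → List (Fin 2))
    (p : Fin 2 → FreeAlgebra k (Fin 2)) (C : Submodule k (List (Fin 2) → k)) : Prop where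
  closed : ShuffleClosed Q C
  mem_piece : ∀ c, p c ∈ piece k (degree (d c))
  contract_delta_nil : ∀ c, contract (p c) (delta []) = 0
  contract_mem : ∀ c {f}, f ∈ C → contract (p c) f ∈ C
  bichar_mul_mem : ∀ c {f}, f ∈ C → bichar Q (d c) * f ∈ C
  contract_shuffle : ∀ c {f g}, f ∈ C → g ∈ C → contract (p c) (shuffle Q f g) =
    shuffle Q (contract (p c) f) g + shuffle Q (bichar Q (d c) * f) (contract (p c) g)

namespace IsBlocks

variable {Q : Fin 2 → Fin 2 → k} {d : Fin 2 → List (Fin 2)} {p : Fin 2 → FreeAlgebra k (Fin 2)}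
  {C : Submodule k (List (Fin 2) → k)} (H : IsBlocks Q d p C)

include H

lemma pullback_bichar_mul (c : Fin 2) (f : List (Fin 2) → k) :
    pullback p (bichar Q (d c) * f) =
      bichar (fun a b => bichar Q (d a) (d b)) [c] * pullback p f := by
  funext w
  induction w generalizing f with
  | nil => simp
  | cons e w ih =>
    calc pullback p (bichar Q (d c) * f) (e :: w)
        = pullback p (contract (p e) (bichar Q (d c) * f)) w :=
          congrFun (residual_pullback p _ e) w
      _ = bichar Q (d c) (d e) * (bichar (fun a b => bichar Q (d a) (d b)) [c] w *
            pullback p (contract (p e) f) w) := by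
          rw [contract_bichar_mul Q (d c) (H.mem_piece e), map_smul, Pi.smul_apply, ih, smul_eq_mul,
            Pi.mul_apply]
      _ = _ := by
          rw [← residual_pullback, Pi.mul_apply, bichar_cons_right, bichar_singleton, mul_assoc]
          rfl

lemma pullback_shuffle {f g : List (Fin 2) → k} (hf : f ∈ C) (hg : g ∈ C) :
    pullback p (shuffle Q f g) =
      shuffle (fun a b => bichar Q (d a) (d b)) (pullback p f) (pullback p g) := by
  funext w
  induction w generalizing f g with
  | nil => simp
  | cons c w ih =>
    calc pullback p (shuffle Q f g) (c :: w)
        = pullback p (contract (p c) (shuffle Q f g)) w := congrFun (residual_pullback p _ c) w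
      _ = _ := by
        rw [H.contract_shuffle c hf hg, map_add, Pi.add_apply, ih (H.contract_mem c hf) hg,
          ih (H.bichar_mul_mem c hf) (H.contract_mem c hg), H.pullback_bichar_mul,
          ← residual_pullback, ← residual_pullback, shuffle_cons]

lemma pullback_delta_nil : pullback p (delta []) = (delta [] : List (Fin 2) → k) := by
  funext w
  cases w with
  | nil => simp
  | cons c w =>
    exact (congrFun (residual_pullback p _ c) w).trans (by simp [H.contract_delta_nil])

lemma shuffleClosed_map {A : Submodule k (List (Fin 2) → k)} (hA : ShuffleClosed Q A) :
    ShuffleClosed (fun a b => bichar Q (d a) (d b)) ((A ⊓ C).map (pullback p)) where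
  delta_nil_mem := ⟨delta [], ⟨hA.delta_nil_mem, H.closed.delta_nil_mem⟩, H.pullback_delta_nil⟩
  shuffle_mem := by
    rintro _ _ ⟨f, ⟨hfA, hfC⟩, rfl⟩ ⟨g, ⟨hgA, hgC⟩, rfl⟩
    exact ⟨shuffle Q f g, ⟨hA.shuffle_mem hfA hgA, H.closed.shuffle_mem hfC hgC⟩,
      H.pullback_shuffle hfC hgC⟩

theorem GKdim_eq_top {π : FreeAlgebra k (Fin 2) →ₐ[k] B} (hA : ShuffleClosed Q (dualFunctions π))
    {h : ℕ} (h1 : delta [1] ∈ (dualFunctions π ⊓ C).map (pullback p))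
    (hD : delta (block h) ∈ (dualFunctions π ⊓ C).map (pullback p))
    (hc : ∀ n, commCoeff (fun a b => bichar Q (d a) (d b)) h n ≠ 0 ∨
      delta (block h ++ block h) ∈ (dualFunctions π ⊓ C).map (pullback p) ∧
        commCoeff₂ (fun a b => bichar Q (d a) (d b)) h n ≠ 0) :
    GKdim k B = ⊤ := by
  classical
  refine GKdim_eq_top_of_linearIndependent {π (p 0), π (p 1)} (c := 2 * (h + 1)) (by lia)
    fun m => ?_
  obtain ⟨ι, hι, W, hcard, hlen, hli⟩ :=
    (H.shuffleClosed_map hA).exists_linearIndependent_wordEval h1 hD hc m 0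
  refine ⟨ι, hι, fun i => π ((W i).map p).prod, hcard,
    linearIndependent_of_wordEval p ?_ hli, fun i => ?_⟩
  · rw [level_zero]
    exact Submodule.map_mono inf_le_left
  · have hlen_le : (W i).length ≤ 2 * (h + 1) * m ^ 2 := (hlen i).trans_eq (by ring)
    have hone : (1 : Submodule k B) ≤
        Submodule.span k (insert 1 (({π (p 0), π (p 1)} : Finset B) : Set B)) :=
      Submodule.one_le.2 (Submodule.subset_span (Set.mem_insert _ _))
    refine pow_le_pow_right' hone hlen_le ?_
    beta_reduce
    rw [map_list_prod, List.map_map]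
    exact prod_map_mem_pow (fun c => Submodule.subset_span (by fin_cases c <;> simp)) (W i)

end IsBlocks

lemma isBlocks_ι (Q : Fin 2 → Fin 2 → k) :
    IsBlocks Q (fun c => [c]) (FreeAlgebra.ι k) ⊤ where
  closed := ⟨trivial, fun _ _ => trivial⟩
  mem_piece c := degree_singleton c ▸ ι_mem_piece c
  contract_delta_nil c := by rw [contract_ι, residual_delta_nil]
  contract_mem _ _ _ := trivial
  bichar_mul_mem _ _ _ := trivial
  contract_shuffle c f g _ _ := by
    simp only [contract_ι, residual_shuffle]

end Blocks

section PreNicholsDual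

variable {α k : Type*} [DecidableEq α] [Field k]

/-- A space of functions on words that is closed under the quantum shuffle product and contains
the unit and the letters, as does the graded dual of a pre-Nichols algebra. -/
structure IsPreNicholsDual (Q : α → α → k) (A : Submodule k (List α → k)) : Prop
    extends ShuffleClosed Q A where
  delta_singleton_mem : ∀ a, delta [a] ∈ A

lemma shuffle_delta_cons (Q : α → α → k) (c d : α) (u v : List α) :
    shuffle Q (delta (c :: u)) (delta (d :: v)) =
      prepend [c] (shuffle Q (delta u) (delta (d :: v))) +
        bichar Q [d] (c :: u) • prepend [d] (shuffle Q (delta (c :: u)) (delta v)) := by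
  have hres (e b : α) (w : List α) :
      residual [e] (delta (b :: w) : List α → k) = if b = e then delta w else 0 := by
    rw [show (delta (b :: w) : List α → k) = prepend [b] (delta w) from (prepend_delta [b] w).symm,
      residual_singleton_prepend_cons, prepend_nil]
  funext x
  cases x with
  | nil => simp
  | cons e x =>
    simp only [shuffle_cons, hres, bichar_mul_delta, Pi.add_apply, Pi.smul_apply,
      prepend_cons_apply_cons, prepend_nil]
    split_ifs with hc hd hd <;> simp [*]

end PreNicholsDual

section SerreElements

variable {k : Type*} [Field k] (Q : Fin 2 → Fin 2 → k) (q : k)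

/-- The quantum Serre element `x_{112} = (ad_c x_1)² x_2` of Cartan type `B₂`, with all powers of
`q₁₁ = q²` written out. -/
def x112 : FreeAlgebra k (Fin 2) :=
  monomial [0, 0, 1] - ((1 + q ^ 2) * Q 0 1) • monomial [0, 1, 0] +
    (q ^ 2 * Q 0 1 ^ 2) • monomial [1, 0, 0]

/-- The quantum Serre element `x_{2221} = (ad_c x_2)³ x_1` of Cartan type `B₂`, with all powers of
`q₂₂ = q` written out. -/
def x2221 : FreeAlgebra k (Fin 2) :=
  monomial [1, 1, 1, 0] - ((1 + q + q ^ 2) * Q 1 0) • monomial [1, 1, 0, 1] +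
    (q * (1 + q + q ^ 2) * Q 1 0 ^ 2) • monomial [1, 0, 1, 1] -
    (q ^ 3 * Q 1 0 ^ 3) • monomial [0, 1, 1, 1]

variable {Q q}

lemma monomial_mem_piece_of_perm {u v : List (Fin 2)} (h : u.Perm v) :
    monomial u ∈ piece k (degree v) :=
  degree_eq_degree_iff.2 h ▸ monomial_mem_piece u

lemma x112_mem_piece : x112 Q q ∈ piece k (degree [0, 0, 1]) := by
  refine add_mem (sub_mem ?_ (Submodule.smul_mem _ _ ?_)) (Submodule.smul_mem _ _ ?_) <;>
    exact monomial_mem_piece_of_perm (by decide)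

lemma x2221_mem_piece : x2221 Q q ∈ piece k (degree [0, 1, 1, 1]) := by
  refine sub_mem (add_mem (sub_mem ?_ (Submodule.smul_mem _ _ ?_)) (Submodule.smul_mem _ _ ?_))
    (Submodule.smul_mem _ _ ?_) <;>
    exact monomial_mem_piece_of_perm (by decide)

lemma functional_x112 (x y z : k) :
    functional (x • delta [0, 0, 1] + y • delta [0, 1, 0] + z • delta [1, 0, 0]) (x112 Q q) =
      x - (1 + q ^ 2) * Q 0 1 * y + q ^ 2 * Q 0 1 ^ 2 * z := by
  simp only [x112, delta, map_add, map_sub, map_smul, LinearMap.add_apply, LinearMap.smul_apply,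
    functional_monomial, Pi.single_apply, List.cons.injEq, one_ne_zero, zero_ne_one, and_true,
    and_self, and_false, if_true, if_false, smul_eq_mul]
  ring

lemma functional_x2221 (x₀ x₁ x₂ x₃ : k) :
    functional (x₀ • delta [0, 1, 1, 1] + x₁ • delta [1, 0, 1, 1] + x₂ • delta [1, 1, 0, 1] +
      x₃ • delta [1, 1, 1, 0]) (x2221 Q q) =
      x₃ - (1 + q + q ^ 2) * Q 1 0 * x₂ + q * (1 + q + q ^ 2) * Q 1 0 ^ 2 * x₁ -
        q ^ 3 * Q 1 0 ^ 3 * x₀ := by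
  simp only [x2221, delta, map_add, map_sub, map_smul, LinearMap.add_apply, LinearMap.smul_apply,
    functional_monomial, Pi.single_apply, List.cons.injEq, one_ne_zero, zero_ne_one, and_true,
    and_self, and_false, if_true, if_false, smul_eq_mul]
  ring

lemma eq_sum_permutations_smul_delta {α : Type*} [DecidableEq α] {f : List α → k} {u : List α}
    (hf : ∀ w, ¬ w.Perm u → f w = 0) : f = ∑ w ∈ u.permutations'.toFinset, f w • delta w := by
  funext w
  by_cases hw : w.Perm u <;> simp [Pi.single_apply, hw, hf]

lemma exists_eq_smul_delta_of_perm_001 {f : List (Fin 2) → k}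
    (hf : ∀ w, ¬ w.Perm [0, 0, 1] → f w = 0) :
    ∃ x y z : k, f = x • delta [0, 0, 1] + y • delta [0, 1, 0] + z • delta [1, 0, 0] := by
  have hs : ([0, 0, 1] : List (Fin 2)).permutations'.toFinset =
      {[0, 0, 1], [0, 1, 0], [1, 0, 0]} := by decide
  have hsum := eq_sum_permutations_smul_delta hf
  rw [hs] at hsum
  exact ⟨f [0, 0, 1], f [0, 1, 0], f [1, 0, 0], by simpa [add_assoc] using hsum⟩

lemma exists_eq_smul_delta_of_perm_0111 {f : List (Fin 2) → k}
    (hf : ∀ w, ¬ w.Perm [0, 1, 1, 1] → f w = 0) :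
    ∃ x₀ x₁ x₂ x₃ : k, f = x₀ • delta [0, 1, 1, 1] + x₁ • delta [1, 0, 1, 1] +
      x₂ • delta [1, 1, 0, 1] + x₃ • delta [1, 1, 1, 0] := by
  have hs : ([0, 1, 1, 1] : List (Fin 2)).permutations'.toFinset =
      {[0, 1, 1, 1], [1, 0, 1, 1], [1, 1, 0, 1], [1, 1, 1, 0]} := by decide
  have hsum := eq_sum_permutations_smul_delta hf
  rw [hs] at hsum
  exact ⟨f [0, 1, 1, 1], f [1, 0, 1, 1], f [1, 1, 0, 1], f [1, 1, 1, 0],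
    by simpa [add_assoc] using hsum⟩

end SerreElements

namespace IsPreNicholsDual

variable {k : Type*} [Field k] {Q : Fin 2 → Fin 2 → k} {A : Submodule k (List (Fin 2) → k)} {q : k}
  (hA : IsPreNicholsDual Q A) (hQ : IsCartanB₂ Q q) (hq : q ^ 2 ≠ 1)

include hA hQ hq

lemma delta_01_mem : delta [0, 1] ∈ A := by
  have key : (q ^ 2 - 1) • (delta [0, 1] : List (Fin 2) → k) =
      q ^ 2 • shuffle Q (delta [0]) (delta [1]) -
        (q ^ 2 * Q 1 0) • shuffle Q (delta [1]) (delta [0]) := by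
    have h01 := hQ.zero_one_mul_one_zero
    simp only [shuffle_delta_cons, shuffle_delta_nil_left, shuffle_delta_nil_right, prepend_delta,
      List.cons_append, List.nil_append, bichar, List.map_cons, List.map_nil, List.prod_cons,
      List.prod_nil, mul_one]
    match_scalars <;> grind
  rw [← A.smul_mem_iff (sub_ne_zero.2 hq), key]
  have h₁ := hA.shuffle_mem (hA.delta_singleton_mem 0) (hA.delta_singleton_mem 1)
  have h₂ := hA.shuffle_mem (hA.delta_singleton_mem 1) (hA.delta_singleton_mem 0)
  exact A.sub_mem (A.smul_mem _ h₁) (A.smul_mem _ h₂)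

lemma delta_10_mem : delta [1, 0] ∈ A := by
  have key : (delta [1, 0] : List (Fin 2) → k) =
      shuffle Q (delta [1]) (delta [0]) - Q 0 1 • delta [0, 1] := by
    simp only [shuffle_delta_cons, shuffle_delta_nil_left, shuffle_delta_nil_right, prepend_delta,
      List.cons_append, List.nil_append, bichar, List.map_cons, List.map_nil, List.prod_cons,
      List.prod_nil, mul_one]
    match_scalars <;> grind
  rw [key]
  have h₁ := hA.shuffle_mem (hA.delta_singleton_mem 1) (hA.delta_singleton_mem 0)
  exact A.sub_mem h₁ (A.smul_mem _ (hA.delta_01_mem hQ hq))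

lemma delta_011_mem : delta [0, 1, 1] ∈ A := by
  have key : (q ^ 2 - 1) • (delta [0, 1, 1] : List (Fin 2) → k) =
      q • shuffle Q (delta [0, 1]) (delta [1]) -
        (q ^ 2 * Q 1 0) • shuffle Q (delta [1]) (delta [0, 1]) := by
    have h01 := hQ.zero_one_mul_one_zero
    simp only [shuffle_delta_cons, shuffle_delta_nil_left, shuffle_delta_nil_right, prepend_delta,
      List.cons_append, List.nil_append, map_add, map_smul, bichar, List.map_cons, List.map_nil,
      List.prod_cons, List.prod_nil, mul_one, hQ.one_one]
    match_scalars <;> grind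
  rw [← A.smul_mem_iff (sub_ne_zero.2 hq), key]
  have h₁ := hA.shuffle_mem (hA.delta_01_mem hQ hq) (hA.delta_singleton_mem 1)
  have h₂ := hA.shuffle_mem (hA.delta_singleton_mem 1) (hA.delta_01_mem hQ hq)
  exact A.sub_mem (A.smul_mem _ h₁) (A.smul_mem _ h₂)

lemma delta_101_mem : delta [1, 0, 1] ∈ A := by
  have key : (delta [1, 0, 1] : List (Fin 2) → k) =
      shuffle Q (delta [1]) (delta [0, 1]) - (Q 0 1 * (1 + q)) • delta [0, 1, 1] := by
    simp only [shuffle_delta_cons, shuffle_delta_nil_left, shuffle_delta_nil_right, prepend_delta,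
      List.cons_append, List.nil_append, map_add, map_smul, bichar, List.map_cons, List.map_nil,
      List.prod_cons, List.prod_nil, mul_one, hQ.one_one]
    match_scalars <;> grind
  rw [key]
  have h₁ := hA.shuffle_mem (hA.delta_singleton_mem 1) (hA.delta_01_mem hQ hq)
  exact A.sub_mem h₁ (A.smul_mem _ (hA.delta_011_mem hQ hq))

lemma delta_110_mem : delta [1, 1, 0] ∈ A := by
  have key : (1 + q) • (delta [1, 1, 0] : List (Fin 2) → k) =
      shuffle Q (delta [1]) (delta [1, 0]) - (q * Q 0 1) • delta [1, 0, 1] := by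
    simp only [shuffle_delta_cons, shuffle_delta_nil_left, shuffle_delta_nil_right, prepend_delta,
      List.cons_append, List.nil_append, map_add, map_smul, bichar, List.map_cons, List.map_nil,
      List.prod_cons, List.prod_nil, mul_one, hQ.one_one]
    match_scalars <;> grind
  rw [← A.smul_mem_iff (one_add_ne_zero_of_sq_ne_one hq), key]
  have h₁ := hA.shuffle_mem (hA.delta_singleton_mem 1) (hA.delta_10_mem hQ hq)
  exact A.sub_mem h₁ (A.smul_mem _ (hA.delta_101_mem hQ hq))

lemma delta_010_mem {f : List (Fin 2) → k} (hfA : f ∈ A) (hf : ∀ w, ¬ w.Perm [0, 0, 1] → f w = 0)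
    (hne : functional f (x112 Q q) ≠ 0) : delta [0, 1, 0] ∈ A := by
  obtain ⟨x, y, z, hfx⟩ := exists_eq_smul_delta_of_perm_001 hf
  replace hne : x - (1 + q ^ 2) * Q 0 1 * y + q ^ 2 * Q 0 1 ^ 2 * z ≠ 0 := by
    rwa [hfx, functional_x112] at hne
  have key : (-(q ^ 2 * Q 1 0) * (x - (1 + q ^ 2) * Q 0 1 * y + q ^ 2 * Q 0 1 ^ 2 * z)) •
      (delta [0, 1, 0] : List (Fin 2) → k) = (1 + q ^ 2) • f -
        x • shuffle Q (delta [0]) (delta [0, 1]) -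
        (z * Q 0 1 * q ^ 2) • shuffle Q (delta [0]) (delta [1, 0]) := by
    have h01 := hQ.zero_one_mul_one_zero
    simp only [hfx, shuffle_delta_cons, shuffle_delta_nil_left, shuffle_delta_nil_right,
      prepend_delta, List.cons_append, List.nil_append, map_add, map_smul, bichar, List.map_cons,
      List.map_nil, List.prod_cons, List.prod_nil, mul_one, hQ.zero_zero]
    match_scalars <;> grind
  have hc : -(q ^ 2 * Q 1 0) ≠ 0 := fun h => by
    simpa [neg_eq_zero.1 h, mul_assoc, mul_comm (Q 1 0)] using hQ.zero_one_mul_one_zero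
  rw [← A.smul_mem_iff (mul_ne_zero hc hne), key]
  have h₁ := hA.shuffle_mem (hA.delta_singleton_mem 0) (hA.delta_01_mem hQ hq)
  have h₂ := hA.shuffle_mem (hA.delta_singleton_mem 0) (hA.delta_10_mem hQ hq)
  exact A.sub_mem (A.sub_mem (A.smul_mem _ hfA) (A.smul_mem _ h₁)) (A.smul_mem _ h₂)

lemma delta_0110_mem : delta [0, 1, 1, 0] ∈ A := by
  have key : (q ^ 2 - 1) • (delta [0, 1, 1, 0] : List (Fin 2) → k) =
      q ^ 2 • shuffle Q (delta [0, 1, 1]) (delta [0]) -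
        (q ^ 2 * Q 0 1 ^ 2) • shuffle Q (delta [0]) (delta [0, 1, 1]) := by
    have h01 := hQ.zero_one_mul_one_zero
    simp only [shuffle_delta_cons, shuffle_delta_nil_left, shuffle_delta_nil_right, prepend_delta,
      List.cons_append, List.nil_append, map_add, map_smul, bichar, List.map_cons, List.map_nil,
      List.prod_cons, List.prod_nil, mul_one, hQ.zero_zero]
    match_scalars <;> grind
  rw [← A.smul_mem_iff (sub_ne_zero.2 hq), key]
  have h₁ := hA.shuffle_mem (hA.delta_011_mem hQ hq) (hA.delta_singleton_mem 0)
  have h₂ := hA.shuffle_mem (hA.delta_singleton_mem 0) (hA.delta_011_mem hQ hq)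
  exact A.sub_mem (A.smul_mem _ h₁) (A.smul_mem _ h₂)

lemma delta_0101_mem (h : delta [0, 1, 0] ∈ A) : delta [0, 1, 0, 1] ∈ A := by
  have key : (q ^ 2 - 1) • (delta [0, 1, 0, 1] : List (Fin 2) → k) =
      q ^ 2 • shuffle Q (delta [0, 1, 0]) (delta [1]) -
        (Q 1 0 ^ 2 * q ^ 3) • shuffle Q (delta [1]) (delta [0, 1, 0]) -
        (Q 1 0 * (1 + q) * (q ^ 2 - q)) • delta [0, 1, 1, 0] := by
    have h01 := hQ.zero_one_mul_one_zero
    simp only [shuffle_delta_cons, shuffle_delta_nil_left, shuffle_delta_nil_right, prepend_delta,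
      List.cons_append, List.nil_append, map_add, map_smul, bichar, List.map_cons, List.map_nil,
      List.prod_cons, List.prod_nil, mul_one, hQ.one_one]
    match_scalars <;> grind
  rw [← A.smul_mem_iff (sub_ne_zero.2 hq), key]
  have h₁ := hA.shuffle_mem h (hA.delta_singleton_mem 1)
  have h₂ := hA.shuffle_mem (hA.delta_singleton_mem 1) h
  exact A.sub_mem (A.sub_mem (A.smul_mem _ h₁) (A.smul_mem _ h₂))
    (A.smul_mem _ (hA.delta_0110_mem hQ hq))

lemma delta_0111_mem (h3 : 1 + q + q ^ 2 ≠ 0) {f : List (Fin 2) → k} (hfA : f ∈ A)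
    (hf : ∀ w, ¬ w.Perm [0, 1, 1, 1] → f w = 0) (hne : functional f (x2221 Q q) ≠ 0) :
    delta [0, 1, 1, 1] ∈ A := by
  obtain ⟨x₀, x₁, x₂, x₃, hfx⟩ := exists_eq_smul_delta_of_perm_0111 hf
  replace hne : x₀ - Q 0 1 * (1 + q + q ^ 2) * x₁ +
      q * Q 0 1 ^ 2 * (1 + q + q ^ 2) * x₂ - q ^ 3 * Q 0 1 ^ 3 * x₃ ≠ 0 := by
    rw [hfx, functional_x2221] at hne
    set u := Q 0 1 * Q 1 0 * q ^ 2
    refine fun h => hne ?_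
    linear_combination -(q ^ 3 * Q 1 0 ^ 3) * h + (-x₃ * (1 + u + u ^ 2) +
      (1 + q + q ^ 2) * Q 1 0 * x₂ * (1 + u) - q * (1 + q + q ^ 2) * Q 1 0 ^ 2 * x₁) *
      hQ.zero_one_mul_one_zero
  have key : ((1 + q + q ^ 2) * (1 + q) * (x₀ - Q 0 1 * (1 + q + q ^ 2) * x₁ +
      q * Q 0 1 ^ 2 * (1 + q + q ^ 2) * x₂ - q ^ 3 * Q 0 1 ^ 3 * x₃)) •
      (delta [0, 1, 1, 1] : List (Fin 2) → k) = ((1 + q + q ^ 2) * (1 + q)) • f -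
        ((1 + q) * x₃) • shuffle Q (delta [1]) (delta [1, 1, 0]) -
        ((1 + q + q ^ 2) * x₂ - x₃ * q ^ 2 * Q 0 1) • shuffle Q (delta [1]) (delta [1, 0, 1]) +
        (((1 + q + q ^ 2) * x₂ - x₃ * q ^ 2 * Q 0 1) * (1 + q) * q * Q 0 1 -
          (1 + q + q ^ 2) * (1 + q) * x₁) • shuffle Q (delta [1]) (delta [0, 1, 1]) := by
    simp only [hfx, shuffle_delta_cons, shuffle_delta_nil_left, shuffle_delta_nil_right,
      prepend_delta, List.cons_append, List.nil_append, map_add, map_smul, bichar, List.map_cons,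
      List.map_nil, List.prod_cons, List.prod_nil, mul_one, hQ.one_one]
    match_scalars <;> grind
  have hc := mul_ne_zero (mul_ne_zero h3 (one_add_ne_zero_of_sq_ne_one hq)) hne
  rw [← A.smul_mem_iff hc, key]
  have h₁ := hA.shuffle_mem (hA.delta_singleton_mem 1) (hA.delta_110_mem hQ hq)
  have h₂ := hA.shuffle_mem (hA.delta_singleton_mem 1) (hA.delta_101_mem hQ hq)
  have h₃ := hA.shuffle_mem (hA.delta_singleton_mem 1) (hA.delta_011_mem hQ hq)
  exact A.add_mem (A.sub_mem (A.sub_mem (A.smul_mem _ hfA) (A.smul_mem _ h₁)) (A.smul_mem _ h₂))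
    (A.smul_mem _ h₃)

lemma delta_1011_mem (h3 : 1 + q + q ^ 2 = 0) : delta [1, 0, 1, 1] ∈ A := by
  have key : (delta [1, 0, 1, 1] : List (Fin 2) → k) =
      shuffle Q (delta [1]) (delta [0, 1, 1]) := by
    simp only [shuffle_delta_cons, shuffle_delta_nil_left, shuffle_delta_nil_right, prepend_delta,
      List.cons_append, List.nil_append, map_add, map_smul, bichar, List.map_cons, List.map_nil,
      List.prod_cons, List.prod_nil, mul_one, hQ.one_one]
    match_scalars <;> grind
  rw [key]
  exact hA.shuffle_mem (hA.delta_singleton_mem 1) (hA.delta_011_mem hQ hq)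

lemma delta_1101_mem (h3 : 1 + q + q ^ 2 = 0) : delta [1, 1, 0, 1] ∈ A := by
  have key : (1 + q) • (delta [1, 1, 0, 1] : List (Fin 2) → k) =
      shuffle Q (delta [1]) (delta [1, 0, 1]) -
        ((1 + q) * q * Q 0 1) • delta [1, 0, 1, 1] := by
    simp only [shuffle_delta_cons, shuffle_delta_nil_left, shuffle_delta_nil_right, prepend_delta,
      List.cons_append, List.nil_append, map_add, map_smul, bichar, List.map_cons, List.map_nil,
      List.prod_cons, List.prod_nil, mul_one, hQ.one_one]
    match_scalars <;> grind
  rw [← A.smul_mem_iff (one_add_ne_zero_of_sq_ne_one hq), key]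
  have h₁ := hA.shuffle_mem (hA.delta_singleton_mem 1) (hA.delta_101_mem hQ hq)
  exact A.sub_mem h₁ (A.smul_mem _ (hA.delta_1011_mem hQ hq h3))

lemma delta_0111_mem_of_delta_111_mem (h3 : 1 + q + q ^ 2 = 0) {f : List (Fin 2) → k} (hfA : f ∈ A)
    (hf : ∀ w, ¬ w.Perm [0, 1, 1, 1] → f w = 0) (hne : functional f (x2221 Q q) ≠ 0)
    (h111 : delta [1, 1, 1] ∈ A) : delta [0, 1, 1, 1] ∈ A := by
  obtain ⟨x₀, x₁, x₂, x₃, hfx⟩ := exists_eq_smul_delta_of_perm_0111 hf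
  replace hne : Q 1 0 ^ 3 * x₀ - x₃ ≠ 0 := by
    rw [hfx, functional_x2221] at hne
    grind [hQ.zero_one_mul_one_zero]
  have key : (Q 1 0 ^ 3 * x₀ - x₃) • (delta [0, 1, 1, 1] : List (Fin 2) → k) =
      Q 1 0 ^ 3 • f - x₃ • shuffle Q (delta [0]) (delta [1, 1, 1]) +
        (x₃ * Q 1 0 - Q 1 0 ^ 3 * x₁) • delta [1, 0, 1, 1] +
        (x₃ * Q 1 0 ^ 2 - Q 1 0 ^ 3 * x₂) • delta [1, 1, 0, 1] := by
    simp only [hfx, shuffle_delta_cons, shuffle_delta_nil_left, shuffle_delta_nil_right,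
      prepend_delta, List.cons_append, List.nil_append, map_add, map_smul, bichar, List.map_cons,
      List.map_nil, List.prod_cons, List.prod_nil, mul_one]
    match_scalars <;> grind
  rw [← A.smul_mem_iff hne, key]
  have h₁ := hA.shuffle_mem (hA.delta_singleton_mem 0) h111
  exact A.add_mem (A.add_mem (A.sub_mem (A.smul_mem _ hfA) (A.smul_mem _ h₁))
    (A.smul_mem _ (hA.delta_1011_mem hQ hq h3))) (A.smul_mem _ (hA.delta_1101_mem hQ hq h3))

lemma delta_011101_mem (h : delta [0, 1, 1, 1] ∈ A) : delta [0, 1, 1, 1, 0, 1] ∈ A := by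
  have key : (q - 1) • (delta [0, 1, 1, 1, 0, 1] : List (Fin 2) → k) =
      q • shuffle Q (delta [0, 1, 1, 1]) (delta [0, 1]) -
        (q * Q 0 1 ^ 2) • shuffle Q (delta [0, 1]) (delta [0, 1, 1, 1]) := by
    have h01 := hQ.zero_one_mul_one_zero
    simp only [shuffle_delta_cons, shuffle_delta_nil_left, shuffle_delta_nil_right, prepend_delta,
      List.cons_append, List.nil_append, map_add, map_smul, bichar, List.map_cons, List.map_nil,
      List.prod_cons, List.prod_nil, mul_one, hQ.zero_zero, hQ.one_one]
    match_scalars <;> grind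
  have hc : q - 1 ≠ 0 := sub_ne_zero.2 fun h => hq (by rw [h, one_pow])
  rw [← A.smul_mem_iff hc, key]
  have h₁ := hA.shuffle_mem h (hA.delta_01_mem hQ hq)
  have h₂ := hA.shuffle_mem (hA.delta_01_mem hQ hq) h
  exact A.sub_mem (A.smul_mem _ h₁) (A.smul_mem _ h₂)

lemma delta_011011_mem (h : delta [0, 1, 1, 1] ∈ A) : delta [0, 1, 1, 0, 1, 1] ∈ A := by
  have key : (q * (1 + q)) • (delta [0, 1, 1, 0, 1, 1] : List (Fin 2) → k) =
      (Q 0 1 * (1 + q + q ^ 2)) • shuffle Q (delta [0, 1]) (delta [0, 1, 1, 1]) -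
        (Q 0 1 * (1 + q + q ^ 2) * Q 1 0 ^ 2 * q ^ 3) • delta [0, 1, 1, 1, 0, 1] -
        (1 + q) • shuffle Q (delta [0, 1, 1]) (delta [0, 1, 1]) := by
    have h01 := hQ.zero_one_mul_one_zero
    simp only [shuffle_delta_cons, shuffle_delta_nil_left, shuffle_delta_nil_right, prepend_delta,
      List.cons_append, List.nil_append, map_add, map_smul, bichar, List.map_cons, List.map_nil,
      List.prod_cons, List.prod_nil, mul_one, hQ.zero_zero, hQ.one_one]
    match_scalars <;> grind
  rw [← A.smul_mem_iff (mul_ne_zero hQ.ne_zero (one_add_ne_zero_of_sq_ne_one hq)), key]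
  have h₁ := hA.shuffle_mem (hA.delta_01_mem hQ hq) h
  have h₂ := hA.shuffle_mem (hA.delta_011_mem hQ hq) (hA.delta_011_mem hQ hq)
  exact A.sub_mem (A.sub_mem (A.smul_mem _ h₁) (A.smul_mem _ (hA.delta_011101_mem hQ hq h)))
    (A.smul_mem _ h₂)

lemma delta_010111_add_mem (h4 : 1 + q ^ 2 ≠ 0) (h : delta [0, 1, 1, 1] ∈ A) :
    delta [0, 1, 0, 1, 1, 1] + (Q 0 1 * (1 + q ^ 2)) • delta [0, 0, 1, 1, 1, 1] ∈ A := by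
  have key : ((1 + q ^ 2) * (1 + q)) • (delta [0, 1, 0, 1, 1, 1] +
      (Q 0 1 * (1 + q ^ 2)) • delta [0, 0, 1, 1, 1, 1] : List (Fin 2) → k) =
      shuffle Q (delta [0, 1]) (delta [0, 1, 1, 1]) -
        (Q 1 0 ^ 2 * q ^ 3) • delta [0, 1, 1, 1, 0, 1] -
        (Q 1 0 * q ^ 2 * (1 + q)) • delta [0, 1, 1, 0, 1, 1] := by
    have h01 := hQ.zero_one_mul_one_zero
    simp only [shuffle_delta_cons, shuffle_delta_nil_left, shuffle_delta_nil_right, prepend_delta,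
      List.cons_append, List.nil_append, map_add, map_smul, bichar, List.map_cons, List.map_nil,
      List.prod_cons, List.prod_nil, mul_one, hQ.zero_zero, hQ.one_one]
    match_scalars <;> grind
  rw [← A.smul_mem_iff (mul_ne_zero h4 (one_add_ne_zero_of_sq_ne_one hq)), key]
  exact A.sub_mem (A.sub_mem (hA.shuffle_mem (hA.delta_01_mem hQ hq) h)
    (A.smul_mem _ (hA.delta_011101_mem hQ hq h))) (A.smul_mem _ (hA.delta_011011_mem hQ hq h))

end IsPreNicholsDual

section SecondOrder

variable {k B : Type*} [Field k] [Ring B] [Algebra k B] {π : FreeAlgebra k (Fin 2) →ₐ[k] B}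
  {Q : Fin 2 → Fin 2 → k} {q : k}

lemma IsPreNicholsDual.GKdim_eq_top_of_delta_010_mem (hA : IsPreNicholsDual Q (dualFunctions π))
    (hQ : IsCartanB₂ Q q) (hq2 : q ^ 2 ≠ 1) (hq4 : q ^ 4 ≠ 1)
    (h : delta [0, 1, 0] ∈ dualFunctions π) : GKdim k B = ⊤ := by
  refine (isBlocks_ι Q).GKdim_eq_top hA.toShuffleClosed (h := 1) ?_ ?_ fun n => ?_
  · exact ⟨_, ⟨hA.delta_singleton_mem 1, trivial⟩, pullback_ι _⟩
  · exact ⟨_, ⟨hA.delta_01_mem hQ hq2, trivial⟩, pullback_ι _⟩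
  · simp only [bichar_singleton]
    refine or_iff_not_imp_left.2 fun hc => ⟨?_, hQ.commCoeff₂_one_ne_zero hq2 hq4 (not_not.1 hc)⟩
    exact ⟨_, ⟨hA.delta_0101_mem hQ hq2 h, trivial⟩, pullback_ι _⟩

lemma IsPreNicholsDual.GKdim_eq_top_of_delta_0111_mem (hA : IsPreNicholsDual Q (dualFunctions π))
    (hQ : IsCartanB₂ Q q) (hq2 : q ^ 2 ≠ 1) (hq3 : q ^ 3 ≠ 1)
    (h : delta [0, 1, 1, 1] ∈ dualFunctions π) : GKdim k B = ⊤ := by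
  refine (isBlocks_ι Q).GKdim_eq_top hA.toShuffleClosed (h := 2) ?_ ?_ fun n => ?_
  · exact ⟨_, ⟨hA.delta_singleton_mem 1, trivial⟩, pullback_ι _⟩
  · exact ⟨_, ⟨hA.delta_011_mem hQ hq2, trivial⟩, pullback_ι _⟩
  · simp only [bichar_singleton]
    refine or_iff_not_imp_left.2 fun hc => ⟨?_, hQ.commCoeff₂_two_ne_zero hq2 hq3 (not_not.1 hc)⟩
    exact ⟨_, ⟨hA.delta_011011_mem hQ hq2 h, trivial⟩, pullback_ι _⟩

end SecondOrder

section AffineBlocks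

variable {k B : Type*} [Field k] [Ring B] [Algebra k B] {π : FreeAlgebra k (Fin 2) →ₐ[k] B}
  {Q : Fin 2 → Fin 2 → k} {d : Fin 2 → List (Fin 2)} {p : Fin 2 → FreeAlgebra k (Fin 2)}
  {C : Submodule k (List (Fin 2) → k)}

lemma pullback_eq_zero {f : List (Fin 2) → k} (hf : f [] = 0)
    (hp : ∀ c, contract (p c) f = 0) : pullback p f = 0 := by
  funext w
  cases w with
  | nil => simpa using hf
  | cons c w => exact (congrFun (residual_pullback p f c) w).trans (by simp [hp])

lemma IsBlocks.pullback_eq_smul_delta (H : IsBlocks Q d p C) (a : Fin 2) {x : k}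
    {f : List (Fin 2) → k} (hf : f [] = 0) (ha : contract (p a) f = x • delta [])
    (hp : ∀ c ≠ a, pullback p (contract (p c) f) = 0) : pullback p f = x • delta [a] := by
  funext w
  cases w with
  | nil => simpa using hf
  | cons c w =>
    refine (congrFun (residual_pullback p f c) w).trans ?_
    obtain rfl | hc := eq_or_ne c a
    · simp [ha, H.pullback_delta_nil, Pi.single_apply]
    · simp [hp c hc, hc]

/-- The conditions on the braiding matrix are those of affine Cartan type `A₂⁽²⁾`. -/
theorem IsBlocks.GKdim_eq_top_of_affine (H : IsBlocks Q d p C)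
    (hA : ShuffleClosed Q (dualFunctions π))
    (h0 : delta [0] ∈ (dualFunctions π ⊓ C).map (pullback p))
    (h1 : delta [1] ∈ (dualFunctions π ⊓ C).map (pullback p))
    (hQ₀ : bichar Q (d 0) (d 0) * (bichar Q (d 0) (d 1) * bichar Q (d 1) (d 0)) *
      bichar Q (d 1) (d 1) = 1)
    (hQ₁ : bichar Q (d 0) (d 1) * bichar Q (d 1) (d 0) * bichar Q (d 1) (d 1) ^ 2 = 1)
    (hQ₂ : bichar Q (d 1) (d 1) ^ 2 ≠ 1) : GKdim k B = ⊤ := by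
  set Q' : Fin 2 → Fin 2 → k := fun a b => bichar Q (d a) (d b)
  set A' := (dualFunctions π ⊓ C).map (pullback p)
  have hA' : ShuffleClosed Q' A' := H.shuffleClosed_map hA
  refine H.GKdim_eq_top hA (h := 1) h1 ?_ fun n => Or.inl <|
    commCoeff_one_ne_zero_of_affine hQ₀ hQ₁ hQ₂ n
  have key : (1 - Q' 0 1 * Q' 1 0) • (delta [0, 1] : List (Fin 2) → k) =
      shuffle Q' (delta [0]) (delta [1]) - Q' 1 0 • shuffle Q' (delta [1]) (delta [0]) := by
    simp only [shuffle_delta_cons, shuffle_delta_nil_left, shuffle_delta_nil_right, prepend_delta,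
      List.cons_append, List.nil_append, bichar_singleton]
    module
  have hc : 1 - Q' 0 1 * Q' 1 0 ≠ 0 := fun h => hQ₂ (by grind)
  change delta [0, 1] ∈ A'
  rw [← A'.smul_mem_iff hc, key]
  exact A'.sub_mem (hA'.shuffle_mem h0 h1) (A'.smul_mem _ (hA'.shuffle_mem h1 h0))

end AffineBlocks

section ShuffleRest

variable {α R : Type*} [CommRing R] (Q : α → α → R) (f g : List α → R)

/-- The contribution to `residual w (shuffle Q f g)`, up to scalars, of the ways of distributing
the letters of `w` that give the word `u` to `f` and the word `v` to `g`. -/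
def shuffleRest (u v : List α) : List α → R :=
  shuffle Q (bichar Q v * residual u f) (residual v g)

lemma shuffleRest_nil_right (u : List α) :
    shuffleRest Q f g u [] = shuffle Q (residual u f) g := by
  simp [shuffleRest]

lemma shuffleRest_nil_left (v : List α) :
    shuffleRest Q f g [] v = shuffle Q (bichar Q v * f) (residual v g) := by
  simp [shuffleRest]

lemma residual_cons_shuffleRest (c : α) (u v w : List α) :
    residual (c :: w) (shuffleRest Q f g u v) =
      bichar Q v [c] • residual w (shuffleRest Q f g (u ++ [c]) v) +
        residual w (shuffleRest Q f g u (v ++ [c])) := by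
  have hleft : residual [c] (bichar Q v * residual u f) =
      bichar Q v [c] • (bichar Q v * residual (u ++ [c]) f) := by
    rw [residual_bichar_mul, residual_append]
  have hright : bichar Q [c] * (bichar Q v * residual u f) =
      bichar Q (v ++ [c]) * residual u f := by
    rw [bichar_append_left]
    ring
  rw [residual_cons, shuffleRest, residual_shuffle, hleft, hright, ← residual_append]
  simp [shuffleRest]

end ShuffleRest

section FourthRoot

variable {k : Type*} [Field k] {Q : Fin 2 → Fin 2 → k} {q : k}

lemma contract_x112 (f : List (Fin 2) → k) :
    contract (x112 Q q) f = residual [0, 0, 1] f - ((1 + q ^ 2) * Q 0 1) • residual [0, 1, 0] f +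
      (q ^ 2 * Q 0 1 ^ 2) • residual [1, 0, 0] f := by
  ext x
  simp [contract, x112, add_mul, sub_mul, ← monomial_append]

lemma contract_x112_shuffle (hQ : IsCartanB₂ Q q) (h2 : q ^ 2 = -1) (f g : List (Fin 2) → k) :
    contract (x112 Q q) (shuffle Q f g) = shuffle Q (contract (x112 Q q) f) g +
      shuffle Q (bichar Q [0, 0, 1] * f) (contract (x112 Q q) g) := by
  have hz : Q 0 1 * Q 1 0 * (-1) = 1 := h2 ▸ hQ.zero_one_mul_one_zero
  have hl (u) : shuffle Q (residual u f) g = shuffleRest Q f g u [] :=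
    (shuffleRest_nil_right ..).symm
  have hr (v) (h : [0, 0, 1].Perm v) :
      shuffle Q (bichar Q [0, 0, 1] * f) (residual v g) = shuffleRest Q f g [] v := by
    rw [shuffleRest_nil_left, bichar_perm_left Q h]
  have h0 : shuffle Q f g = shuffleRest Q f g [] [] := by simp [shuffleRest]
  simp only [contract_x112, map_add, map_sub, map_smul, LinearMap.add_apply, LinearMap.sub_apply,
    LinearMap.smul_apply, hl, hr [0, 0, 1] (by decide), hr [0, 1, 0] (by decide),
    hr [1, 0, 0] (by decide), h0, residual_cons_shuffleRest, residual_nil, List.nil_append,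
    List.cons_append, bichar, List.map_cons, List.map_nil, List.prod_cons, List.prod_nil,
    hQ.zero_zero, h2]
  match_scalars <;> grind

lemma isBlocks_x112 (hQ : IsCartanB₂ Q q) (h2 : q ^ 2 = -1) :
    IsBlocks Q ![[1], [0, 0, 1]] ![monomial [1], x112 Q q] ⊤ where
  closed := ⟨trivial, fun _ _ => trivial⟩
  mem_piece c := by
    fin_cases c
    exacts [monomial_mem_piece [1], x112_mem_piece]
  contract_delta_nil c := by
    fin_cases c <;> simp [contract_monomial, contract_x112]
  contract_mem _ _ _ := trivial
  bichar_mul_mem _ _ _ := trivial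
  contract_shuffle c f g _ _ := by
    fin_cases c
    · simpa [contract_monomial] using residual_shuffle 1 f g
    · exact contract_x112_shuffle hQ h2 f g

lemma pullback_x112_delta_1 (hQ : IsCartanB₂ Q q) (h2 : q ^ 2 = -1) :
    pullback ![monomial [1], x112 Q q] (delta [1]) = (delta [0] : List (Fin 2) → k) := by
  have h112 : contract (x112 Q q) (delta [1]) = 0 := by
    ext w
    simp [contract_x112]
  simpa using (isBlocks_x112 hQ h2).pullback_eq_smul_delta 0 (x := 1) (f := delta [1]) (by simp)
    (by simpa [contract_monomial] using residual_delta_append [1] [])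
    fun c hc => by simp [Fin.eq_one_of_ne_zero c hc, h112]

lemma pullback_x112_of_perm_001 (hQ : IsCartanB₂ Q q) (h2 : q ^ 2 = -1) {f : List (Fin 2) → k}
    (hf : ∀ w, ¬ w.Perm [0, 0, 1] → f w = 0) :
    pullback ![monomial [1], x112 Q q] f = functional f (x112 Q q) • delta [1] := by
  have hlen (w) (hw : w.length ≠ 3) : f w = 0 := hf w fun h => hw h.length_eq
  refine (isBlocks_x112 hQ h2).pullback_eq_smul_delta 1 (hlen _ (by simp)) ?_ ?_
  · ext w
    cases w with
    | nil => simp [contract]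
    | cons a w => simp [contract_x112, hlen]
  · intro c hc
    have hc0 : c = 0 := by lia
    subst hc0
    refine pullback_eq_zero (by simp [contract_monomial, hlen]) fun c => ?_
    ext w
    fin_cases c
    · simp [contract_monomial, hf, List.perm_iff_count]
    · simp [contract_x112, contract_monomial, hlen]

variable {B : Type*} [Ring B] [Algebra k B] {π : FreeAlgebra k (Fin 2) →ₐ[k] B}

lemma IsPreNicholsDual.GKdim_eq_top_of_functional_x112_ne_zero
    (hA : IsPreNicholsDual Q (dualFunctions π)) (hQ : IsCartanB₂ Q q) (hq2 : q ^ 2 ≠ 1)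
    (hq4 : q ^ 4 = 1) {f : List (Fin 2) → k} (hfA : f ∈ dualFunctions π)
    (hf : ∀ w, ¬ w.Perm [0, 0, 1] → f w = 0) (hne : functional f (x112 Q q) ≠ 0) :
    GKdim k B = ⊤ := by
  have h2 : q ^ 2 = -1 := by grind
  have hz : Q 0 1 * Q 1 0 * (-1) = 1 := h2 ▸ hQ.zero_one_mul_one_zero
  refine (isBlocks_x112 hQ h2).GKdim_eq_top_of_affine hA.toShuffleClosed
    ⟨_, ⟨hA.delta_singleton_mem 1, trivial⟩, pullback_x112_delta_1 hQ h2⟩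
    ((Submodule.smul_mem_iff _ hne).1
      ⟨f, ⟨hfA, trivial⟩, pullback_x112_of_perm_001 hQ h2 hf⟩) ?_ ?_ ?_
  all_goals
    simp only [bichar, Matrix.cons_val_zero, Matrix.cons_val_one, Matrix.cons_val_fin_one,
      List.map_cons, List.map_nil, List.prod_cons, List.prod_nil, hQ.zero_zero, hQ.one_one]
    grind

end FourthRoot

section CubeRoot

/-- Some prefix of the word has weight less than `-m`, where the letters `0` and `1` have weights
`2` and `-1`. -/
def HasPrefixBelow : ℤ → List (Fin 2) → Prop
  | m, [] => m < 0
  | m, c :: w => m < 0 ∨ HasPrefixBelow (m + ![2, -1] c) w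

lemma HasPrefixBelow.of_neg {m : ℤ} (hm : m < 0) (w : List (Fin 2)) : HasPrefixBelow m w := by
  cases w
  exacts [hm, Or.inl hm]

lemma HasPrefixBelow.append {m : ℤ} {u : List (Fin 2)} (h : HasPrefixBelow m u)
    (x : List (Fin 2)) : HasPrefixBelow m (u ++ x) := by
  induction u generalizing m with
  | nil => exact .of_neg h _
  | cons c u ih => exact h.imp_right ih

section CommRing

variable {R : Type*} [CommRing R]

variable (R) in
/-- The functions vanishing on the words with a prefix of negative weight. Contraction with
`[0, 1, 1]` and `[0, 1, 0, 1, 1, 1]` is a skew derivation on these functions when `q` is a primitive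
cube root of unity. -/
def cone : Submodule R (List (Fin 2) → R) where
  carrier := {f | ∀ x, HasPrefixBelow 0 x → f x = 0}
  add_mem' hf hg x hx := by simp [hf x hx, hg x hx]
  zero_mem' _ _ := rfl
  smul_mem' a f hf x hx := by simp [hf x hx]

lemma delta_mem_cone {u : List (Fin 2)} (hu : ¬ HasPrefixBelow 0 u) : delta u ∈ cone R :=
  fun x hx => Pi.single_eq_of_ne (fun h : x = u => hu (h ▸ hx)) _

lemma residual_eq_zero_of_mem_cone {f : List (Fin 2) → R} (hf : f ∈ cone R) {u : List (Fin 2)}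
    (hu : HasPrefixBelow 0 u) : residual u f = 0 :=
  funext fun x => hf _ (hu.append x)

lemma shuffle_eq_zero_of_add_neg (Q : Fin 2 → Fin 2 → R) {a b : ℤ} {f g : List (Fin 2) → R}
    (hf : ∀ x, HasPrefixBelow a x → f x = 0) (hg : ∀ x, HasPrefixBelow b x → g x = 0)
    (h : a + b < 0) : shuffle Q f g = 0 := by
  rcases lt_or_ge a 0 with ha | ha
  · have hf0 : f = 0 := funext fun x => hf x (.of_neg ha x)
    simp [hf0]
  · have hg0 : g = 0 := funext fun x => hg x (.of_neg (by lia) x)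
    simp [hg0]

lemma shuffle_apply_eq_zero_of_hasPrefixBelow (Q : Fin 2 → Fin 2 → R) {a b : ℤ}
    {f g : List (Fin 2) → R} (hf : ∀ x, HasPrefixBelow a x → f x = 0)
    (hg : ∀ x, HasPrefixBelow b x → g x = 0) {w : List (Fin 2)} (hw : HasPrefixBelow (a + b) w) :
    shuffle Q f g w = 0 := by
  induction w generalizing a b f g with
  | nil => exact congrFun (shuffle_eq_zero_of_add_neg Q hf hg hw) _
  | cons c w ih =>
    rcases hw with hw | hw
    · exact congrFun (shuffle_eq_zero_of_add_neg Q hf hg hw) _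
    · have hleft : shuffle Q (residual [c] f) g w = 0 :=
        ih (a := a + ![2, -1] c) (fun x hx => hf _ (Or.inr hx)) hg (by rwa [add_right_comm])
      have hright : shuffle Q (bichar Q [c] * f) (residual [c] g) w = 0 :=
        ih (b := b + ![2, -1] c) (fun x hx => by simp [hf x hx]) (fun x hx => hg _ (Or.inr hx))
          (by rwa [← add_assoc])
      rw [shuffle_cons, hleft, hright, add_zero]

lemma shuffleClosed_cone (Q : Fin 2 → Fin 2 → R) : ShuffleClosed Q (cone R) where
  delta_nil_mem := delta_mem_cone (lt_irrefl 0)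
  shuffle_mem hf hg w hw := shuffle_apply_eq_zero_of_hasPrefixBelow Q hf hg (by simpa using hw)

lemma shuffleRest_eq_zero_left (Q : Fin 2 → Fin 2 → R) {f : List (Fin 2) → R} (hf : f ∈ cone R)
    (g : List (Fin 2) → R) {u : List (Fin 2)} (hu : HasPrefixBelow 0 u) (v : List (Fin 2)) :
    shuffleRest Q f g u v = 0 := by
  simp [shuffleRest, residual_eq_zero_of_mem_cone hf hu]

lemma shuffleRest_eq_zero_right (Q : Fin 2 → Fin 2 → R) (f : List (Fin 2) → R)
    {g : List (Fin 2) → R} (hg : g ∈ cone R) (u : List (Fin 2)) {v : List (Fin 2)}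
    (hv : HasPrefixBelow 0 v) : shuffleRest Q f g u v = 0 := by
  simp [shuffleRest, residual_eq_zero_of_mem_cone hg hv]

end CommRing

variable {k B : Type*} [Field k] [Ring B] [Algebra k B] {π : FreeAlgebra k (Fin 2) →ₐ[k] B}
  {Q : Fin 2 → Fin 2 → k} {q : k}

/-- The words `D` and `01 D 1` for `D = 011`; for `q` a primitive cube root of unity they give a
braided vector space of affine type `A₂⁽²⁾`. -/
def cubeWord : Fin 2 → List (Fin 2) := ![[0, 1, 1], [0, 1, 0, 1, 1, 1]]

lemma residual_cubeWord_shuffle (hQ : IsCartanB₂ Q q) (h3 : 1 + q + q ^ 2 = 0) (c : Fin 2)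
    {f g : List (Fin 2) → k} (hf : f ∈ cone k) (hg : g ∈ cone k) :
    residual (cubeWord c) (shuffle Q f g) = shuffle Q (residual (cubeWord c) f) g +
      shuffle Q (bichar Q (cubeWord c) * f) (residual (cubeWord c) g) := by
  have hneg1 (u) : HasPrefixBelow 0 (1 :: u) := by simp [HasPrefixBelow, HasPrefixBelow.of_neg]
  have hneg0111 (u) : HasPrefixBelow 0 (0 :: 1 :: 1 :: 1 :: u) := by
    simp [HasPrefixBelow, HasPrefixBelow.of_neg]
  have hL1 (u v) := shuffleRest_eq_zero_left Q hf g (hneg1 u) v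
  have hL0111 (u v) := shuffleRest_eq_zero_left Q hf g (hneg0111 u) v
  have hR1 (u v) := shuffleRest_eq_zero_right Q f hg u (hneg1 v)
  have hR0111 (u v) := shuffleRest_eq_zero_right Q f hg u (hneg0111 v)
  have h0 : shuffle Q f g = shuffleRest Q f g [] [] := by simp [shuffleRest]
  rw [h0, ← shuffleRest_nil_right, ← shuffleRest_nil_left]
  fin_cases c
  · simp [cubeWord, residual_cons_shuffleRest, hL1, hR1, bichar]
  · simp only [cubeWord, Fin.isValue, Fin.mk_one, Matrix.cons_val_one, Matrix.cons_val_fin_one,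
      residual_cons_shuffleRest, residual_nil, List.nil_append, List.cons_append, hL1, hR1, hL0111,
      hR0111, map_zero, smul_zero, add_zero, zero_add, smul_add, bichar, List.map_cons,
      List.map_nil, List.prod_cons, List.prod_nil, hQ.zero_zero, hQ.one_one]
    linear_combination (norm := module)
      ((Q 0 1 + q ^ 4 * Q 1 0 * Q 0 1 ^ 2) * h3) • shuffleRest Q f g [0, 1, 1] [0, 1, 1]

lemma isBlocks_cubeWord (hQ : IsCartanB₂ Q q) (h3 : 1 + q + q ^ 2 = 0) :
    IsBlocks Q cubeWord (fun c => monomial (cubeWord c)) (cone k) where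
  closed := shuffleClosed_cone Q
  mem_piece c := monomial_mem_piece _
  contract_delta_nil c := by
    ext w
    fin_cases c <;> simp [contract_monomial, cubeWord]
  contract_mem c f hf x hx := by
    rw [contract_monomial]
    refine hf _ ?_
    fin_cases c <;> simpa [cubeWord, HasPrefixBelow] using hx
  bichar_mul_mem c f hf x hx := by simp [hf x hx]
  contract_shuffle c f g hf hg := by
    simpa only [contract_monomial] using residual_cubeWord_shuffle hQ h3 c hf hg

lemma pullback_delta_cubeWord_zero (hQ : IsCartanB₂ Q q) (h3 : 1 + q + q ^ 2 = 0) :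
    pullback (fun c => monomial (cubeWord c)) (delta [0, 1, 1]) =
      (delta [0] : List (Fin 2) → k) := by
  have h0 : residual (cubeWord 0) (delta [0, 1, 1]) = (delta [] : List (Fin 2) → k) :=
    residual_delta_append [0, 1, 1] []
  have h1 : residual (cubeWord 1) (delta [0, 1, 1]) = (0 : List (Fin 2) → k) := by
    ext w
    simp [cubeWord]
  simpa using (isBlocks_cubeWord hQ h3).pullback_eq_smul_delta 0 (x := 1) (f := delta [0, 1, 1])
    (by simp) (by simpa [contract_monomial] using h0)
    fun c hc => by simp [Fin.eq_one_of_ne_zero c hc, contract_monomial, h1]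

lemma pullback_delta_cubeWord_one (hQ : IsCartanB₂ Q q) (h3 : 1 + q + q ^ 2 = 0) (x : k) :
    pullback (fun c => monomial (cubeWord c))
      (delta [0, 1, 0, 1, 1, 1] + x • delta [0, 0, 1, 1, 1, 1]) =
        (delta [1] : List (Fin 2) → k) := by
  set f : List (Fin 2) → k := delta [0, 1, 0, 1, 1, 1] + x • delta [0, 0, 1, 1, 1, 1] with hf
  have h0 : residual (cubeWord 0) f = 0 := by
    ext w
    simp [cubeWord, hf]
  have h1 : residual (cubeWord 1) f = delta [] := by
    ext w
    simp [cubeWord, hf, Pi.single_apply]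
  simpa using (isBlocks_cubeWord hQ h3).pullback_eq_smul_delta 1 (x := 1) (f := f)
    (by simp [hf]) (by simp [contract_monomial, h1])
    fun c hc => by simp [show c = 0 by lia, contract_monomial, h0]

lemma bichar_cubeWord_self (hQ : IsCartanB₂ Q q) (hq3 : q ^ 3 = 1) (c : Fin 2) :
    bichar Q (cubeWord c) (cubeWord c) = q ^ 2 := by
  have hz : Q 0 1 * Q 1 0 = q := by
    linear_combination q * hQ.zero_one_mul_one_zero - Q 0 1 * Q 1 0 * hq3
  fin_cases c
  · calc bichar Q [0, 1, 1] [0, 1, 1] = q ^ 6 * (Q 0 1 * Q 1 0) ^ 2 := by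
          simp only [bichar, List.map_cons, List.map_nil, List.prod_cons, List.prod_nil,
            hQ.zero_zero, hQ.one_one]
          ring
      _ = (q ^ 3) ^ 2 * q ^ 2 := by rw [hz]; ring
      _ = q ^ 2 := by rw [hq3]; ring
  · calc bichar Q [0, 1, 0, 1, 1, 1] [0, 1, 0, 1, 1, 1] = q ^ 24 * (Q 0 1 * Q 1 0) ^ 8 := by
          simp only [bichar, List.map_cons, List.map_nil, List.prod_cons, List.prod_nil,
            hQ.zero_zero, hQ.one_one]
          ring
      _ = (q ^ 3) ^ 10 * q ^ 2 := by rw [hz]; ring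
      _ = q ^ 2 := by rw [hq3]; ring

lemma bichar_cubeWord_mul_swap (hQ : IsCartanB₂ Q q) (hq3 : q ^ 3 = 1) :
    bichar Q (cubeWord 0) (cubeWord 1) * bichar Q (cubeWord 1) (cubeWord 0) = q ^ 2 := by
  have hz : Q 0 1 * Q 1 0 = q := by
    linear_combination q * hQ.zero_one_mul_one_zero - Q 0 1 * Q 1 0 * hq3
  calc bichar Q [0, 1, 1] [0, 1, 0, 1, 1, 1] * bichar Q [0, 1, 0, 1, 1, 1] [0, 1, 1]
      = q ^ 24 * (Q 0 1 * Q 1 0) ^ 8 := by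
        simp only [bichar, List.map_cons, List.map_nil, List.prod_cons, List.prod_nil,
          hQ.zero_zero, hQ.one_one]
        ring
    _ = (q ^ 3) ^ 10 * q ^ 2 := by rw [hz]; ring
    _ = q ^ 2 := by rw [hq3]; ring

theorem IsPreNicholsDual.GKdim_eq_top_of_delta_0111_mem_of_cube
    (hA : IsPreNicholsDual Q (dualFunctions π)) (hQ : IsCartanB₂ Q q) (hq2 : q ^ 2 ≠ 1)
    (h3 : 1 + q + q ^ 2 = 0)
    (h : delta [0, 1, 1, 1] ∈ dualFunctions π) : GKdim k B = ⊤ := by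
  have hc : q ^ 3 = 1 := by linear_combination (q - 1) * h3
  have h4 : 1 + q ^ 2 ≠ 0 := fun h => hQ.ne_zero (by linear_combination h3 - h)
  have hcone : delta [0, 1, 1] ∈ cone k := delta_mem_cone (by simp [HasPrefixBelow])
  have hcone' : delta [0, 1, 0, 1, 1, 1] + (Q 0 1 * (1 + q ^ 2)) • delta [0, 0, 1, 1, 1, 1] ∈
      cone k :=
    add_mem (delta_mem_cone (by simp [HasPrefixBelow]))
      (Submodule.smul_mem _ _ (delta_mem_cone (by simp [HasPrefixBelow])))
  refine (isBlocks_cubeWord hQ h3).GKdim_eq_top_of_affine hA.toShuffleClosed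
    ⟨_, ⟨hA.delta_011_mem hQ hq2, hcone⟩, pullback_delta_cubeWord_zero hQ h3⟩
    ⟨_, ⟨hA.delta_010111_add_mem hQ hq2 h4 h, hcone'⟩, pullback_delta_cubeWord_one hQ h3 _⟩
    ?_ ?_ ?_
  · simp only [bichar_cubeWord_self hQ hc, bichar_cubeWord_mul_swap hQ hc]
    linear_combination (q ^ 3 + 1) * hc
  · rw [bichar_cubeWord_self hQ hc, bichar_cubeWord_mul_swap hQ hc]
    linear_combination (q ^ 3 + 1) * hc
  · rw [bichar_cubeWord_self hQ hc]
    exact fun h => hq2 (by linear_combination (q + 1) * (h - q * hc))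

end CubeRoot

section SerreRelations

variable {k B : Type*} [Field k] [Ring B] [Algebra k B] {π : FreeAlgebra k (Fin 2) →ₐ[k] B}
  {Q : Fin 2 → Fin 2 → k} {q : k}

namespace IsPreNicholsDual

variable (hA : IsPreNicholsDual Q (dualFunctions π)) (hQ : IsCartanB₂ Q q) (hq2 : q ^ 2 ≠ 1)
  (hhom : ∀ x, π x = 0 → x ∈ Submodule.span k {y | π y = 0 ∧ ∃ d, y ∈ piece k d})
  (hGK : GKdim k B ≠ ⊤)

include hA hQ hq2 hhom hGK

theorem map_x112_eq_zero : π (x112 Q q) = 0 := by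
  by_contra hx
  obtain ⟨f, hfA, hf, hne⟩ := exists_homogeneous_functional_ne_zero hhom x112_mem_piece hx
  refine hGK ?_
  by_cases hq4 : q ^ 4 = 1
  · exact hA.GKdim_eq_top_of_functional_x112_ne_zero hQ hq2 hq4 hfA hf hne
  · exact hA.GKdim_eq_top_of_delta_010_mem hQ hq2 hq4 (hA.delta_010_mem hQ hq2 hfA hf hne)

theorem map_x2221_eq_zero : π (x2221 Q q) = 0 := by
  by_contra hx
  obtain ⟨f, hfA, hf, hne⟩ := exists_homogeneous_functional_ne_zero hhom x2221_mem_piece hx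
  refine hGK ?_
  by_cases h3 : 1 + q + q ^ 2 = 0
  · have h111 : π (monomial [1, 1, 1]) ≠ 0 := fun h => hx <| by
      have hend : π (monomial [1, 1, 1, 0]) = 0 := by
        rw [show [1, 1, 1, (0 : Fin 2)] = [1, 1, 1] ++ [0] from rfl, monomial_append, map_mul, h,
          zero_mul]
      have hbegin : π (monomial [0, 1, 1, 1]) = 0 := by
        rw [monomial_cons, map_mul, h, mul_zero]
      simp [x2221, h3, hend, hbegin]
    exact hA.GKdim_eq_top_of_delta_0111_mem_of_cube hQ hq2 h3 <|
      hA.delta_0111_mem_of_delta_111_mem hQ hq2 h3 hfA hf hne <|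
        delta_mem_dualFunctions hhom (fun _ => (List.perm_replicate (n := 3)).1) h111
  · have hq3 : q ^ 3 ≠ 1 := fun h => h3 (by grind)
    exact hA.GKdim_eq_top_of_delta_0111_mem hQ hq2 hq3 (hA.delta_0111_mem hQ hq2 h3 hfA hf hne)

end IsPreNicholsDual

end SerreRelations

section Bracket

variable {k : Type*} [Field k] {Q : Fin 2 → Fin 2 → kˣ} {q : kˣ}

lemma qb_add_right (α β γ : Fin 2 → ℤ) : qb Q α (β + γ) = qb Q α β * qb Q α γ := by
  simp [qb, mul_add, zpow_add, Finset.prod_mul_distrib]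

lemma qb_ee_ee (a b : Fin 2) : qb Q (ee a) (ee b) = Q a b := by
  fin_cases a <;> fin_cases b <;> simp [qb, ee]

lemma brk_eq_x112 (h0 : Q 0 0 = q ^ 2) :
    (brk Q (gen k 0) (brk Q (gen k 0) (gen k 1))).1 = x112 (fun a b => (Q a b : k)) q := by
  simp only [brk, gen, qb_add_right, qb_ee_ee, h0, x112, monomial_cons, monomial_nil, Units.val_mul,
    Units.val_pow_eq_pow_val, mul_sub, sub_mul, smul_sub, mul_smul_comm, smul_mul_assoc, smul_smul,
    mul_assoc, mul_one]
  module

lemma brk_eq_x2221 (h1 : Q 1 1 = q) :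
    (brk Q (gen k 1) (brk Q (gen k 1) (brk Q (gen k 1) (gen k 0)))).1 =
      x2221 (fun a b => (Q a b : k)) q := by
  simp only [brk, gen, qb_add_right, qb_ee_ee, h1, x2221, monomial_cons, monomial_nil,
    Units.val_mul, mul_sub, sub_mul, smul_sub, mul_smul_comm, smul_mul_assoc, smul_smul, mul_assoc,
    mul_one]
  module

lemma isCartanB₂_units (h00 : Q 0 0 = q ^ 2) (h11 : Q 1 1 = q)
    (h01 : Q 0 1 * Q 1 0 = q ^ (-2 : ℤ)) : IsCartanB₂ (fun a b => (Q a b : k)) (q : k) where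
  zero_zero := by simp [h00]
  one_one := by simp [h11]
  zero_one_mul_one_zero := by
    have h : Q 0 1 * Q 1 0 * q ^ 2 = 1 := by rw [h01, zpow_neg, inv_mul_eq_one]; rfl
    simpa using congrArg Units.val h

end Bracket

end QShuffle

open QShuffle

theorem stmt17_general {k : Type*} [Field k] {q : kˣ} (hq : q ^ 2 ≠ 1) {Q : Fin 2 → Fin 2 → kˣ}
    (hQ11 : Q 0 0 = q ^ 2) (hQ22 : Q 1 1 = q) (hQo : Q 0 1 * Q 1 0 = q ^ (-2 : ℤ))
    {m2 : (FreeAlgebra k (Fin 2) ⊗[k] FreeAlgebra k (Fin 2))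
      →ₗ[k] (FreeAlgebra k (Fin 2) ⊗[k] FreeAlgebra k (Fin 2))
      →ₗ[k] (FreeAlgebra k (Fin 2) ⊗[k] FreeAlgebra k (Fin 2))}
    (hm2 : ∀ (a b c d : FreeAlgebra k (Fin 2)) (β γ : Fin 2 → ℤ),
      b ∈ piece k β → c ∈ piece k γ →
      m2 (a ⊗ₜ b) (c ⊗ₜ d) = (qb Q β γ : k) • ((a * c) ⊗ₜ[k] (b * d)))
    {Δ : FreeAlgebra k (Fin 2) →ₗ[k] FreeAlgebra k (Fin 2) ⊗[k] FreeAlgebra k (Fin 2)}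
    (hΔmul : ∀ x y, Δ (x * y) = m2 (Δ x) (Δ y)) (hΔone : Δ 1 = 1 ⊗ₜ 1)
    (hΔgen : ∀ a : Fin 2, Δ (FreeAlgebra.ι k a)
      = FreeAlgebra.ι k a ⊗ₜ 1 + 1 ⊗ₜ FreeAlgebra.ι k a)
    {B : Type*} [Ring B] [Algebra k B] {π : FreeAlgebra k (Fin 2) →ₐ[k] B}
    (hhom : ∀ x, π x = 0 → x ∈ Submodule.span k {y | π y = 0 ∧ ∃ d, y ∈ piece k d})
    (htriv : ∀ (a : k) (v : Fin 2 → k),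
      π (algebraMap k (FreeAlgebra k (Fin 2)) a + ∑ s, v s • FreeAlgebra.ι k s) = 0 →
      a = 0 ∧ v = 0)
    (hhopf : ∀ x, π x = 0 → TensorProduct.map π.toLinearMap π.toLinearMap (Δ x) = 0)
    (hGK : GKdim k B ≠ ⊤) :
    π (brk Q (gen k 0) (brk Q (gen k 0) (gen k 1))).1 = 0
    ∧ π (brk Q (gen k 1) (brk Q (gen k 1) (brk Q (gen k 1) (gen k 0)))).1 = 0 := by
  have hB₂ := isCartanB₂_units hQ11 hQ22 hQo
  have hq2 : (q : k) ^ 2 ≠ 1 := fun h => hq (Units.ext (by simpa using h))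
  have hdual : IsPreNicholsDual (fun a b => (Q a b : k)) (dualFunctions π) :=
    ⟨shuffleClosed_dualFunctions hhom htriv hm2 hΔmul hΔone hΔgen hhopf,
      delta_singleton_mem_dualFunctions hhom htriv⟩
  rw [brk_eq_x112 hQ11, brk_eq_x2221 hQ22]
  exact ⟨hdual.map_x112_eq_zero hB₂ hq2 hhom hGK, hdual.map_x2221_eq_zero hB₂ hq2 hhom hGK⟩

/-- Let `q` be of Cartan type `B_2`: `q_11 = q²`, `q_22 = q`,
`q_12 q_21 = q⁻²`, with `N = ord q > 2` finite.  Then in any pre-Nichols algebra of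
`q` with finite GK-dimension the quantum Serre relations `(ad_c x_1)² x_2 = 0` and
`(ad_c x_2)³ x_1 = 0` hold, i.e. the distinguished pre-Nichols algebra of type `B_2`
is eminent. -/
theorem stmt17 {k : Type*} [Field k] [CharZero k] [IsAlgClosed k]
    (q : kˣ) (hfin : orderOf q ≠ 0) (hN : 2 < orderOf q)
    (Q : Fin 2 → Fin 2 → kˣ)
    (hQ11 : Q 0 0 = q ^ 2) (hQ22 : Q 1 1 = q)
    (hQo : Q 0 1 * Q 1 0 = q ^ (-2 : ℤ))
    (m2 : (FreeAlgebra k (Fin 2) ⊗[k] FreeAlgebra k (Fin 2))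
      →ₗ[k] (FreeAlgebra k (Fin 2) ⊗[k] FreeAlgebra k (Fin 2))
      →ₗ[k] (FreeAlgebra k (Fin 2) ⊗[k] FreeAlgebra k (Fin 2)))
    (hm2 : ∀ (a b c d : FreeAlgebra k (Fin 2)) (β γ : Fin 2 → ℤ),
      b ∈ piece k β → c ∈ piece k γ →
      m2 (a ⊗ₜ b) (c ⊗ₜ d) = (qb Q β γ : k) • ((a * c) ⊗ₜ[k] (b * d)))
    (Δ : FreeAlgebra k (Fin 2) →ₗ[k] FreeAlgebra k (Fin 2) ⊗[k] FreeAlgebra k (Fin 2))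
    (hΔmul : ∀ x y, Δ (x * y) = m2 (Δ x) (Δ y))
    (hΔone : Δ 1 = 1 ⊗ₜ 1)
    (hΔgen : ∀ a : Fin 2, Δ (FreeAlgebra.ι k a)
      = FreeAlgebra.ι k a ⊗ₜ 1 + 1 ⊗ₜ FreeAlgebra.ι k a)
    {B : Type*} [Ring B] [Algebra k B]
    (π : FreeAlgebra k (Fin 2) →ₐ[k] B)
    (hsurj : Function.Surjective π)
    (hhom : ∀ x, π x = 0 → x ∈ Submodule.span k {y | π y = 0 ∧ ∃ d, y ∈ piece k d})
    (htriv : ∀ (a : k) (v : Fin 2 → k),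
      π (algebraMap k (FreeAlgebra k (Fin 2)) a + ∑ s, v s • FreeAlgebra.ι k s) = 0 →
      a = 0 ∧ v = 0)
    (hhopf : ∀ x, π x = 0 →
      TensorProduct.map π.toLinearMap π.toLinearMap (Δ x) = 0)
    (hGK : GKdim k B ≠ ⊤) :
    π (brk Q (gen k 0) (brk Q (gen k 0) (gen k 1))).1 = 0
    ∧ π (brk Q (gen k 1) (brk Q (gen k 1) (brk Q (gen k 1) (gen k 0)))).1 = 0 := by
  exact stmt17_general (pow_ne_one_of_lt_orderOf two_ne_zero hN) hQ11 hQ22 hQo hm2 hΔmul hΔone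
    hΔgen hhom htriv hhopf hGK

end
end

section
/- Twist equivalence: let q = (q_ij) and p = (p_ij) be braiding matrices with q_ii = p_ii and q_ij q_ji = p_ij p_ji for all i, j. Then there is an isomorphism of posets between the sets of Z^θ-graded finite GK-dimensional pre-Nichols algebras of (V, c^q) and of (W, c^p); in particular, for each Z^θ-homogeneous Hopf ideal I of T(V), one has GK-dim T(V)/I = GK-dim T(V)_σ/I where σ is the 2-cocycle σ(α_i, α_j) = p_ij q_ij^{-1} for i ≤ j and 1 otherwise. -/
open scoped TensorProduct ENNReal

noncomputable section

namespace Stmt18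

variable (k : Type*) [Field k] {θ : ℕ}

/-- The Gelfand–Kirillov dimension of a `k`-algebra `A`. -/
def GKdim (k A : Type*) [Field k] [Ring A] [Algebra k A] : ℝ≥0∞ :=
  ⨆ S : Finset A,
    Filter.limsup
      (fun n : ℕ => ENNReal.ofReal (Real.logb n
        (Module.finrank k ((Submodule.span k (insert (1 : A) (S : Set A))) ^ n : Submodule k A))))
      Filter.atTop

/-- The `ℤ^θ`-homogeneous component of degree `d` of the free (tensor) algebra. -/
def piece (θ : ℕ) (d : Fin θ → ℤ) : Submodule k (FreeAlgebra k (Fin θ)) :=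
  Submodule.span k {y | ∃ l : List (Fin θ),
    (∀ i, (l.count i : ℤ) = d i) ∧ y = (l.map (FreeAlgebra.ι k)).prod}

/-- A `ℤ^θ`-homogeneous braided Hopf ideal of `T(V)` with trivial intersection with
`k ⊕ V`, whose quotient pre-Nichols algebra has finite GK-dimension:  these are
exactly the defining ideals of the `ℤ^θ`-graded finite GK-dimensional pre-Nichols
algebras. -/
def Good (Δ : FreeAlgebra k (Fin θ) →ₗ[k] FreeAlgebra k (Fin θ) ⊗[k] FreeAlgebra k (Fin θ))
    (I : Submodule k (FreeAlgebra k (Fin θ))) : Prop :=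
  (∀ (a x : FreeAlgebra k (Fin θ)), x ∈ I → a * x ∈ I) ∧
  (∀ (a x : FreeAlgebra k (Fin θ)), x ∈ I → x * a ∈ I) ∧
  (∀ x ∈ I, x ∈ Submodule.span k {y | y ∈ I ∧ ∃ d, y ∈ piece k θ d}) ∧
  (∀ (a : k) (v : Fin θ → k),
    (algebraMap k (FreeAlgebra k (Fin θ)) a + ∑ s, v s • FreeAlgebra.ι k s) ∈ I →
    a = 0 ∧ v = 0) ∧
  (∀ x ∈ I, Δ x ∈ Submodule.span k
    {t | ∃ a b : FreeAlgebra k (Fin θ), (a ∈ I ∨ b ∈ I) ∧ t = a ⊗ₜ[k] b}) ∧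
  GKdim k (RingQuot (fun a b : FreeAlgebra k (Fin θ) => a - b ∈ I)) ≠ ⊤

/-- The bicharacter on `ℤ^θ` extending a braiding matrix `Q`. -/
def qb (Q : Fin θ → Fin θ → kˣ) (α β : Fin θ → ℤ) : kˣ :=
  ∏ a, ∏ b, Q a b ^ (α a * β b)

/-- The bimultiplicative extension of the 2-cocycle
`σ(α_i,α_j) = p_ij q_ij⁻¹` for `i ≤ j` and `1` otherwise. -/
def σb (Q P : Fin θ → Fin θ → kˣ) (α β : Fin θ → ℤ) : kˣ :=
  ∏ i, ∏ j, (if i ≤ j then P i j * (Q i j)⁻¹ else 1) ^ (α i * β j)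

end Stmt18

open Stmt18

/-!
Let `M` be the matrix of the cocycle `σ`. Rescaling each word in the generators by the product of
the `M i j` over all pairs of positions at which a letter `i` precedes a letter `j` is the
isomorphism `T(W) ≃ T(V)_σ` that fixes the generators. The conditions on the braiding matrices say
that `q_ij σ(α_i, α_j) = p_ij σ(α_j, α_i)`, which makes this rescaling compatible with the two
braided comultiplications; it therefore carries homogeneous Hopf ideals to homogeneous Hopf ideals.

A linear bijection that is multiplicative up to invertible scalars on homogeneous elements commutes
with forming powers of graded subspaces. Since every finite-dimensional subspace lies in a graded
one, such a bijection preserves the Gelfand–Kirillov dimension, and so do the maps it induces on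
quotients by homogeneous ideals.
-/

namespace Stmt18

section Growth

variable {k A B : Type*} [Field k] [Ring A] [Algebra k A] [Ring B] [Algebra k B]

/-- The polynomial growth exponent `limsup logₙ dim Vⁿ` of a subspace `V` of an algebra; the
Gelfand–Kirillov dimension is the supremum of the exponents of its finite-dimensional subspaces. -/
def growthExponent (V : Submodule k A) : ℝ≥0∞ :=
  Filter.limsup
    (fun n : ℕ => ENNReal.ofReal (Real.logb n (Module.finrank k (V ^ n : Submodule k A))))
    Filter.atTop

lemma logb_natCast_le_logb (n : ℕ) {a b : ℕ} (hab : a ≤ b) : Real.logb n a ≤ Real.logb n b := by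
  rcases a.eq_zero_or_pos with rfl | ha
  · simpa [Real.logb] using div_nonneg (Real.log_natCast_nonneg b) (Real.log_natCast_nonneg n)
  · exact div_le_div_of_nonneg_right (Real.log_le_log (mod_cast ha) (mod_cast hab))
      (Real.log_natCast_nonneg n)

lemma growthExponent_mono {V W : Submodule k A} (hW : W.FG) (hVW : V ≤ W) :
    growthExponent V ≤ growthExponent W := by
  refine Filter.limsup_le_limsup (.of_forall fun n => ?_)
  have : Module.Finite k (W ^ n : Submodule k A) := .of_fg (hW.pow n)
  exact ENNReal.ofReal_le_ofReal
    (logb_natCast_le_logb n (Submodule.finrank_mono (pow_le_pow_left' hVW n)))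

lemma growthExponent_congr {V : Submodule k A} {W : Submodule k B}
    (h : ∀ n ≠ 0, Module.finrank k (V ^ n : Submodule k A)
      = Module.finrank k (W ^ n : Submodule k B)) :
    growthExponent V = growthExponent W :=
  Filter.limsup_congr <| (Filter.eventually_ne_atTop 0).mono fun n hn => by rw [h n hn]

lemma growthExponent_le_GKdim {V : Submodule k A} (hV : V.FG) (h1 : 1 ∈ V) :
    growthExponent V ≤ GKdim k A := by
  obtain ⟨S, rfl⟩ := hV
  rw [← Submodule.span_insert_eq_span h1]
  exact le_iSup (fun S : Finset A => growthExponent (Submodule.span k (insert 1 (S : Set A)))) S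

lemma GKdim_le_iff {d : ℝ≥0∞} :
    GKdim k A ≤ d ↔ ∀ V : Submodule k A, V.FG → 1 ∈ V → growthExponent V ≤ d :=
  ⟨fun h _ hV h1 => (growthExponent_le_GKdim hV h1).trans h, fun h => iSup_le fun S =>
    h _ (Submodule.fg_span (S.finite_toSet.insert 1)) (Submodule.subset_span (.inl rfl))⟩

end Growth

section Graded

variable {ι k M N P : Type*} [CommSemiring k] [AddCommMonoid M] [Module k M]
  [AddCommMonoid N] [Module k N] [AddCommMonoid P] [Module k P]
  {ℳ : ι → Submodule k M}

/-- A submodule spanned by its homogeneous elements with respect to a family `ℳ` of homogeneous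
components. The family need not be independent. -/
def IsGraded (ℳ : ι → Submodule k M) (p : Submodule k M) : Prop :=
  p ≤ Submodule.span k {x | x ∈ p ∧ SetLike.IsHomogeneousElem ℳ x}

lemma IsGraded.span_eq {p : Submodule k M} (hp : IsGraded ℳ p) :
    Submodule.span k {x | x ∈ p ∧ SetLike.IsHomogeneousElem ℳ x} = p :=
  le_antisymm (Submodule.span_le.2 fun _ hx => hx.1) hp

lemma isGraded_span {s : Set M} (hs : ∀ x ∈ s, SetLike.IsHomogeneousElem ℳ x) :
    IsGraded ℳ (Submodule.span k s) :=
  Submodule.span_mono fun x hx => ⟨Submodule.subset_span hx, hs x hx⟩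

lemma IsGraded.map {𝒩 : ι → Submodule k N} {p : Submodule k M} (hp : IsGraded ℳ p)
    (f : M →ₗ[k] N) (hf : ∀ i, (ℳ i).map f ≤ 𝒩 i) : IsGraded 𝒩 (p.map f) := by
  rw [← hp.span_eq, Submodule.map_span]
  refine isGraded_span ?_
  rintro _ ⟨x, ⟨-, i, hx⟩, rfl⟩
  exact ⟨i, hf i ⟨x, hx, rfl⟩⟩

lemma exists_fg_isGraded_ge (htop : IsGraded ℳ ⊤) {p : Submodule k M} (hp : p.FG) :
    ∃ q : Submodule k M, q.FG ∧ IsGraded ℳ q ∧ p ≤ q := by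
  obtain ⟨s, rfl⟩ := hp
  obtain ⟨t, ht, hst⟩ := Submodule.subset_span_finite_of_subset_span (t := s)
    fun x _ => htop (Submodule.mem_top : x ∈ ⊤)
  exact ⟨_, ⟨t, rfl⟩, isGraded_span fun x hx => (ht hx).2, Submodule.span_le.2 hst⟩

lemma map₂_le_map₂_of_isGraded {𝒩 : ι → Submodule k N} {f g : M →ₗ[k] N →ₗ[k] P}
    (h : ∀ i j, ∀ x ∈ ℳ i, ∀ y ∈ 𝒩 j, ∃ c : k, f x y = c • g x y)
    {p : Submodule k M} {q : Submodule k N} (hp : IsGraded ℳ p) (hq : IsGraded 𝒩 q) :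
    Submodule.map₂ f p q ≤ Submodule.map₂ g p q := by
  conv_lhs => rw [← hp.span_eq, ← hq.span_eq, Submodule.map₂_span_span]
  rw [Submodule.span_le]
  rintro _ ⟨x, ⟨hxp, i, hx⟩, y, ⟨hyq, j, hy⟩, rfl⟩
  obtain ⟨c, hc⟩ := h i j x hx y hy
  change f x y ∈ _
  exact hc ▸ Submodule.smul_mem _ c (Submodule.apply_mem_map₂ g hxp hyq)

lemma map₂_eq_map₂_of_isGraded {𝒩 : ι → Submodule k N} {f g : M →ₗ[k] N →ₗ[k] P}
    {c : ι → ι → kˣ} (h : ∀ i j, ∀ x ∈ ℳ i, ∀ y ∈ 𝒩 j, f x y = (c i j : k) • g x y)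
    {p : Submodule k M} {q : Submodule k N} (hp : IsGraded ℳ p) (hq : IsGraded 𝒩 q) :
    Submodule.map₂ f p q = Submodule.map₂ g p q := by
  refine le_antisymm
    (map₂_le_map₂_of_isGraded (fun i j x hx y hy => ⟨_, h i j x hx y hy⟩) hp hq)
    (map₂_le_map₂_of_isGraded (fun i j x hx y hy => ⟨↑(c i j)⁻¹, ?_⟩) hp hq)
  rw [h i j x hx y hy, smul_smul, Units.inv_mul, one_smul]

lemma eq_of_eqOn_span {f g : M →ₗ[k] N →ₗ[k] P} {s : Set M} {t : Set N}
    (h : ∀ x ∈ s, ∀ y ∈ t, f x y = g x y) {x : M} {y : N} (hx : x ∈ Submodule.span k s)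
    (hy : y ∈ Submodule.span k t) : f x y = g x y :=
  LinearMap.eqOn_span (f := f.flip y) (g := g.flip y)
    (fun x hx => LinearMap.eqOn_span (h x hx) hy) hx

end Graded

section TwistedMul

variable {ι k A B : Type*} [CommSemiring k] [Semiring A] [Algebra k A] [Semiring B] [Algebra k B]
  {𝒜 : ι → Submodule k A} {ρ : A ≃ₗ[k] B} {c : ι → ι → kˣ}

lemma IsGraded.mul [Add ι] [SetLike.GradedMul 𝒜] {p q : Submodule k A} (hp : IsGraded 𝒜 p)
    (hq : IsGraded 𝒜 q) : IsGraded 𝒜 (p * q) := by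
  rw [← hp.span_eq, ← hq.span_eq, Submodule.span_mul_span]
  refine isGraded_span ?_
  rintro _ ⟨x, ⟨-, hx⟩, y, ⟨-, hy⟩, rfl⟩
  exact hx.mul hy

lemma IsGraded.pow_succ [Add ι] [SetLike.GradedMul 𝒜] {p : Submodule k A} (hp : IsGraded 𝒜 p)
    (n : ℕ) : IsGraded 𝒜 (p ^ (n + 1)) := by
  induction n with
  | zero => simpa only [zero_add, pow_one] using hp
  | succ n ih => exact (_root_.pow_succ p (n + 1)).symm ▸ ih.mul hp

instance gradedMul_map [Add ι] [SetLike.GradedMul 𝒜] (f : A →ₐ[k] B) :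
    SetLike.GradedMul fun i => (𝒜 i).map f.toLinearMap where
  mul_mem := by
    rintro i j _ _ ⟨x, hx, rfl⟩ ⟨y, hy, rfl⟩
    exact ⟨x * y, SetLike.mul_mem_graded hx hy, map_mul f x y⟩

/-- A subspace of an algebra that is a two-sided ideal. -/
structure IsTwoSidedIdeal (I : Submodule k A) : Prop where
  mul_mem_left : ∀ a x, x ∈ I → a * x ∈ I
  mul_mem_right : ∀ a x, x ∈ I → x * a ∈ I

/-- `ρ` is multiplicative on homogeneous elements up to the invertible scalars `c`: it identifies
the algebra `B` with the deformation of `A` by the cochain `c`. -/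
def IsTwistedMul (𝒜 : ι → Submodule k A) (ρ : A ≃ₗ[k] B) (c : ι → ι → kˣ) : Prop :=
  ∀ (i j : ι) (x y : A), x ∈ 𝒜 i → y ∈ 𝒜 j → ρ x * ρ y = (c i j : k) • ρ (x * y)

namespace IsTwistedMul

lemma map_mul (h : IsTwistedMul 𝒜 ρ c) {p q : Submodule k A}
    (hp : IsGraded 𝒜 p) (hq : IsGraded 𝒜 q) :
    (p * q).map ρ.toLinearMap = p.map ρ.toLinearMap * q.map ρ.toLinearMap := by
  rw [Submodule.mul_eq_map₂, Submodule.mul_eq_map₂, Submodule.map_map₂, Submodule.map₂_map_map]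
  exact (map₂_eq_map₂_of_isGraded (fun i j x hx y hy => h i j x y hx hy) hp hq).symm

lemma map_pow_succ [Add ι] [SetLike.GradedMul 𝒜] (h : IsTwistedMul 𝒜 ρ c) {p : Submodule k A}
    (hp : IsGraded 𝒜 p) (n : ℕ) :
    (p ^ (n + 1)).map ρ.toLinearMap = p.map ρ.toLinearMap ^ (n + 1) := by
  induction n with
  | zero => simp only [zero_add, pow_one]
  | succ n ih => rw [pow_succ p (n + 1), h.map_mul (hp.pow_succ n) hp, ih, ← pow_succ]

lemma isTwoSidedIdeal_map (h : IsTwistedMul 𝒜 ρ c) (htop : IsGraded 𝒜 ⊤) {I : Submodule k A}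
    (hI : IsTwoSidedIdeal I) (hgr : IsGraded 𝒜 I) : IsTwoSidedIdeal (I.map ρ.toLinearMap) where
  mul_mem_left b x hx := by
    have hle : ⊤ * I ≤ I := Submodule.mul_le.2 fun a _ x hx => hI.mul_mem_left a x hx
    refine Submodule.map_mono hle (h.map_mul htop hgr ▸ Submodule.mul_mem_mul ?_ hx)
    exact ⟨ρ.symm b, Submodule.mem_top, ρ.apply_symm_apply b⟩
  mul_mem_right b x hx := by
    have hle : I * ⊤ ≤ I := Submodule.mul_le.2 fun x hx a _ => hI.mul_mem_right a x hx
    refine Submodule.map_mono hle (h.map_mul hgr htop ▸ Submodule.mul_mem_mul hx ?_)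
    exact ⟨ρ.symm b, Submodule.mem_top, ρ.apply_symm_apply b⟩

lemma descend {A' B' : Type*} [Semiring A'] [Algebra k A'] [Semiring B'] [Algebra k B']
    (h : IsTwistedMul 𝒜 ρ c) {f : A →ₐ[k] A'} {g : B →ₐ[k] B'} {ε : A' ≃ₗ[k] B'}
    (hε : ∀ x, ε (f x) = g (ρ x)) : IsTwistedMul (fun i => (𝒜 i).map f.toLinearMap) ε c := by
  rintro i j _ _ ⟨x, hx, rfl⟩ ⟨y, hy, rfl⟩
  simp only [AlgHom.toLinearMap_apply, ← _root_.map_mul, hε, h i j x y hx hy, map_smul]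

end IsTwistedMul

end TwistedMul

section Quotient

variable {k A M M' N : Type*} [CommRing k] [Ring A] [Algebra k A]
  [AddCommGroup M] [Module k M] [AddCommGroup M'] [Module k M'] [AddCommGroup N] [Module k N]

lemma IsTwoSidedIdeal.ker_mkAlgHom {I : Submodule k A} (hI : IsTwoSidedIdeal I) :
    LinearMap.ker (RingQuot.mkAlgHom k fun a b : A => a - b ∈ I).toLinearMap = I := by
  let J : TwoSidedIdeal A := TwoSidedIdeal.mk' I I.zero_mem I.add_mem I.neg_mem
    (hI.mul_mem_left _ _) (hI.mul_mem_right _ _)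
  have mem_J (x : A) : x ∈ J ↔ x ∈ I := TwoSidedIdeal.mem_mk' _ _ _ _ _ _ x
  have mk_eq_zero (x : A) : J.ringCon.mk' x = 0 ↔ x ∈ I := by
    rw [← TwoSidedIdeal.mem_ker, TwoSidedIdeal.ker_ringCon_mk', mem_J]
  ext x
  rw [LinearMap.mem_ker, AlgHom.toLinearMap_apply]
  constructor
  · intro hx
    rw [← AlgHom.coe_toRingHom, RingQuot.mkAlgHom_coe] at hx
    rw [← mk_eq_zero, ← RingQuot.lift_mkRingHom_apply J.ringCon.mk'
      (r := fun a b : A => a - b ∈ I)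
      (fun a b hab => sub_eq_zero.1 (by rw [← map_sub, mk_eq_zero]; exact hab)), hx, map_zero]
  · intro hx
    rw [RingQuot.mkAlgHom_rel (y := 0) k (by rwa [sub_zero]), map_zero]

lemma exists_linearEquiv_of_ker_eq {f : M →ₗ[k] M'} {g : M →ₗ[k] N}
    (hf : Function.Surjective f) (hg : Function.Surjective g)
    (hfg : LinearMap.ker f = LinearMap.ker g) : ∃ ε : M' ≃ₗ[k] N, ∀ x, ε (f x) = g x :=
  ⟨(f.quotKerEquivOfSurjective hf).symm ≪≫ₗ Submodule.quotEquivOfEq _ _ hfg ≪≫ₗ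
    g.quotKerEquivOfSurjective hg, fun x => by simp⟩

end Quotient

section GKdim

variable {ι k A B : Type*} [Add ι] [Field k] [Ring A] [Algebra k A] [Ring B] [Algebra k B]
  {𝒜 : ι → Submodule k A} [SetLike.GradedMul 𝒜] {ρ : A ≃ₗ[k] B} {c : ι → ι → kˣ}

namespace IsTwistedMul

lemma growthExponent_map (h : IsTwistedMul 𝒜 ρ c) {V : Submodule k A} (hV : IsGraded 𝒜 V) :
    growthExponent (V.map ρ.toLinearMap) = growthExponent V := by
  refine growthExponent_congr fun n hn => ?_
  obtain ⟨m, rfl⟩ := Nat.exists_eq_succ_of_ne_zero hn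
  rw [Nat.succ_eq_add_one, ← h.map_pow_succ hV, LinearEquiv.finrank_map_eq ρ]

theorem GKdim_eq (h : IsTwistedMul 𝒜 ρ c) (htop : IsGraded 𝒜 ⊤) : GKdim k A = GKdim k B := by
  -- The unit of `B` need not be `ρ 1`, so each finite-dimensional subspace is enlarged to a graded
  -- one that contains both units.
  apply le_antisymm <;> rw [GKdim_le_iff] <;> intro V hV _
  · obtain ⟨W, hW, hgr, hVW⟩ :=
      exists_fg_isGraded_ge htop (hV.sup (Submodule.fg_span_singleton (ρ.symm 1)))
    obtain ⟨hVW, hunit⟩ := sup_le_iff.1 hVW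
    rw [Submodule.span_singleton_le_iff_mem] at hunit
    calc growthExponent V ≤ growthExponent W := growthExponent_mono hW hVW
      _ = growthExponent (W.map ρ.toLinearMap) := (h.growthExponent_map hgr).symm
      _ ≤ GKdim k B := growthExponent_le_GKdim (hW.map _) ⟨_, hunit, ρ.apply_symm_apply 1⟩
  · obtain ⟨W, hW, hgr, hVW⟩ := exists_fg_isGraded_ge htop
      ((hV.map ρ.symm.toLinearMap).sup (Submodule.fg_span_singleton 1))
    obtain ⟨hVW, hunit⟩ := sup_le_iff.1 hVW
    rw [Submodule.span_singleton_le_iff_mem] at hunit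
    have hVW : V ≤ W.map ρ.toLinearMap := fun x hx =>
      ⟨ρ.symm x, hVW ⟨x, hx, rfl⟩, ρ.apply_symm_apply x⟩
    calc growthExponent V ≤ growthExponent (W.map ρ.toLinearMap) :=
          growthExponent_mono (hW.map _) hVW
      _ = growthExponent W := h.growthExponent_map hgr
      _ ≤ GKdim k A := growthExponent_le_GKdim hW hunit

theorem GKdim_ringQuot_eq (h : IsTwistedMul 𝒜 ρ c) (htop : IsGraded 𝒜 ⊤) {I : Submodule k A}
    (hI : IsTwoSidedIdeal I) (hgr : IsGraded 𝒜 I) :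
    GKdim k (RingQuot fun a b : A => a - b ∈ I)
      = GKdim k (RingQuot fun a b : B => a - b ∈ I.map ρ.toLinearMap) := by
  let f := RingQuot.mkAlgHom k fun a b : A => a - b ∈ I
  let g := RingQuot.mkAlgHom k fun a b : B => a - b ∈ I.map ρ.toLinearMap
  have hf : Function.Surjective f := RingQuot.mkAlgHom_surjective k _
  have hg : Function.Surjective g := RingQuot.mkAlgHom_surjective k _
  have hker : LinearMap.ker f.toLinearMap = LinearMap.ker (g.toLinearMap ∘ₗ ρ.toLinearMap) := by
    rw [LinearMap.ker_comp, hI.ker_mkAlgHom, (h.isTwoSidedIdeal_map htop hI hgr).ker_mkAlgHom,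
      Submodule.comap_map_eq_of_injective ρ.injective]
  obtain ⟨ε, hε⟩ := exists_linearEquiv_of_ker_eq hf (hg.comp ρ.surjective) hker
  have htop' : IsGraded (fun i => (𝒜 i).map f.toLinearMap) ⊤ := by
    rw [← LinearMap.range_eq_top (f := f.toLinearMap).2 hf, LinearMap.range_eq_map]
    exact htop.map _ fun _ => le_rfl
  exact (h.descend hε).GKdim_eq htop'

end IsTwistedMul

end GKdim

section Words

variable {k : Type*} [Field k] {θ : ℕ}

/-- The `ℤ^θ`-degree of a word in the generators: the number of occurrences of each letter. -/
def wdeg (l : List (Fin θ)) : Fin θ → ℤ := fun i => l.count i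

lemma wdeg_nil : wdeg ([] : List (Fin θ)) = 0 := by
  ext i
  simp [wdeg]

lemma wdeg_append (u v : List (Fin θ)) : wdeg (u ++ v) = wdeg u + wdeg v := by
  ext i
  simp [wdeg]

lemma wdeg_cons (i : Fin θ) (l : List (Fin θ)) : wdeg (i :: l) = wdeg [i] + wdeg l :=
  wdeg_append [i] l

/-- The monomial of the free algebra attached to a word in the generators. -/
def word (k : Type*) [Field k] {θ : ℕ} (l : List (Fin θ)) : FreeAlgebra k (Fin θ) :=
  (l.map (FreeAlgebra.ι k)).prod

lemma word_nil : word k ([] : List (Fin θ)) = 1 := rfl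

lemma word_append (u v : List (Fin θ)) : word k (u ++ v) = word k u * word k v := by
  simp [word]

lemma word_singleton (i : Fin θ) : word k [i] = FreeAlgebra.ι k i := by simp [word]

lemma word_cons (i : Fin θ) (l : List (Fin θ)) :
    word k (i :: l) = FreeAlgebra.ι k i * word k l := by simp [word]

/-- The basis of the free algebra consisting of the words in the generators. -/
def wordBasis (k : Type*) [Field k] (θ : ℕ) :
    Module.Basis (List (Fin θ)) k (FreeAlgebra k (Fin θ)) :=
  (FreeAlgebra.basisFreeMonoid k (Fin θ)).reindex FreeMonoid.toList

lemma wordBasis_apply (l : List (Fin θ)) : wordBasis k θ l = word k l := by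
  simp [wordBasis, FreeAlgebra.basisFreeMonoid, FreeAlgebra.equivMonoidAlgebraFreeMonoid, word,
    FreeMonoid.lift_apply]

lemma piece_eq_span (d : Fin θ → ℤ) :
    piece k θ d = Submodule.span k (word k '' {l | wdeg l = d}) := by
  simp only [piece, Set.image, Set.mem_ofPred_eq, wdeg, word, funext_iff, eq_comm]

lemma word_mem_piece (l : List (Fin θ)) : word k l ∈ piece k θ (wdeg l) :=
  piece_eq_span (k := k) (wdeg l) ▸ Submodule.subset_span ⟨l, rfl, rfl⟩

instance gradedMul_piece : SetLike.GradedMul (piece k θ) where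
  mul_mem := by
    intro d e x y hx hy
    refine Submodule.mul_le.1 (?_ : piece k θ d * piece k θ e ≤ _) x hx y hy
    rw [piece_eq_span, piece_eq_span, Submodule.span_mul_span, Submodule.span_le]
    rintro _ ⟨_, ⟨u, rfl, rfl⟩, _, ⟨v, rfl, rfl⟩, rfl⟩
    change word k u * word k v ∈ piece k θ (wdeg u + wdeg v)
    exact word_append (k := k) u v ▸ wdeg_append u v ▸ word_mem_piece (u ++ v)

lemma isGraded_piece_top : IsGraded (piece k θ) ⊤ := by
  rw [← (wordBasis k θ).span_eq]
  refine isGraded_span ?_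
  rintro _ ⟨l, rfl⟩
  exact ⟨wdeg l, wordBasis_apply (k := k) l ▸ word_mem_piece l⟩

lemma eq_of_eqOn_words {N : Type*} [AddCommMonoid N] [Module k N]
    {f g : FreeAlgebra k (Fin θ) →ₗ[k] FreeAlgebra k (Fin θ) →ₗ[k] N} {d e : Fin θ → ℤ}
    (h : ∀ u v, wdeg u = d → wdeg v = e → f (word k u) (word k v) = g (word k u) (word k v))
    {x y : FreeAlgebra k (Fin θ)} (hx : x ∈ piece k θ d) (hy : y ∈ piece k θ e) :
    f x y = g x y := by
  rw [piece_eq_span] at hx hy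
  refine eq_of_eqOn_span ?_ hx hy
  rintro _ ⟨u, hu, rfl⟩ _ ⟨v, hv, rfl⟩
  exact h u v hu hv

end Words

section Bicharacter

variable {k : Type*} [Field k] {θ : ℕ}

lemma qb_add_left (M : Fin θ → Fin θ → kˣ) (α β γ : Fin θ → ℤ) :
    qb k M (α + β) γ = qb k M α γ * qb k M β γ := by
  simp only [qb, ← Finset.prod_mul_distrib, Pi.add_apply, add_mul, zpow_add]

lemma qb_add_right (M : Fin θ → Fin θ → kˣ) (α β γ : Fin θ → ℤ) :
    qb k M α (β + γ) = qb k M α β * qb k M α γ := by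
  simp only [qb, ← Finset.prod_mul_distrib, Pi.add_apply, mul_add, zpow_add]

lemma qb_zero_left (M : Fin θ → Fin θ → kˣ) (β : Fin θ → ℤ) : qb k M 0 β = 1 := by
  simp [qb]

lemma qb_zero_right (M : Fin θ → Fin θ → kˣ) (α : Fin θ → ℤ) : qb k M α 0 = 1 := by
  simp [qb]

lemma qb_inv (M : Fin θ → Fin θ → kˣ) (α β : Fin θ → ℤ) : qb k M⁻¹ α β = (qb k M α β)⁻¹ := by
  simp [qb]

lemma qb_swap (M : Fin θ → Fin θ → kˣ) (α β : Fin θ → ℤ) :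
    qb k M β α = qb k (fun i j => M j i) α β := by
  rw [qb, qb, Finset.prod_comm]
  simp only [mul_comm]

/-- The condition on the matrix `M` of a bicharacter for twisting by it to turn the braiding
matrix `Q` into `P`. -/
def Intertwines (M Q P : Fin θ → Fin θ → kˣ) : Prop :=
  ∀ i j, Q i j * M i j = P i j * M j i

lemma Intertwines.inv {M Q P : Fin θ → Fin θ → kˣ} (h : Intertwines M Q P) :
    Intertwines M⁻¹ P Q := fun i j => by
  rw [Pi.inv_apply, Pi.inv_apply, Pi.inv_apply, Pi.inv_apply, mul_inv_eq_iff_eq_mul,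
    mul_right_comm, eq_mul_inv_iff_mul_eq, h i j]

lemma Intertwines.qb_mul {M Q P : Fin θ → Fin θ → kˣ} (h : Intertwines M Q P)
    (α β : Fin θ → ℤ) : qb k Q α β * qb k M α β = qb k P α β * qb k M β α := by
  rw [qb_swap M α β]
  simp only [qb, ← Finset.prod_mul_distrib, ← mul_zpow, h _ _]

/-- The matrix `σ(α_i, α_j)` of the cocycle `σ`. -/
def cocycleMatrix (Q P : Fin θ → Fin θ → kˣ) (i j : Fin θ) : kˣ :=
  if i ≤ j then P i j * (Q i j)⁻¹ else 1

lemma intertwines_cocycleMatrix {Q P : Fin θ → Fin θ → kˣ} (hdiag : ∀ i, Q i i = P i i)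
    (hsym : ∀ i j, Q i j * Q j i = P i j * P j i) : Intertwines (cocycleMatrix Q P) Q P := by
  intro i j
  rcases lt_trichotomy i j with h | rfl | h
  · simp [cocycleMatrix, h.le, h.not_ge]
  · rw [hdiag]
  · simp only [cocycleMatrix, h.le, h.not_ge, if_true, if_false, mul_one]
    rw [← mul_assoc, ← hsym, mul_inv_cancel_right]

end Bicharacter

section Twist

variable {k : Type*} [Field k] {θ : ℕ} (M : Fin θ → Fin θ → kˣ)

/-- The scalar by which the twist with bicharacter `M` rescales a word: the product of the
`M i j` over all pairs of positions at which a letter `i` precedes a letter `j`. -/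
def wordScalar : List (Fin θ) → kˣ
  | [] => 1
  | i :: l => qb k M (wdeg [i]) (wdeg l) * wordScalar l

lemma wordScalar_append (u v : List (Fin θ)) :
    wordScalar M (u ++ v) = wordScalar M u * wordScalar M v * qb k M (wdeg u) (wdeg v) := by
  induction u with
  | nil => simp only [List.nil_append, wordScalar, wdeg_nil, qb_zero_left, one_mul, mul_one]
  | cons i u ih =>
    rw [List.cons_append, wordScalar, wordScalar, ih, wdeg_append, qb_add_right, wdeg_cons i u,
      qb_add_left]
    ac_rfl

lemma wordScalar_singleton (i : Fin θ) : wordScalar M [i] = 1 := by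
  rw [wordScalar, wordScalar, wdeg_nil, qb_zero_right, one_mul]

lemma wordScalar_inv (l : List (Fin θ)) : wordScalar M⁻¹ l = (wordScalar M l)⁻¹ := by
  induction l with
  | nil => rw [wordScalar, wordScalar, inv_one]
  | cons i l ih => rw [wordScalar, wordScalar, ih, qb_inv, mul_inv]

lemma Intertwines.wordScalar_append_append {M Q P : Fin θ → Fin θ → kˣ}
    (hM : Intertwines M Q P) (u v u' v' : List (Fin θ)) :
    qb k M (wdeg u + wdeg v) (wdeg u' + wdeg v') *
        (wordScalar M (u' ++ v') * wordScalar M (u ++ v) * qb k Q (wdeg v) (wdeg u'))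
      = qb k P (wdeg v) (wdeg u') * wordScalar M ((u ++ u') ++ (v ++ v')) := by
  simp only [wordScalar_append, wdeg_append, qb_add_left, qb_add_right]
  calc _ = (qb k Q (wdeg v) (wdeg u') * qb k M (wdeg v) (wdeg u')) *
        (wordScalar M u * wordScalar M v * wordScalar M u' * wordScalar M v' *
          (qb k M (wdeg u) (wdeg v) * qb k M (wdeg u) (wdeg u') * qb k M (wdeg u) (wdeg v') *
            qb k M (wdeg v) (wdeg v') * qb k M (wdeg u') (wdeg v'))) := by ac_rfl
    _ = _ := by rw [hM.qb_mul]; ac_rfl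

/-- The twist `T(W) ≃ T(V)_σ` sending generators to generators, where `M` is the matrix of `σ`
and both algebras are carried by the free algebra. -/
def twist : FreeAlgebra k (Fin θ) ≃ₗ[k] FreeAlgebra k (Fin θ) :=
  (wordBasis k θ).equiv ((wordBasis k θ).unitsSMul (wordScalar M)) (Equiv.refl _)

lemma twist_word (l : List (Fin θ)) : twist M (word k l) = (wordScalar M l : k) • word k l := by
  rw [← wordBasis_apply, twist, Module.Basis.equiv_apply, Equiv.refl_apply,
    Module.Basis.unitsSMul_apply, Units.smul_def]

lemma twist_one : twist M 1 = 1 := by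
  simpa only [word_nil, wordScalar, Units.val_one, one_smul] using twist_word M []

lemma twist_ι (i : Fin θ) : twist M (FreeAlgebra.ι k i) = FreeAlgebra.ι k i := by
  simpa only [word_singleton, wordScalar_singleton, Units.val_one, one_smul]
    using twist_word M [i]

lemma twist_inv_twist (x : FreeAlgebra k (Fin θ)) : twist M⁻¹ (twist M x) = x := by
  suffices (twist M⁻¹).toLinearMap ∘ₗ (twist M).toLinearMap = LinearMap.id from
    LinearMap.congr_fun this x
  refine (wordBasis k θ).ext fun l => ?_
  simp [wordBasis_apply, twist_word, wordScalar_inv, smul_smul]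

lemma map_twist_inv_map_twist (I : Submodule k (FreeAlgebra k (Fin θ))) :
    (I.map (twist M).toLinearMap).map (twist M⁻¹).toLinearMap = I := by
  rw [← Submodule.map_comp]
  convert Submodule.map_id I
  exact LinearMap.ext (twist_inv_twist M)

lemma map_twist_piece_le (d : Fin θ → ℤ) :
    (piece k θ d).map (twist M).toLinearMap ≤ piece k θ d := by
  conv_lhs => rw [piece_eq_span]
  rw [Submodule.map_span, Submodule.span_le]
  rintro _ ⟨_, ⟨l, rfl, rfl⟩, rfl⟩
  rw [LinearEquiv.coe_coe, twist_word]
  exact Submodule.smul_mem _ _ (word_mem_piece l)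

lemma isTwistedMul_twist :
    IsTwistedMul (piece k θ) (twist M) (fun α β => (qb k M α β)⁻¹) := by
  intro α β x y hx hy
  refine eq_of_eqOn_words
    (f := (LinearMap.mul k _).compl₁₂ (twist M).toLinearMap (twist M).toLinearMap)
    (g := (((qb k M α β)⁻¹ : kˣ) : k) • (LinearMap.mul k _).compr₂ (twist M).toLinearMap)
    (fun u v hu hv => ?_) hx hy
  change twist M (word k u) * twist M (word k v)
    = (((qb k M α β)⁻¹ : kˣ) : k) • twist M (word k u * word k v)
  rw [← word_append]
  simp only [twist_word, smul_mul_smul_comm, ← word_append, smul_smul]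
  rw [wordScalar_append, hu, hv, mul_comm (wordScalar M u * _), Units.val_mul,
    Units.inv_mul_cancel_left, Units.val_mul]

/-- The twist on the tensor square: `u ⊗ v` is rescaled like the word `uv`. -/
def twistTensor : FreeAlgebra k (Fin θ) ⊗[k] FreeAlgebra k (Fin θ)
    →ₗ[k] FreeAlgebra k (Fin θ) ⊗[k] FreeAlgebra k (Fin θ) :=
  ((wordBasis k θ).tensorProduct (wordBasis k θ)).constr k fun p =>
    (wordScalar M (p.1 ++ p.2) : k) • (word k p.1 ⊗ₜ[k] word k p.2)

lemma twistTensor_word (u v : List (Fin θ)) :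
    twistTensor M (word k u ⊗ₜ[k] word k v)
      = (wordScalar M (u ++ v) : k) • (word k u ⊗ₜ[k] word k v) := by
  rw [← wordBasis_apply u, ← wordBasis_apply v, ← Module.Basis.tensorProduct_apply, twistTensor,
    Module.Basis.constr_basis, Module.Basis.tensorProduct_apply, wordBasis_apply, wordBasis_apply]

lemma twistTensor_tmul {d e : Fin θ → ℤ} {x y : FreeAlgebra k (Fin θ)}
    (hx : x ∈ piece k θ d) (hy : y ∈ piece k θ e) :
    twistTensor M (x ⊗ₜ[k] y) = (qb k M d e : k) • (twist M x ⊗ₜ[k] twist M y) := by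
  refine eq_of_eqOn_words (f := (TensorProduct.mk k _ _).compr₂ (twistTensor M))
    (g := (qb k M d e : k) •
      (TensorProduct.mk k _ _).compl₁₂ (twist M).toLinearMap (twist M).toLinearMap)
    (fun u v hu hv => ?_) hx hy
  change twistTensor M (word k u ⊗ₜ word k v)
    = (qb k M d e : k) • (twist M (word k u) ⊗ₜ[k] twist M (word k v))
  rw [twistTensor_word, twist_word, twist_word, TensorProduct.smul_tmul_smul, smul_smul,
    wordScalar_append, hu, hv, mul_comm, Units.val_mul, Units.val_mul]

lemma twistTensor_one : twistTensor M (1 ⊗ₜ[k] 1) = 1 ⊗ₜ[k] 1 := by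
  simpa only [word_nil, wordScalar, List.append_nil, Units.val_one, one_smul]
    using twistTensor_word M [] []

end Twist

section Comul

variable {k : Type*} [Field k] {θ : ℕ}

/-- `m` is the multiplication of the braided tensor square of the tensor algebra with braiding
matrix `Q`. -/
def IsBraidedMul (Q : Fin θ → Fin θ → kˣ)
    (m : (FreeAlgebra k (Fin θ) ⊗[k] FreeAlgebra k (Fin θ))
      →ₗ[k] (FreeAlgebra k (Fin θ) ⊗[k] FreeAlgebra k (Fin θ))
      →ₗ[k] (FreeAlgebra k (Fin θ) ⊗[k] FreeAlgebra k (Fin θ))) : Prop :=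
  ∀ (a b c d : FreeAlgebra k (Fin θ)) (β γ : Fin θ → ℤ), b ∈ piece k θ β → c ∈ piece k θ γ →
    m (a ⊗ₜ b) (c ⊗ₜ d) = (qb k Q β γ : k) • ((a * c) ⊗ₜ[k] (b * d))

/-- `Δ` is the comultiplication of the tensor algebra with braiding matrix `Q`, for which the
generators are primitive; `m` is the multiplication of the braided tensor square. -/
structure IsBraidedComul (Q : Fin θ → Fin θ → kˣ)
    (m : (FreeAlgebra k (Fin θ) ⊗[k] FreeAlgebra k (Fin θ))
      →ₗ[k] (FreeAlgebra k (Fin θ) ⊗[k] FreeAlgebra k (Fin θ))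
      →ₗ[k] (FreeAlgebra k (Fin θ) ⊗[k] FreeAlgebra k (Fin θ)))
    (Δ : FreeAlgebra k (Fin θ) →ₗ[k] FreeAlgebra k (Fin θ) ⊗[k] FreeAlgebra k (Fin θ)) :
    Prop where
  isBraidedMul : IsBraidedMul Q m
  map_mul : ∀ x y, Δ (x * y) = m (Δ x) (Δ y)
  map_one : Δ 1 = 1 ⊗ₜ 1
  map_ι : ∀ i : Fin θ, Δ (FreeAlgebra.ι k i) = FreeAlgebra.ι k i ⊗ₜ 1 + 1 ⊗ₜ FreeAlgebra.ι k i

/-- The component of total degree `d` of the tensor square of the free algebra. -/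
def tensorPiece (k : Type*) [Field k] {θ : ℕ} (d : Fin θ → ℤ) :
    Submodule k (FreeAlgebra k (Fin θ) ⊗[k] FreeAlgebra k (Fin θ)) :=
  Submodule.span k {t | ∃ u v, wdeg u + wdeg v = d ∧ word k u ⊗ₜ[k] word k v = t}

lemma tmul_word_mem_tensorPiece (u v : List (Fin θ)) :
    word k u ⊗ₜ[k] word k v ∈ tensorPiece k (wdeg u + wdeg v) :=
  Submodule.subset_span ⟨u, v, rfl, rfl⟩

variable {M Q P : Fin θ → Fin θ → kˣ}
  {m mQ mP : (FreeAlgebra k (Fin θ) ⊗[k] FreeAlgebra k (Fin θ))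
      →ₗ[k] (FreeAlgebra k (Fin θ) ⊗[k] FreeAlgebra k (Fin θ))
      →ₗ[k] (FreeAlgebra k (Fin θ) ⊗[k] FreeAlgebra k (Fin θ))}
  {Δ ΔQ ΔP : FreeAlgebra k (Fin θ) →ₗ[k] FreeAlgebra k (Fin θ) ⊗[k] FreeAlgebra k (Fin θ)}

namespace IsBraidedMul

lemma mul_word (hm : IsBraidedMul Q m) (u v u' v' : List (Fin θ)) :
    m (word k u ⊗ₜ word k v) (word k u' ⊗ₜ word k v')
      = (qb k Q (wdeg v) (wdeg u') : k) • (word k (u ++ u') ⊗ₜ[k] word k (v ++ v')) := by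
  rw [hm _ _ _ _ _ _ (word_mem_piece v) (word_mem_piece u'), word_append, word_append]

lemma mul_mem_tensorPiece (hm : IsBraidedMul Q m) {d e : Fin θ → ℤ}
    {s t : FreeAlgebra k (Fin θ) ⊗[k] FreeAlgebra k (Fin θ)} (hs : s ∈ tensorPiece k d)
    (ht : t ∈ tensorPiece k e) : m s t ∈ tensorPiece k (d + e) := by
  refine Submodule.map₂_le.1 (?_ : Submodule.map₂ m (tensorPiece k d) (tensorPiece k e) ≤ _)
    s hs t ht
  rw [tensorPiece, tensorPiece, Submodule.map₂_span_span, Submodule.span_le]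
  rintro _ ⟨_, ⟨u, v, rfl, rfl⟩, _, ⟨u', v', rfl, rfl⟩, rfl⟩
  change m _ _ ∈ _
  rw [hm.mul_word, add_add_add_comm, ← wdeg_append, ← wdeg_append]
  exact Submodule.smul_mem _ _ (tmul_word_mem_tensorPiece _ _)

lemma twistTensor_mul_word (hQ : IsBraidedMul Q mQ) (hP : IsBraidedMul P mP)
    (hM : Intertwines M Q P) (u v u' v' : List (Fin θ)) :
    twistTensor M (mP (word k u ⊗ₜ word k v) (word k u' ⊗ₜ word k v'))
      = (qb k M (wdeg u + wdeg v) (wdeg u' + wdeg v') : k) •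
        mQ (twistTensor M (word k u ⊗ₜ word k v)) (twistTensor M (word k u' ⊗ₜ word k v')) := by
  rw [hP.mul_word, map_smul, twistTensor_word, twistTensor_word, twistTensor_word, map_smul,
    LinearMap.map_smul₂, hQ.mul_word]
  simp only [smul_smul, ← Units.val_mul, ← hM.wordScalar_append_append, mul_assoc]

lemma twistTensor_mul (hQ : IsBraidedMul Q mQ) (hP : IsBraidedMul P mP) (hM : Intertwines M Q P)
    {d e : Fin θ → ℤ} {s t : FreeAlgebra k (Fin θ) ⊗[k] FreeAlgebra k (Fin θ)}
    (hs : s ∈ tensorPiece k d) (ht : t ∈ tensorPiece k e) :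
    twistTensor M (mP s t) = (qb k M d e : k) • mQ (twistTensor M s) (twistTensor M t) := by
  suffices mP.compr₂ (twistTensor M) s t
      = ((qb k M d e : k) • mQ.compl₁₂ (twistTensor M) (twistTensor M)) s t from this
  refine eq_of_eqOn_span ?_ hs ht
  rintro _ ⟨u, v, rfl, rfl⟩ _ ⟨u', v', rfl, rfl⟩
  exact twistTensor_mul_word hQ hP hM u v u' v'

end IsBraidedMul

namespace IsBraidedComul

lemma ι_mem_tensorPiece (hΔ : IsBraidedComul Q m Δ) (i : Fin θ) :
    Δ (FreeAlgebra.ι k i) ∈ tensorPiece k (wdeg [i]) := by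
  rw [hΔ.map_ι]
  refine add_mem ?_ ?_
  · simpa only [word_singleton, word_nil, wdeg_nil, add_zero]
      using tmul_word_mem_tensorPiece (k := k) [i] []
  · simpa only [word_singleton, word_nil, wdeg_nil, zero_add]
      using tmul_word_mem_tensorPiece (k := k) [] [i]

lemma word_mem_tensorPiece (hΔ : IsBraidedComul Q m Δ) (l : List (Fin θ)) :
    Δ (word k l) ∈ tensorPiece k (wdeg l) := by
  induction l with
  | nil =>
    simpa only [word_nil, hΔ.map_one, wdeg_nil, add_zero]
      using tmul_word_mem_tensorPiece (k := k) ([] : List (Fin θ)) []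
  | cons i l ih =>
    rw [word_cons, hΔ.map_mul, wdeg_cons]
    exact hΔ.isBraidedMul.mul_mem_tensorPiece (hΔ.ι_mem_tensorPiece i) ih

lemma twistTensor_comul_ι (hQ : IsBraidedComul Q mQ ΔQ) (hP : IsBraidedComul P mP ΔP)
    (i : Fin θ) :
    twistTensor M (ΔP (FreeAlgebra.ι k i)) = ΔQ (FreeAlgebra.ι k i) := by
  have h := twistTensor_word M [i] []
  have h' := twistTensor_word M [] [i]
  simp only [List.append_nil, List.nil_append, word_singleton, word_nil, wordScalar_singleton,
    Units.val_one, one_smul] at h h'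
  rw [hP.map_ι, hQ.map_ι, map_add, h, h']

lemma comul_twist (hQ : IsBraidedComul Q mQ ΔQ) (hP : IsBraidedComul P mP ΔP)
    (hM : Intertwines M Q P) (x : FreeAlgebra k (Fin θ)) :
    ΔQ (twist M x) = twistTensor M (ΔP x) := by
  suffices h : ΔQ ∘ₗ (twist M).toLinearMap = twistTensor M ∘ₗ ΔP from LinearMap.congr_fun h x
  refine (wordBasis k θ).ext fun l => ?_
  rw [wordBasis_apply]
  change ΔQ (twist M (word k l)) = twistTensor M (ΔP (word k l))
  induction l with
  | nil => rw [word_nil, twist_one, hQ.map_one, hP.map_one, twistTensor_one]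
  | cons i l ih =>
    rw [word_cons, hP.map_mul, hQ.isBraidedMul.twistTensor_mul hP.isBraidedMul hM
      (hP.ι_mem_tensorPiece i) (hP.word_mem_tensorPiece l), hQ.twistTensor_comul_ι hP, ← ih,
      ← hQ.map_mul, twist_word, ← word_cons, twist_word, wordScalar, mul_smul_comm, ← word_cons,
      map_smul, map_smul, smul_smul, Units.val_mul]

end IsBraidedComul

/-- The subspace `I ⊗ T + T ⊗ I` of the tensor square, into which a coideal `I` of `T` is mapped
by the comultiplication. -/
def coidealSpan (I : Submodule k (FreeAlgebra k (Fin θ))) :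
    Submodule k (FreeAlgebra k (Fin θ) ⊗[k] FreeAlgebra k (Fin θ)) :=
  Submodule.span k {t | ∃ a b : FreeAlgebra k (Fin θ), (a ∈ I ∨ b ∈ I) ∧ t = a ⊗ₜ[k] b}

lemma coidealSpan_eq (I : Submodule k (FreeAlgebra k (Fin θ))) :
    coidealSpan I = Submodule.map₂ (TensorProduct.mk k _ _) I ⊤
      ⊔ Submodule.map₂ (TensorProduct.mk k _ _) ⊤ I := by
  refine le_antisymm (Submodule.span_le.2 ?_) (sup_le ?_ ?_)
  · rintro _ ⟨a, b, ha | hb, rfl⟩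
    · exact Submodule.mem_sup_left (Submodule.apply_mem_map₂ _ ha Submodule.mem_top)
    · exact Submodule.mem_sup_right (Submodule.apply_mem_map₂ _ Submodule.mem_top hb)
  · exact Submodule.map₂_le.2 fun a ha b _ => Submodule.subset_span ⟨a, b, .inl ha, rfl⟩
  · exact Submodule.map₂_le.2 fun a _ b hb => Submodule.subset_span ⟨a, b, .inr hb, rfl⟩

lemma map_twistTensor_map₂ (M : Fin θ → Fin θ → kˣ) {I J : Submodule k (FreeAlgebra k (Fin θ))}
    (hI : IsGraded (piece k θ) I) (hJ : IsGraded (piece k θ) J) :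
    (Submodule.map₂ (TensorProduct.mk k _ _) I J).map (twistTensor M)
      = Submodule.map₂ (TensorProduct.mk k _ _) (I.map (twist M).toLinearMap)
          (J.map (twist M).toLinearMap) := by
  rw [Submodule.map_map₂, Submodule.map₂_map_map]
  exact map₂_eq_map₂_of_isGraded (fun _ _ _ hx _ hy => twistTensor_tmul M hx hy) hI hJ

lemma map_twistTensor_coidealSpan (M : Fin θ → Fin θ → kˣ)
    {I : Submodule k (FreeAlgebra k (Fin θ))} (hI : IsGraded (piece k θ) I) :
    (coidealSpan I).map (twistTensor M) = coidealSpan (I.map (twist M).toLinearMap) := by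
  have htop : (⊤ : Submodule k (FreeAlgebra k (Fin θ))).map (twist M).toLinearMap = ⊤ := by
    rw [Submodule.map_top, LinearEquiv.range]
  rw [coidealSpan_eq, coidealSpan_eq, Submodule.map_sup,
    map_twistTensor_map₂ M hI isGraded_piece_top, map_twistTensor_map₂ M isGraded_piece_top hI,
    htop]

end Comul

section PreNichols

variable {k : Type*} [Field k] {θ : ℕ} {M Q P : Fin θ → Fin θ → kˣ}
  {mQ mP : (FreeAlgebra k (Fin θ) ⊗[k] FreeAlgebra k (Fin θ))
      →ₗ[k] (FreeAlgebra k (Fin θ) ⊗[k] FreeAlgebra k (Fin θ))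
      →ₗ[k] (FreeAlgebra k (Fin θ) ⊗[k] FreeAlgebra k (Fin θ))}
  {ΔQ ΔP : FreeAlgebra k (Fin θ) →ₗ[k] FreeAlgebra k (Fin θ) ⊗[k] FreeAlgebra k (Fin θ)}
  {I : Submodule k (FreeAlgebra k (Fin θ))}

lemma twist_algebraMap_add_sum (M : Fin θ → Fin θ → kˣ) (a : k) (v : Fin θ → k) :
    twist M (algebraMap k (FreeAlgebra k (Fin θ)) a + ∑ s, v s • FreeAlgebra.ι k s)
      = algebraMap k (FreeAlgebra k (Fin θ)) a + ∑ s, v s • FreeAlgebra.ι k s := by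
  simp only [map_add, map_sum, map_smul, Algebra.algebraMap_eq_smul_one, twist_one, twist_ι]

theorem Good.map_twist (hI : Good k ΔP I) (hQ : IsBraidedComul Q mQ ΔQ)
    (hP : IsBraidedComul P mP ΔP) (hM : Intertwines M Q P) :
    Good k ΔQ (I.map (twist M).toLinearMap) := by
  obtain ⟨hl, hr, hgr, hprim, hcoideal, hfin⟩ := hI
  have htw := isTwistedMul_twist M
  have hmap := htw.isTwoSidedIdeal_map isGraded_piece_top ⟨hl, hr⟩ hgr
  refine ⟨hmap.mul_mem_left, hmap.mul_mem_right,
    IsGraded.map hgr (twist M).toLinearMap (map_twist_piece_le M), fun a v h => ?_, ?_, ?_⟩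
  · obtain ⟨y, hy, hyx⟩ := h
    rw [← twist_algebraMap_add_sum M] at hyx
    exact hprim a v ((twist M).injective hyx ▸ hy)
  · rintro _ ⟨y, hy, rfl⟩
    change ΔQ (twist M y) ∈ coidealSpan (I.map (twist M).toLinearMap)
    rw [hQ.comul_twist hP hM, ← map_twistTensor_coidealSpan M hgr]
    exact ⟨ΔP y, hcoideal y hy, rfl⟩
  · rwa [← htw.GKdim_ringQuot_eq isGraded_piece_top ⟨hl, hr⟩ hgr]

theorem good_map_twist_iff (hQ : IsBraidedComul Q mQ ΔQ) (hP : IsBraidedComul P mP ΔP)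
    (hM : Intertwines M Q P) : Good k ΔQ (I.map (twist M).toLinearMap) ↔ Good k ΔP I :=
  ⟨fun h => map_twist_inv_map_twist M I ▸ h.map_twist hP hQ hM.inv, fun h => h.map_twist hQ hP hM⟩

/-- The isomorphism of posets of defining ideals induced by the twist. -/
def goodOrderIso (hQ : IsBraidedComul Q mQ ΔQ) (hP : IsBraidedComul P mP ΔP)
    (hM : Intertwines M Q P) : {I // Good k ΔP I} ≃o {I // Good k ΔQ I} where
  toEquiv := (Submodule.orderIsoMapComap (twist M)).toEquiv.subtypeEquiv
    fun _ => (good_map_twist_iff hQ hP hM).symm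
  map_rel_iff' := (Submodule.orderIsoMapComap (twist M)).map_rel_iff

end PreNichols

end Stmt18

theorem stmt18_general {k : Type*} [Field k] {θ : ℕ} {Q P : Fin θ → Fin θ → kˣ}
    (hdiag : ∀ i, Q i i = P i i) (hsym : ∀ i j, Q i j * Q j i = P i j * P j i)
    {mQ mP : (FreeAlgebra k (Fin θ) ⊗[k] FreeAlgebra k (Fin θ))
      →ₗ[k] (FreeAlgebra k (Fin θ) ⊗[k] FreeAlgebra k (Fin θ))
      →ₗ[k] (FreeAlgebra k (Fin θ) ⊗[k] FreeAlgebra k (Fin θ))}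
    {ΔQ ΔP : FreeAlgebra k (Fin θ) →ₗ[k] FreeAlgebra k (Fin θ) ⊗[k] FreeAlgebra k (Fin θ)}
    (hQ : IsBraidedComul Q mQ ΔQ) (hP : IsBraidedComul P mP ΔP)
    {A : Type*} [Ring A] [Algebra k A] {φ : FreeAlgebra k (Fin θ) ≃ₗ[k] A}
    {c : (Fin θ → ℤ) → (Fin θ → ℤ) → kˣ} (hφ : IsTwistedMul (piece k θ) φ c) :
    Nonempty ({I // Good k ΔQ I} ≃o {I // Good k ΔP I}) ∧
      ∀ I : Submodule k (FreeAlgebra k (Fin θ)), IsTwoSidedIdeal I → IsGraded (piece k θ) I →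
        GKdim k (RingQuot fun a b : FreeAlgebra k (Fin θ) => a - b ∈ I)
          = GKdim k (RingQuot fun a b : A => a - b ∈ I.map φ.toLinearMap) :=
  ⟨⟨(goodOrderIso hQ hP (intertwines_cocycleMatrix hdiag hsym)).symm⟩,
    fun _ hI hgr => hφ.GKdim_ringQuot_eq isGraded_piece_top hI hgr⟩

/-- **twist equivalence.**  Let `q = (q_ij)` and `p = (p_ij)` be
braiding matrices with `q_ii = p_ii` and `q_ij q_ji = p_ij p_ji` for all `i, j`.
Then the posets of `ℤ^θ`-graded finite GK-dimensional pre-Nichols algebras of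
`(V, c^q)` and `(W, c^p)` (equivalently, of their defining ideals) are isomorphic;
in particular, for each `ℤ^θ`-homogeneous Hopf ideal `I` of `T(V)`,
`GKdim T(V)/I = GKdim T(V)_σ/I`, where `T(V)_σ` is the cocycle deformation of `T(V)`
by `σ(α_i,α_j) = p_ij q_ij⁻¹` (for `i ≤ j`, `= 1` otherwise). -/
theorem stmt18 {k : Type*} [Field k] {θ : ℕ}
    (Q P : Fin θ → Fin θ → kˣ)
    (hdiag : ∀ i, Q i i = P i i)
    (hsym : ∀ i j, Q i j * Q j i = P i j * P j i)
    -- the braided comultiplication of `T(V)` for the braiding matrix `Q`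
    (m2Q : (FreeAlgebra k (Fin θ) ⊗[k] FreeAlgebra k (Fin θ))
      →ₗ[k] (FreeAlgebra k (Fin θ) ⊗[k] FreeAlgebra k (Fin θ))
      →ₗ[k] (FreeAlgebra k (Fin θ) ⊗[k] FreeAlgebra k (Fin θ)))
    (hm2Q : ∀ (a b c d : FreeAlgebra k (Fin θ)) (β γ : Fin θ → ℤ),
      b ∈ piece k θ β → c ∈ piece k θ γ →
      m2Q (a ⊗ₜ b) (c ⊗ₜ d) = (qb k Q β γ : k) • ((a * c) ⊗ₜ[k] (b * d)))
    (ΔQ : FreeAlgebra k (Fin θ) →ₗ[k] FreeAlgebra k (Fin θ) ⊗[k] FreeAlgebra k (Fin θ))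
    (hΔQmul : ∀ x y, ΔQ (x * y) = m2Q (ΔQ x) (ΔQ y))
    (hΔQone : ΔQ 1 = 1 ⊗ₜ 1)
    (hΔQgen : ∀ a : Fin θ, ΔQ (FreeAlgebra.ι k a)
      = FreeAlgebra.ι k a ⊗ₜ 1 + 1 ⊗ₜ FreeAlgebra.ι k a)
    -- the braided comultiplication of `T(W)` for the braiding matrix `P`
    (m2P : (FreeAlgebra k (Fin θ) ⊗[k] FreeAlgebra k (Fin θ))
      →ₗ[k] (FreeAlgebra k (Fin θ) ⊗[k] FreeAlgebra k (Fin θ))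
      →ₗ[k] (FreeAlgebra k (Fin θ) ⊗[k] FreeAlgebra k (Fin θ)))
    (hm2P : ∀ (a b c d : FreeAlgebra k (Fin θ)) (β γ : Fin θ → ℤ),
      b ∈ piece k θ β → c ∈ piece k θ γ →
      m2P (a ⊗ₜ b) (c ⊗ₜ d) = (qb k P β γ : k) • ((a * c) ⊗ₜ[k] (b * d)))
    (ΔP : FreeAlgebra k (Fin θ) →ₗ[k] FreeAlgebra k (Fin θ) ⊗[k] FreeAlgebra k (Fin θ))
    (hΔPmul : ∀ x y, ΔP (x * y) = m2P (ΔP x) (ΔP y))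
    (hΔPone : ΔP 1 = 1 ⊗ₜ 1)
    (hΔPgen : ∀ a : Fin θ, ΔP (FreeAlgebra.ι k a)
      = FreeAlgebra.ι k a ⊗ₜ 1 + 1 ⊗ₜ FreeAlgebra.ι k a)
    -- the cocycle deformation `T(V)_σ`
    {Fσ : Type*} [Ring Fσ] [Algebra k Fσ]
    (φ : FreeAlgebra k (Fin θ) ≃ₗ[k] Fσ)
    (hφ : ∀ (α β : Fin θ → ℤ) (x y : FreeAlgebra k (Fin θ)),
      x ∈ piece k θ α → y ∈ piece k θ β →
      φ x * φ y = (σb k Q P α β : k) • φ (x * y)) :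
    (∃ e : {I : Submodule k (FreeAlgebra k (Fin θ)) // Good k ΔQ I}
        ≃ {I : Submodule k (FreeAlgebra k (Fin θ)) // Good k ΔP I},
      ∀ I J, I.1 ≤ J.1 ↔ (e I).1 ≤ (e J).1)
    ∧ ∀ I : Submodule k (FreeAlgebra k (Fin θ)),
        (∀ (a x : FreeAlgebra k (Fin θ)), x ∈ I → a * x ∈ I) →
        (∀ (a x : FreeAlgebra k (Fin θ)), x ∈ I → x * a ∈ I) →
        (∀ x ∈ I, x ∈ Submodule.span k {y | y ∈ I ∧ ∃ d, y ∈ piece k θ d}) →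
        (∀ x ∈ I, ΔQ x ∈ Submodule.span k
          {t | ∃ a b : FreeAlgebra k (Fin θ), (a ∈ I ∨ b ∈ I) ∧ t = a ⊗ₜ[k] b}) →
        GKdim k (RingQuot (fun a b : FreeAlgebra k (Fin θ) => a - b ∈ I))
          = GKdim k (RingQuot (fun a b : Fσ => a - b ∈ Submodule.map φ.toLinearMap I)) := by
  obtain ⟨⟨e⟩, hGK⟩ := stmt18_general hdiag hsym ⟨hm2Q, hΔQmul, hΔQone, hΔQgen⟩
    ⟨hm2P, hΔPmul, hΔPone, hΔPgen⟩ hφ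
  exact ⟨⟨e.toEquiv, fun _ _ => e.map_rel_iff.symm⟩, fun I hl hr hgr _ => hGK I ⟨hl, hr⟩ hgr⟩

end
end
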